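/- arXiv:1312.5626 — 2 statements merged into one kernel-verified Lean document; each statement's English description precedes it below -/
import Mathlib

section
/- Let Q be a graph class with Q̂ nonempty, and let s = sup_{W∈Q̂} Ent(W). Then for every ε > 0 there exists N such that for all n ≥ N, |Q_n| ≤ 2^{(s+ε)·C(n,2)}, where |Q_n| is the number of labelled graphs on {1,…,n} in Q and C(n,2) = n(n-1)/2. -/
open MeasureTheory Set Filter

noncomputable section

/-- A graphon: a symmetric measurable function `ℝ → ℝ → ℝ` with values in `[0,1]`
(only its values on `[0,1]²` matter). -/
def IsGraphon (W : ℝ → ℝ → ℝ) : Prop :=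
  (∀ x y, W x y = W y x) ∧ Measurable (Function.uncurry W) ∧
    ∀ x y, W x y ∈ Set.Icc (0 : ℝ) 1

/-- The cut norm `‖U‖_□`, the supremum over measurable `S, T ⊆ [0,1]` of
`|∫_{S×T} U|`. -/
def cutNorm (U : ℝ → ℝ → ℝ) : ℝ :=
  sSup { r : ℝ | ∃ S T : Set ℝ, MeasurableSet S ∧ MeasurableSet T ∧
    S ⊆ Set.Icc 0 1 ∧ T ⊆ Set.Icc 0 1 ∧
    r = |∫ p in S ×ˢ T, U p.1 p.2| }

/-- `d_□(W₁, W₂) = ‖W₁ - W₂‖_□`. -/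
def dCut (W₁ W₂ : ℝ → ℝ → ℝ) : ℝ := cutNorm (fun x y => W₁ x y - W₂ x y)

/-- A Lebesgue-measure-preserving map `[0,1] → [0,1]`. -/
def IsMPSelf (σ : ℝ → ℝ) : Prop :=
  MeasureTheory.MeasurePreserving σ
      (MeasureTheory.volume.restrict (Set.Icc (0:ℝ) 1))
      (MeasureTheory.volume.restrict (Set.Icc (0:ℝ) 1)) ∧
    Set.MapsTo σ (Set.Icc (0:ℝ) 1) (Set.Icc (0:ℝ) 1)

/-- The cut distance `δ_□(W₁, W₂)`. -/
def deltaCut (W₁ W₂ : ℝ → ℝ → ℝ) : ℝ :=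
  sInf { r : ℝ | ∃ σ₁ σ₂ : ℝ → ℝ, IsMPSelf σ₁ ∧ IsMPSelf σ₂ ∧
    r = cutNorm (fun x y => W₁ (σ₁ x) (σ₁ y) - W₂ (σ₂ x) (σ₂ y)) }

/-- The binary entropy function `h` (base-2 logarithm; `logb 2 0 = 0` by convention,
so `h 0 = h 1 = 0`). -/
def binEnt (x : ℝ) : ℝ := -x * Real.logb 2 x - (1 - x) * Real.logb 2 (1 - x)

/-- `h̃ x = h (min x (1/2))`. -/
def htilde (x : ℝ) : ℝ := binEnt (min x (1/2))

/-- The entropy `Ent(W) = ∫₀¹∫₀¹ h(W(x,y)) dx dy` of a graphon. -/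
def graphonEnt (W : ℝ → ℝ → ℝ) : ℝ :=
  ∫ x in Set.Icc (0:ℝ) 1, ∫ y in Set.Icc (0:ℝ) 1, binEnt (W x y)

open Classical in
/-- The graphon `W_G` of a simple graph `G` on `{1, …, n}` (vertices as `Fin n`,
vertex `i : Fin n` representing `i+1`): `W_G x y = 1` iff `⌈nx⌉⌈ny⌉ ∈ E(G)`. -/
def graphonOfGraph {n : ℕ} (G : SimpleGraph (Fin n)) : ℝ → ℝ → ℝ := fun x y =>
  if ∃ i j : Fin n, G.Adj i j ∧ ⌈(n : ℝ) * x⌉ = ((i : ℕ) : ℤ) + 1 ∧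
      ⌈(n : ℝ) * y⌉ = ((j : ℕ) : ℤ) + 1
  then 1 else 0

/-- A labelled graph class: a set of graphs on `{1,…,n}` for each `n`. -/
abbrev GraphClass := ∀ n : ℕ, Set (SimpleGraph (Fin n))

/-- A graph class is closed under relabelling by permutations. -/
def IsGraphClass (Q : GraphClass) : Prop :=
  ∀ (n : ℕ) (π : Equiv.Perm (Fin n)) (G : SimpleGraph (Fin n)),
    G ∈ Q n → G.comap ⇑π ∈ Q n

/-- A hereditary graph class: a graph class closed under taking induced subgraphs
(relabelled by the order-preserving bijection). -/
def IsHereditary (Q : GraphClass) : Prop :=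
  IsGraphClass Q ∧
    ∀ (m n : ℕ) (f : Fin m → Fin n), StrictMono f →
      ∀ G ∈ Q n, G.comap f ∈ Q m

/-- `Q̂`: the set of graphons which are limits (in cut distance) of sequences of graphs in
the class `Q` whose orders tend to infinity. -/
def limitSet (Q : GraphClass) : Set (ℝ → ℝ → ℝ) :=
  { W | IsGraphon W ∧
    ∃ (nk : ℕ → ℕ) (Gk : ∀ k, SimpleGraph (Fin (nk k))),
      (∀ k, Gk k ∈ Q (nk k)) ∧ Filter.Tendsto nk Filter.atTop Filter.atTop ∧
      Filter.Tendsto (fun k => deltaCut (graphonOfGraph (Gk k)) W) Filter.atTop (nhds 0) }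

/-- `C(n,2) = n(n-1)/2` as a real number. -/
def choose2 (n : ℕ) : ℝ := (n : ℝ) * ((n : ℝ) - 1) / 2

open Classical in
/-- The step function `E[W | P]` obtained by averaging `W` over the products of the
parts of the partition `P` of `[0,1]`. -/
def condExpPart {k : ℕ} (P : Fin k → Set ℝ) (W : ℝ → ℝ → ℝ) : ℝ → ℝ → ℝ := fun x y =>
  ∑ i : Fin k, ∑ j : Fin k,
    if x ∈ P i ∧ y ∈ P j then ⨍ p in (P i) ×ˢ (P j), W p.1 p.2 else 0

/-- `W̄_n`: the step function of `W` for the partition of `[0,1]` into `n` consecutive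
intervals of length `1/n`. -/
def barStep (n : ℕ) (W : ℝ → ℝ → ℝ) : ℝ → ℝ → ℝ :=
  condExpPart (fun i : Fin n => Set.Ioc (((i : ℕ) : ℝ)/n) ((((i : ℕ) : ℝ) + 1)/n)) W

/-- `N̂_□(n, δ; W)`: the number of graphs `G` on `{1,…,n}` with `d_□(W_G, W) ≤ δ`. -/
def NhatCut (n : ℕ) (δ : ℝ) (W : ℝ → ℝ → ℝ) : ℕ :=
  Nat.card {G : SimpleGraph (Fin n) // dCut (graphonOfGraph G) W ≤ δ}

/-- `N_□(n, δ; W)`: the number of graphs `G` on `{1,…,n}` with `δ_□(W_G, W) ≤ δ`. -/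
def NCut (n : ℕ) (δ : ℝ) (W : ℝ → ℝ → ℝ) : ℕ :=
  Nat.card {G : SimpleGraph (Fin n) // deltaCut (graphonOfGraph G) W ≤ δ}

open Classical in
/-- The induced density `p(F; W)` of a graph `F` on `{1,…,k}` in a graphon `W`. -/
def inducedDensity {k : ℕ} (F : SimpleGraph (Fin k)) (W : ℝ → ℝ → ℝ) : ℝ :=
  ∫ x : Fin k → ℝ in Set.univ.pi (fun _ : Fin k => Set.Icc (0:ℝ) 1),
    ∏ i : Fin k, ∏ j : Fin k,
      if i < j then (if F.Adj i j then W (x i) (x j) else 1 - W (x i) (x j)) else 1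

open Classical in
/-- The randomness support graphon `1_{rand(W)}` of `W`. -/
def randIndicator (W : ℝ → ℝ → ℝ) : ℝ → ℝ → ℝ := fun x y =>
  if 0 < W x y ∧ W x y < 1 then 1 else 0

/-- A kernel `U` is `K_r`-free if `∏_{i<j} U(x_i, x_j) = 0` for a.e. `x ∈ [0,1]^r`. -/
def KFree (r : ℕ) (U : ℝ → ℝ → ℝ) : Prop :=
  ∀ᵐ x ∂(MeasureTheory.volume.restrict (Set.univ.pi fun _ : Fin r => Set.Icc (0:ℝ) 1)),
    (∏ i : Fin r, ∏ j : Fin r, if i < j then U (x i) (x j) else 1) = 0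

open Classical in
/-- The graphon `W^{(r,s)}`: equal to `1/2` off the diagonal blocks, `1` on the first `s`
diagonal blocks `I_i × I_i`, and `0` on the remaining diagonal blocks. -/
def Wrs (r s : ℕ) : ℝ → ℝ → ℝ := fun x y =>
  if ∃ i j : Fin r, i ≠ j ∧ x ∈ Set.Ioc (((i:ℕ):ℝ)/r) ((((i:ℕ):ℝ)+1)/r) ∧
      y ∈ Set.Ioc (((j:ℕ):ℝ)/r) ((((j:ℕ):ℝ)+1)/r)
  then 1/2
  else if ∃ i : Fin r, (i:ℕ) < s ∧ x ∈ Set.Ioc (((i:ℕ):ℝ)/r) ((((i:ℕ):ℝ)+1)/r) ∧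
      y ∈ Set.Ioc (((i:ℕ):ℝ)/r) ((((i:ℕ):ℝ)+1)/r)
  then 1 else 0

/-- `E_r = ⋃_{i ≠ j} I_i × I_j` where `I_i`, `i = 1, …, r`, are the consecutive
intervals of length `1/r` in `[0,1]`. -/
def Er (r : ℕ) : Set (ℝ × ℝ) :=
  ⋃ (i : Fin r) (j : Fin r) (_ : i ≠ j),
    (Set.Ioc (((i:ℕ):ℝ)/r) ((((i:ℕ):ℝ)+1)/r)) ×ˢ (Set.Ioc (((j:ℕ):ℝ)/r) ((((j:ℕ):ℝ)+1)/r))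

/-- `R_r`: the set of graphons equal to `1/2` on `E_r` and `{0,1}`-valued elsewhere
on `[0,1]²`. -/
def Rset (r : ℕ) : Set (ℝ → ℝ → ℝ) :=
  { W | IsGraphon W ∧ (∀ p ∈ Er r, W p.1 p.2 = 1/2) ∧
      ∀ p ∈ ((Set.Icc (0:ℝ) 1) ×ˢ (Set.Icc (0:ℝ) 1)) \ Er r,
        W p.1 p.2 = 0 ∨ W p.1 p.2 = 1 }

/-- A graphon is random-free if it is `{0,1}`-valued a.e. on `[0,1]²`. -/
def IsRandomFree (W : ℝ → ℝ → ℝ) : Prop :=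
  ∀ᵐ p ∂(MeasureTheory.volume.restrict ((Set.Icc (0:ℝ) 1) ×ˢ (Set.Icc (0:ℝ) 1))),
    W (Prod.fst p) (Prod.snd p) = 0 ∨ W (Prod.fst p) (Prod.snd p) = 1


namespace GE

/-- average of `f` over the class with code `k` -/
def cavg {n : ℕ} (c : Fin n → ℕ) (f : Fin n → ℝ) (k : ℕ) : ℝ :=
  (∑ v ∈ Finset.univ.filter (fun v => c v = k), f v) /
    ((Finset.univ.filter (fun v => c v = k)).card : ℝ)

def avgN {n : ℕ} (c : Fin n → ℕ) (A : Fin n → Fin n → ℝ) (k l : ℕ) : ℝ :=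
  cavg c (fun v => cavg c (A v) l) k

lemma cavg_mem {n : ℕ} (c : Fin n → ℕ) (f : Fin n → ℝ) (hf : ∀ v, f v ∈ Set.Icc (0:ℝ) 1) (k : ℕ) :
    cavg c f k ∈ Set.Icc (0:ℝ) 1 := by
  unfold cavg
  constructor
  · exact div_nonneg (Finset.sum_nonneg fun v _ => (hf v).1) (Nat.cast_nonneg _)
  · apply div_le_one_of_le₀ _ (Nat.cast_nonneg _)
    calc _ ≤ ∑ v ∈ Finset.univ.filter (fun v => c v = k), (1:ℝ) :=
          Finset.sum_le_sum fun v _ => (hf v).2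
      _ = _ := by simp

lemma avgN_mem {n : ℕ} (c : Fin n → ℕ) (A : Fin n → Fin n → ℝ)
    (hA : ∀ v w, A v w ∈ Set.Icc (0:ℝ) 1) (k l : ℕ) :
    avgN c A k l ∈ Set.Icc (0:ℝ) 1 :=
  cavg_mem c _ (fun v => cavg_mem c _ (hA v) l) k

lemma avgN_symm {n : ℕ} (c : Fin n → ℕ) (A : Fin n → Fin n → ℝ)
    (hA : ∀ v w, A v w = A w v) (k l : ℕ) : avgN c A k l = avgN c A l k := by
  unfold avgN cavg
  rw [← Finset.sum_div, ← Finset.sum_div, Finset.sum_comm, div_div, div_div, mul_comm]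
  congr 1
  exact Finset.sum_congr rfl fun v _ => Finset.sum_congr rfl fun w _ => hA _ _

lemma sum_cavg {n : ℕ} (c : Fin n → ℕ) (f : Fin n → ℝ) (φ : ℕ → ℝ) :
    ∑ v, cavg c f (c v) * φ (c v) = ∑ v, f v * φ (c v) := by
  have h1 : ∀ (F : Fin n → ℝ), ∑ v, F v = ∑ k ∈ Finset.univ.image c,
      ∑ v ∈ Finset.univ.filter (fun v => c v = k), F v := fun F =>
    (Finset.sum_fiberwise_of_maps_to (fun v _ => Finset.mem_image_of_mem c (Finset.mem_univ v)) F).symm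
  rw [h1, h1]
  refine Finset.sum_congr rfl fun k hk => ?_
  have e1 : ∑ v ∈ Finset.univ.filter (fun v => c v = k), cavg c f (c v) * φ (c v)
      = ∑ v ∈ Finset.univ.filter (fun v => c v = k), cavg c f k * φ k :=
    Finset.sum_congr rfl fun v hv => by rw [(Finset.mem_filter.mp hv).2]
  have e2 : ∑ v ∈ Finset.univ.filter (fun v => c v = k), f v * φ (c v)
      = ∑ v ∈ Finset.univ.filter (fun v => c v = k), f v * φ k :=
    Finset.sum_congr rfl fun v hv => by rw [(Finset.mem_filter.mp hv).2]
  rw [e1, e2, Finset.sum_const, ← Finset.sum_mul, nsmul_eq_mul, ← mul_assoc]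
  congr 1
  unfold cavg
  obtain ⟨v, _, hv⟩ := Finset.mem_image.mp hk
  have : ((Finset.univ.filter (fun v => c v = k)).card : ℝ) ≠ 0 := by
    have : 0 < (Finset.univ.filter (fun v => c v = k)).card :=
      Finset.card_pos.mpr ⟨v, by simp [hv]⟩
    positivity
  field_simp

lemma sum_avgN {n : ℕ} (c : Fin n → ℕ) (A : Fin n → Fin n → ℝ) (F : ℕ → ℕ → ℝ) :
    ∑ v, ∑ w, avgN c A (c v) (c w) * F (c v) (c w) = ∑ v, ∑ w, A v w * F (c v) (c w) := by
  rw [Finset.sum_comm]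
  have : ∀ w, ∑ v, avgN c A (c v) (c w) * F (c v) (c w)
      = ∑ v, cavg c (A v) (c w) * F (c v) (c w) := fun w =>
    sum_cavg c (fun v => cavg c (A v) (c w)) (fun k => F k (c w))
  simp_rw [this]
  rw [Finset.sum_comm]
  exact Finset.sum_congr rfl fun v _ => sum_cavg c (A v) (fun k => F (c v) k)

def energy {n : ℕ} (c : Fin n → ℕ) (A : Fin n → Fin n → ℝ) : ℝ :=
  ∑ v, ∑ w, avgN c A (c v) (c w) ^ 2

lemma energy_nonneg {n : ℕ} (c : Fin n → ℕ) (A : Fin n → Fin n → ℝ) : 0 ≤ energy c A :=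
  Finset.sum_nonneg fun _ _ => Finset.sum_nonneg fun _ _ => sq_nonneg _

lemma energy_le {n : ℕ} (c : Fin n → ℕ) (A : Fin n → Fin n → ℝ)
    (hA : ∀ v w, A v w ∈ Set.Icc (0:ℝ) 1) : energy c A ≤ (n:ℝ)^2 := by
  calc energy c A ≤ ∑ v : Fin n, ∑ w : Fin n, (1:ℝ) :=
        Finset.sum_le_sum fun v _ => Finset.sum_le_sum fun w _ => by
          have := avgN_mem c A hA (c v) (c w)
          exact pow_le_one₀ this.1 this.2
    _ = _ := by simp; ring

def dcut {n : ℕ} (c : Fin n → ℕ) (A : Fin n → Fin n → ℝ) (S T : Finset (Fin n)) : ℝ :=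
  ∑ v ∈ S, ∑ w ∈ T, (A v w - avgN c A (c v) (c w))

lemma energy_step {n : ℕ} (c c' : Fin n → ℕ) (r : ℕ → ℕ) (A : Fin n → Fin n → ℝ)
    (hc : ∀ v, c v = r (c' v)) (S T : Finset (Fin n)) (s t : ℕ → ℝ)
    (hS : ∀ v, (if v ∈ S then (1:ℝ) else 0) = s (c' v))
    (hT : ∀ v, (if v ∈ T then (1:ℝ) else 0) = t (c' v)) :
    (dcut c A S T)^2 ≤ (n:ℝ)^2 * (energy c' A - energy c A) := by
  set E : Fin n → Fin n → ℝ := fun v w => avgN c A (c v) (c w) with hE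
  set E' : Fin n → Fin n → ℝ := fun v w => avgN c' A (c' v) (c' w) with hE'
  have o1 : ∑ v, ∑ w, E v w * E v w = ∑ v, ∑ w, A v w * E v w :=
    sum_avgN c A (fun k l => avgN c A k l)
  have o2 : ∑ v, ∑ w, E' v w * E v w = ∑ v, ∑ w, A v w * E v w := by
    have := sum_avgN c' A (fun k l => avgN c A (r k) (r l))
    simpa only [hE, hE', hc] using this
  have o3 : ∑ v, ∑ w, E' v w * (s (c' v) * t (c' w)) = ∑ v, ∑ w, A v w * (s (c' v) * t (c' w)) :=
    sum_avgN c' A (fun k l => s k * t l)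
  have en : ∑ v, ∑ w, (E' v w - E v w)^2 = energy c' A - energy c A := by
    have : ∀ v w, (E' v w - E v w)^2 = E' v w ^ 2 - 2 * (E' v w * E v w) + E v w * E v w :=
      fun v w => by ring
    simp_rw [this, Finset.sum_add_distrib, Finset.sum_sub_distrib, ← Finset.mul_sum]
    rw [o2, ← o1]
    have : ∑ v, ∑ w, E v w * E v w = energy c A := by
      unfold energy; simp_rw [pow_two, hE]
    have h2 : ∑ v, ∑ w, E' v w ^ 2 = energy c' A := rfl
    rw [this, h2]; ring
  have d1 : dcut c A S T = ∑ v, ∑ w, (E' v w - E v w) * (s (c' v) * t (c' w)) := by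
    have : dcut c A S T = ∑ v, ∑ w, (A v w - E v w) * (s (c' v) * t (c' w)) := by
      unfold dcut
      simp_rw [← hS, ← hT]
      rw [← Finset.sum_filter_add_sum_filter_not Finset.univ (fun v => v ∈ S)]
      rw [Finset.filter_mem_eq_inter, Finset.univ_inter]
      rw [Finset.sum_eq_zero (s := Finset.univ.filter (fun v => v ∉ S))]
      · rw [add_zero]
        refine Finset.sum_congr rfl fun v hv => ?_
        simp [hv, hE, Finset.sum_ite_mem]
      · intro v hv
        simp [(Finset.mem_filter.mp hv).2]
    rw [this]
    simp_rw [sub_mul, Finset.sum_sub_distrib]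
    rw [o3]
  rw [d1, ← en]
  simp_rw [← Finset.sum_product', Finset.univ_product_univ]
  refine (Finset.sum_mul_sq_le_sq_mul_sq _ _ _).trans ?_
  rw [mul_comm]
  refine mul_le_mul_of_nonneg_right ?_ (Finset.sum_nonneg fun _ _ => sq_nonneg _)
  calc _ ≤ ∑ p : Fin n × Fin n, (1:ℝ) := Finset.sum_le_sum fun p _ => by
        rw [← hS, ← hT]; split_ifs <;> norm_num
    _ = _ := by simp; ring

lemma exists_max_dcut {n : ℕ} (c : Fin n → ℕ) (A : Fin n → Fin n → ℝ) :
    ∃ P : Finset (Fin n) × Finset (Fin n), ∀ S T, |dcut c A S T| ≤ |dcut c A P.1 P.2| := by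
  obtain ⟨P, hP⟩ := Finite.exists_max
    (fun P : Finset (Fin n) × Finset (Fin n) => |dcut c A P.1 P.2|)
  exact ⟨P, fun S T => hP (S, T)⟩

open Classical in
def codeSeq {n : ℕ} (A : Fin n → Fin n → ℝ) : ℕ → (Fin n → ℕ)
  | 0 => fun _ => 0
  | i + 1 => fun v => 4 * codeSeq A i v +
      (2 * (if v ∈ (exists_max_dcut (codeSeq A i) A).choose.1 then 1 else 0) +
        (if v ∈ (exists_max_dcut (codeSeq A i) A).choose.2 then 1 else 0))

lemma codeSeq_div {n : ℕ} (A : Fin n → Fin n → ℝ) (i : ℕ) (v : Fin n) :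
    codeSeq A i v = codeSeq A (i+1) v / 4 := by
  rw [codeSeq]; beta_reduce; split_ifs <;> omega

lemma codeSeq_lt {n : ℕ} (A : Fin n → Fin n → ℝ) (i : ℕ) (v : Fin n) :
    codeSeq A i v < 4 ^ i := by
  induction i with
  | zero => simp [codeSeq]
  | succ i ih => have := codeSeq_div A i v; rw [pow_succ]; omega

lemma codeSeq_div_pow {n : ℕ} (A : Fin n → Fin n → ℝ) (i j : ℕ) (v : Fin n) :
    codeSeq A i v = codeSeq A (i+j) v / 4^j := by
  induction j with
  | zero => simp
  | succ j ih => rw [ih, codeSeq_div A (i+j), Nat.div_div_eq_div_mul, pow_succ, mul_comm]; rfl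

lemma codeSeq_energy {n : ℕ} (A : Fin n → Fin n → ℝ) (i : ℕ) (S T : Finset (Fin n)) :
    (dcut (codeSeq A i) A S T)^2 ≤
      (n:ℝ)^2 * (energy (codeSeq A (i+1)) A - energy (codeSeq A i) A) := by
  have hm := (exists_max_dcut (codeSeq A i) A).choose_spec
  set P := (exists_max_dcut (codeSeq A i) A).choose with hP
  refine (sq_le_sq.mpr (hm S T)).trans ?_
  refine energy_step _ _ (fun k => k / 4) A (codeSeq_div A i) P.1 P.2
    (fun k => if k % 4 / 2 = 1 then 1 else 0) (fun k => if k % 2 = 1 then 1 else 0) ?_ ?_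
  · intro v
    rw [codeSeq, ← hP]
    by_cases h1 : v ∈ P.1 <;> by_cases h2 : v ∈ P.2 <;> simp [h1, h2]
  · intro v
    rw [codeSeq, ← hP]
    by_cases h1 : v ∈ P.1 <;> by_cases h2 : v ∈ P.2 <;> simp [h1, h2] <;> omega

lemma exists_level {n : ℕ} (A : Fin n → Fin n → ℝ) (hA : ∀ v w, A v w ∈ Set.Icc (0:ℝ) 1)
    (l : ℕ) (hl : 1 ≤ l) :
    ∃ i < l^2, ∀ S T, |dcut (codeSeq A i) A S T| ≤ (n:ℝ)^2 / l := by
  by_contra! h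
  have hl' : (0:ℝ) < l := by exact_mod_cast hl
  have h1 : ∀ i ∈ Finset.range (l^2), (n:ℝ)^4 / (l:ℝ)^2 <
      (n:ℝ)^2 * energy (codeSeq A (i+1)) A - (n:ℝ)^2 * energy (codeSeq A i) A := by
    intro i hi
    obtain ⟨S, T, hST⟩ := h i (Finset.mem_range.mp hi)
    rw [← mul_sub]
    refine lt_of_lt_of_le ?_ (codeSeq_energy A i S T)
    rw [← sq_abs (dcut _ _ _ _)]
    calc _ = ((n:ℝ)^2 / l)^2 := by ring
      _ < _ := pow_lt_pow_left₀ hST (by positivity) (by norm_num)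
  have h2 := Finset.sum_lt_sum_of_nonempty (Finset.nonempty_range_iff.mpr (by positivity)) h1
  rw [Finset.sum_range_sub (fun i => (n:ℝ)^2 * energy (codeSeq A i) A)] at h2
  simp only [Finset.sum_const, Finset.card_range, nsmul_eq_mul, Nat.cast_pow] at h2
  rw [mul_div_cancel₀ _ (by positivity)] at h2
  have h3 := energy_le (codeSeq A (l^2)) A hA
  have h4 := energy_nonneg (codeSeq A 0) A
  nlinarith [sq_nonneg (n:ℝ)]

lemma cavg_perm {n : ℕ} (c : Fin n → ℕ) (f : Fin n → ℝ) (π : Equiv.Perm (Fin n)) (k : ℕ) :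
    cavg (c ∘ π) (f ∘ π) k = cavg c f k := by
  unfold cavg
  simp_rw [Finset.card_filter, Finset.sum_filter]
  congr 1
  · exact Equiv.sum_comp π (fun v => if c v = k then f v else 0)
  · push_cast
    exact Equiv.sum_comp π (fun v => if c v = k then (1:ℝ) else 0)

lemma avgN_perm {n : ℕ} (c : Fin n → ℕ) (A : Fin n → Fin n → ℝ) (π : Equiv.Perm (Fin n)) (k l : ℕ) :
    avgN (c ∘ π) (fun v w => A (π v) (π w)) k l = avgN c A k l := by
  unfold avgN
  rw [← cavg_perm c _ π]
  congr 1
  funext v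
  exact cavg_perm c (A (π v)) π l

lemma dcut_perm {n : ℕ} (c : Fin n → ℕ) (A : Fin n → Fin n → ℝ) (π : Equiv.Perm (Fin n))
    (S T : Finset (Fin n)) :
    dcut (c ∘ π) (fun v w => A (π v) (π w)) S T
      = dcut c A (S.map π.toEmbedding) (T.map π.toEmbedding) := by
  unfold dcut
  simp [Finset.sum_map, avgN_perm]

/-- Simultaneous weak regularity with interval parts. -/
lemma reg_disc {n : ℕ} (A : Fin n → Fin n → ℝ) (hA : ∀ v w, A v w ∈ Set.Icc (0:ℝ) 1) (m : ℕ) :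
    ∃ π : Equiv.Perm (Fin n), ∀ l, 1 ≤ l → l ≤ m → ∃ c : Fin n → ℕ, Monotone c ∧
      (∀ v, c v < 4 ^ (l^2)) ∧
      ∀ S T, |dcut c (fun v w => A (π v) (π w)) S T| ≤ (n:ℝ)^2 / l := by
  refine ⟨Tuple.sort (codeSeq A (m^2)), fun l hl hlm => ?_⟩
  obtain ⟨i, hi, h⟩ := exists_level A hA l hl
  have hlm2 : l^2 ≤ m^2 := Nat.pow_le_pow_left hlm 2
  refine ⟨codeSeq A i ∘ Tuple.sort (codeSeq A (m^2)), ?_, ?_, ?_⟩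
  · intro v w hvw
    have := Tuple.monotone_sort (codeSeq A (m^2)) hvw
    simp only [Function.comp] at this ⊢
    rw [codeSeq_div_pow A i (m^2 - i), codeSeq_div_pow A i (m^2 - i),
      Nat.add_sub_cancel' (by omega)]
    exact Nat.div_le_div_right this
  · intro v
    exact (codeSeq_lt A i _).trans_le (Nat.pow_le_pow_right (by norm_num) hi.le)
  · intro S T
    rw [dcut_perm]; exact h _ _

lemma lin_ext {ι : Type*} [Fintype ι] (a : ι → ℝ) (C : ℝ) (h : ∀ S : Finset ι, |∑ v ∈ S, a v| ≤ C)
    (f : ι → ℝ) (hf : ∀ v, f v ∈ Set.Icc (0:ℝ) 1) : |∑ v, f v * a v| ≤ C := by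
  classical
  rw [abs_le]
  constructor
  · have := (abs_le.mp (h (Finset.univ.filter (fun v => a v ≤ 0)))).1
    refine this.trans ?_
    rw [Finset.sum_filter]
    refine Finset.sum_le_sum fun v _ => ?_
    have := hf v
    split_ifs <;> nlinarith [this.1, this.2]
  · have := (abs_le.mp (h (Finset.univ.filter (fun v => 0 ≤ a v)))).2
    refine le_trans ?_ this
    rw [Finset.sum_filter]
    refine Finset.sum_le_sum fun v _ => ?_
    have := hf v
    split_ifs <;> nlinarith [this.1, this.2]

lemma bilin_ext {n : ℕ} (D : Fin n → Fin n → ℝ) (C : ℝ)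
    (h : ∀ S T : Finset (Fin n), |∑ v ∈ S, ∑ w ∈ T, D v w| ≤ C)
    (f g : Fin n → ℝ) (hf : ∀ v, f v ∈ Set.Icc (0:ℝ) 1) (hg : ∀ v, g v ∈ Set.Icc (0:ℝ) 1) :
    |∑ v, ∑ w, f v * g w * D v w| ≤ C := by
  have h1 : ∀ S : Finset (Fin n), |∑ v ∈ S, ∑ w, g w * D v w| ≤ C := by
    intro S
    have := lin_ext (fun w => ∑ v ∈ S, D v w) C (fun T => by rw [Finset.sum_comm]; exact h S T) g hg
    simp_rw [Finset.mul_sum] at this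
    rwa [Finset.sum_comm] at this
  have := lin_ext (fun v => ∑ w, g w * D v w) C h1 f hf
  simpa [Finset.mul_sum, mul_assoc] using this

end GE

namespace GE

def CE (a p : ℝ) : ℝ := -a * Real.logb 2 p - (1 - a) * Real.logb 2 (1 - p)

lemma CE_self (p : ℝ) : CE p p = binEnt p := rfl

lemma logb_mem {R : ℕ} {p : ℝ} (h1 : 1 / ((R:ℝ)+1) ≤ p) (h2 : p ≤ 1) :
    -Real.logb 2 (R+1) ≤ Real.logb 2 p ∧ Real.logb 2 p ≤ 0 := by
  have hR : (0:ℝ) < (R:ℝ)+1 := by positivity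
  have hp : 0 < p := lt_of_lt_of_le (by positivity) h1
  constructor
  · rw [← Real.logb_inv]
    apply Real.logb_le_logb_of_le (by norm_num) (by positivity)
    rwa [← one_div]
  · exact Real.logb_nonpos (by norm_num) hp.le h2

lemma CE_nonneg {a p : ℝ} (ha : a ∈ Set.Icc (0:ℝ) 1) (hp : p ∈ Set.Ioo (0:ℝ) 1) : 0 ≤ CE a p := by
  unfold CE
  have h1 : Real.logb 2 p ≤ 0 := Real.logb_nonpos (by norm_num) hp.1.le hp.2.le
  have h2 : Real.logb 2 (1-p) ≤ 0 :=
    Real.logb_nonpos (by norm_num) (by linarith [hp.2]) (by linarith [hp.1])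
  nlinarith [ha.1, ha.2]

lemma CE_le {R : ℕ} {a p : ℝ} (ha : a ∈ Set.Icc (0:ℝ) 1) (h1 : 1 / ((R:ℝ)+1) ≤ p)
    (h2 : 1 / ((R:ℝ)+1) ≤ 1 - p) : CE a p ≤ Real.logb 2 (R+1) := by
  have h0 : 0 < 1 / ((R:ℝ)+1) := by positivity
  have e1 := logb_mem h1 (by linarith)
  have e2 := logb_mem h2 (by linarith)
  unfold CE
  nlinarith [ha.1, ha.2]

lemma CE_le_ent {R : ℕ} {a p : ℝ} (h1 : 1 / ((R:ℝ)+1) ≤ p)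
    (h2 : 1 / ((R:ℝ)+1) ≤ 1 - p) (h3 : |p - a| ≤ 1 / ((R:ℝ)+1)) :
    CE a p ≤ binEnt p + 1 / ((R:ℝ)+1) * Real.logb 2 (R+1) := by
  have h0 : 0 < 1 / ((R:ℝ)+1) := by positivity
  have e1 := logb_mem h1 (by linarith)
  have e2 := logb_mem h2 (by linarith)
  have e3 : CE a p = binEnt p + (p - a) * (Real.logb 2 p - Real.logb 2 (1-p)) := by
    unfold CE binEnt; ring
  rw [e3]
  have e4 : |Real.logb 2 p - Real.logb 2 (1-p)| ≤ Real.logb 2 (R+1) := by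
    rw [abs_le]; constructor <;> linarith [e1.1, e1.2, e2.1, e2.2]
  have := (le_abs_self ((p - a) * (Real.logb 2 p - Real.logb 2 (1-p))))
  rw [abs_mul] at this
  have h5 := mul_le_mul h3 e4 (abs_nonneg _) h0.le
  linarith

lemma xlog_aux {x a : ℝ} (hx : 0 ≤ x) (ha : 0 < a) :
    x * Real.log a - x * Real.log x ≤ a - x := by
  rcases hx.eq_or_lt with rfl | hx
  · simp; exact ha.le
  · have := Real.log_le_sub_one_of_pos (div_pos ha hx)
    rw [Real.log_div ha.ne' hx.ne'] at this
    have h2 := mul_le_mul_of_nonneg_left this hx.le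
    have : x * (a / x - 1) = a - x := by field_simp
    linarith

lemma gibbs {x a : ℝ} (hx : x ∈ Set.Icc (0:ℝ) 1) (ha : a ∈ Set.Ioo (0:ℝ) 1) :
    binEnt x ≤ CE x a := by
  have h1 := xlog_aux hx.1 ha.1
  have h2 := xlog_aux (x := 1 - x) (a := 1 - a) (by linarith [hx.2]) (by linarith [ha.2])
  unfold binEnt CE Real.logb
  have hl : 0 < Real.log 2 := Real.log_pos (by norm_num)
  have : (-x * (Real.log a / Real.log 2) - (1 - x) * (Real.log (1 - a) / Real.log 2)) -
    (-x * (Real.log x / Real.log 2) - (1 - x) * (Real.log (1 - x) / Real.log 2))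
     = (-(x * Real.log a - x * Real.log x) - ((1-x) * Real.log (1-a) - (1-x) * Real.log (1-x)))
        / Real.log 2 := by field_simp; ring
  have h3 : 0 ≤ (-(x * Real.log a - x * Real.log x) -
      ((1-x) * Real.log (1-a) - (1-x) * Real.log (1-x))) / Real.log 2 :=
    div_nonneg (by linarith) hl.le
  linarith

lemma logb_aux {η w a : ℝ} (hη : 0 < η) (hη1 : η < 1) (hw : 0 ≤ w) (ha : (1-η)*w ≤ a) :
    -w * Real.logb 2 a ≤ -w * Real.logb 2 w - w * Real.logb 2 (1-η) := by
  rcases hw.eq_or_lt with rfl | hw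
  · simp
  · have h : Real.logb 2 ((1-η)*w) ≤ Real.logb 2 a :=
      Real.logb_le_logb_of_le (by norm_num) (mul_pos (by linarith) hw) ha
    rw [Real.logb_mul (by linarith) hw.ne'] at h
    nlinarith

lemma CE_shrink {η w : ℝ} (hη : 0 < η) (hη1 : η < 1) (hw : w ∈ Set.Icc (0:ℝ) 1) :
    CE w ((1-η)*w+η/2) ≤ binEnt w - Real.logb 2 (1-η) := by
  have h1 := logb_aux (w := w) (a := (1-η)*w+η/2) hη hη1 hw.1 (by linarith)
  have h2 := logb_aux (w := 1 - w) (a := 1 - ((1-η)*w+η/2)) hη hη1 (by linarith [hw.2])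
    (by linarith)
  unfold CE binEnt
  linarith

lemma binEnt_eq (x : ℝ) : binEnt x = Real.binEntropy x / Real.log 2 := by
  unfold binEnt Real.binEntropy Real.logb
  rw [Real.log_inv, Real.log_inv]; ring

lemma binEnt_mem {x : ℝ} (hx : x ∈ Set.Icc (0:ℝ) 1) : binEnt x ∈ Set.Icc (0:ℝ) 1 := by
  have hl : 0 < Real.log 2 := Real.log_pos (by norm_num)
  rw [binEnt_eq]
  exact ⟨div_nonneg (Real.binEntropy_nonneg hx.1 hx.2) hl.le,
    div_le_one_of_le₀ Real.binEntropy_le_log_two hl.le⟩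

lemma measurable_binEnt : Measurable binEnt := by
  unfold binEnt Real.logb; fun_prop

lemma measurable_CE : Measurable (fun q : ℝ × ℝ => CE q.1 q.2) := by
  unfold CE Real.logb; fun_prop

open Classical in
def adjR {n : ℕ} (G : SimpleGraph (Fin n)) (v w : Fin n) : ℝ := if G.Adj v w then 1 else 0

lemma adjR_mem {n : ℕ} (G : SimpleGraph (Fin n)) (v w : Fin n) : adjR G v w ∈ Set.Icc (0:ℝ) 1 := by
  unfold adjR; split_ifs <;> simp

lemma adjR_symm {n : ℕ} (G : SimpleGraph (Fin n)) (v w : Fin n) : adjR G v w = adjR G w v := by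
  classical
  unfold adjR
  by_cases h : G.Adj v w
  · rw [if_pos h, if_pos h.symm]
  · rw [if_neg h, if_neg fun h1 => h h1.symm]

lemma two_rpow_CE {n : ℕ} (G : SimpleGraph (Fin n)) (v w : Fin n) {p : ℝ} (hp : p ∈ Set.Ioo (0:ℝ) 1) :
    (2:ℝ) ^ (-CE (adjR G v w) p) = (open Classical in if G.Adj v w then p else 1 - p) := by
  unfold adjR CE
  split_ifs with h
  · simp only [sub_self, zero_mul, sub_zero, neg_mul, one_mul, neg_neg]
    exact Real.rpow_logb (by norm_num) (by norm_num) hp.1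
  · simp only [neg_zero, zero_mul, sub_zero, zero_sub, neg_neg, one_mul]
    exact Real.rpow_logb (by norm_num) (by norm_num) (by linarith [hp.2])

lemma count {n : ℕ} (p : Fin n → Fin n → ℝ) (hs : ∀ v w, p v w = p w v)
    (hp : ∀ v w, p v w ∈ Set.Ioo (0:ℝ) 1) (B : ℝ) :
    ((open Classical in Finset.univ.filter (fun G : SimpleGraph (Fin n) =>
      ∑ v, ∑ w, CE (adjR G v w) (p v w) ≤ B)).card : ℝ) ≤ (2:ℝ) ^ (B / 2) := by
  classical
  set E : Finset (Fin n × Fin n) := Finset.univ.filter (fun e => e.1 < e.2) with hE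
  set wt : SimpleGraph (Fin n) → ℝ := fun G =>
    ∏ e ∈ E, (if G.Adj e.1 e.2 then p e.1 e.2 else 1 - p e.1 e.2) with hwt
  have hpos : ∀ G, 0 ≤ wt G := fun G => Finset.prod_nonneg fun e _ => by
    have := hp e.1 e.2
    split_ifs
    · exact this.1.le
    · linarith [this.2]
  have hsum : ∑ G : SimpleGraph (Fin n), wt G ≤ 1 := by
    have h1 : ∏ e ∈ E, (p e.1 e.2 + (1 - p e.1 e.2)) = 1 := by simp
    rw [Finset.prod_add] at h1
    rw [← h1]
    have h2 : ∀ G, wt G = (fun s : Finset (Fin n × Fin n) =>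
        (∏ e ∈ s, p e.1 e.2) * ∏ e ∈ E \ s, (1 - p e.1 e.2)) (E.filter fun e => G.Adj e.1 e.2) := by
      intro G
      simp only [hwt]
      rw [Finset.prod_ite]
      congr 2
      ext e; simp; tauto
    have hinj : Function.Injective
        (fun G : SimpleGraph (Fin n) => E.filter fun e => G.Adj e.1 e.2) := by
      intro G H hGH
      have key : ∀ v w, v < w → (G.Adj v w ↔ H.Adj v w) := by
        intro v w hvw
        have := congrArg (fun s => (v, w) ∈ s) hGH
        simpa [hE, hvw] using this
      ext v w
      rcases lt_trichotomy v w with h | h | h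
      · exact key v w h
      · subst h; simp
      · rw [G.adj_comm, H.adj_comm]; exact key w v h
    simp_rw [h2]
    rw [← Finset.sum_image (s := Finset.univ) (g := fun G : SimpleGraph (Fin n) =>
        E.filter fun e => G.Adj e.1 e.2) (f := fun s : Finset (Fin n × Fin n) =>
        (∏ e ∈ s, p e.1 e.2) * ∏ e ∈ E \ s, (1 - p e.1 e.2)) (fun _ _ _ _ h => hinj h)]
    apply Finset.sum_le_sum_of_subset_of_nonneg
    · intro s hs
      obtain ⟨G, _, rfl⟩ := Finset.mem_image.mp hs
      exact Finset.mem_powerset.mpr (Finset.filter_subset _ _)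
    · intro s _ _
      apply mul_nonneg <;> apply Finset.prod_nonneg <;> intro e _
      · exact (hp _ _).1.le
      · linarith [(hp e.1 e.2).2]
  have hge : ∀ G, ∑ v, ∑ w, CE (adjR G v w) (p v w) ≤ B → (2:ℝ)^(-(B/2)) ≤ wt G := by
    intro G hG
    have h1 : wt G = (2:ℝ) ^ (- ∑ e ∈ E, CE (adjR G e.1 e.2) (p e.1 e.2)) := by
      rw [← Finset.sum_neg_distrib, Real.rpow_sum_of_pos (by norm_num)]
      exact Finset.prod_congr rfl fun e _ => (two_rpow_CE G e.1 e.2 (hp _ _)).symm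
    rw [h1]
    apply Real.rpow_le_rpow_of_exponent_le (by norm_num)
    have h2 : ∑ v, ∑ w, CE (adjR G v w) (p v w) =
        ∑ e : Fin n × Fin n, CE (adjR G e.1 e.2) (p e.1 e.2) := by
      rw [← Finset.univ_product_univ, Finset.sum_product]
    have h3 : ∑ e ∈ Finset.univ.filter (fun e : Fin n × Fin n => e.2 < e.1),
        CE (adjR G e.1 e.2) (p e.1 e.2) = ∑ e ∈ E, CE (adjR G e.1 e.2) (p e.1 e.2) := by
      refine Finset.sum_nbij' (fun e => (e.2, e.1)) (fun e => (e.2, e.1)) ?_ ?_ ?_ ?_ ?_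
      · intro e; simp [hE]
      · intro e; simp [hE]
      · intro e; simp
      · intro e; simp
      · intro e _; simp only; rw [adjR_symm, hs]
    have h4 : ∑ e ∈ E, CE (adjR G e.1 e.2) (p e.1 e.2) +
        ∑ e ∈ Finset.univ.filter (fun e : Fin n × Fin n => e.2 < e.1),
        CE (adjR G e.1 e.2) (p e.1 e.2) ≤
        ∑ e : Fin n × Fin n, CE (adjR G e.1 e.2) (p e.1 e.2) := by
      rw [← Finset.sum_union]
      · exact Finset.sum_le_sum_of_subset_of_nonneg (Finset.subset_univ _)
          fun e _ _ => CE_nonneg (adjR_mem _ _ _) (hp _ _)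
      · rw [Finset.disjoint_left]
        intro e h1 h2
        simp [hE] at h1 h2
        exact absurd (h1.trans h2) (lt_irrefl _)
    linarith
  set X := Finset.univ.filter (fun G : SimpleGraph (Fin n) =>
      ∑ v, ∑ w, CE (adjR G v w) (p v w) ≤ B)
  have h5 : (X.card : ℝ) * (2:ℝ)^(-(B/2)) ≤ 1 := by
    calc (X.card : ℝ) * (2:ℝ)^(-(B/2)) = ∑ G ∈ X, (2:ℝ)^(-(B/2)) := by simp
      _ ≤ ∑ G ∈ X, wt G := Finset.sum_le_sum fun G hG => hge G (Finset.mem_filter.mp hG).2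
      _ ≤ ∑ G, wt G := Finset.sum_le_sum_of_subset_of_nonneg (Finset.subset_univ _)
          fun G _ _ => hpos G
      _ ≤ 1 := hsum
  rw [Real.rpow_neg (by norm_num)] at h5
  have : (0:ℝ) < (2:ℝ)^(B/2) := Real.rpow_pos_of_pos (by norm_num) _
  rwa [← div_eq_mul_inv, div_le_one this] at h5

end GE

namespace GE

abbrev mI : Measure ℝ := volume.restrict (Set.Icc (0:ℝ) 1)
abbrev mS : Measure (ℝ × ℝ) := mI.prod mI

instance : IsProbabilityMeasure mI := ⟨by simp [mI]⟩

def idx (n : ℕ) [NeZero n] (x : ℝ) : Fin n := Fin.ofNat n (⌈(n:ℝ) * x⌉₊ - 1)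

def rupv (n : ℕ) (v : Fin n) : ℝ := ((v:ℕ) + 1 : ℝ) / n

lemma npos (n : ℕ) [NeZero n] : (0:ℝ) < n := Nat.cast_pos.mpr (NeZero.pos n)

lemma idx_val {n : ℕ} [NeZero n] {x : ℝ} (hx : x ≤ 1) :
    (idx n x : ℕ) = ⌈(n:ℝ) * x⌉₊ - 1 := by
  have h0 : ⌈(n:ℝ) * x⌉₊ ≤ n := by
    apply Nat.ceil_le.mpr
    nlinarith [npos n]
  have := NeZero.pos n
  simp only [idx, Fin.ofNat]
  exact Nat.mod_eq_of_lt (by omega)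

lemma idx_mono {n : ℕ} [NeZero n] {x y : ℝ} (hxy : x ≤ y) (hy : y ≤ 1) : idx n x ≤ idx n y := by
  rw [Fin.le_def, idx_val (hxy.trans hy), idx_val hy]
  exact Nat.sub_le_sub_right (Nat.ceil_mono (by have := npos n; gcongr)) 1

lemma measurable_idx (n : ℕ) [NeZero n] : Measurable (idx n) := by
  unfold idx
  exact (measurable_of_countable (fun k : ℕ => Fin.ofNat n (k - 1))).comp
    (Nat.measurable_ceil.comp (measurable_const_mul _))

lemma rupv_pos {n : ℕ} [NeZero n] (v : Fin n) : 0 < rupv n v := by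
  have := npos n; unfold rupv; positivity

lemma rupv_le {n : ℕ} [NeZero n] (v : Fin n) : rupv n v ≤ 1 := by
  have := npos n
  unfold rupv
  rw [div_le_one this]
  exact_mod_cast v.2

lemma idx_eq_iff {n : ℕ} [NeZero n] {x : ℝ} (hx : x ∈ Set.Ioc (0:ℝ) 1) (v : Fin n) :
    idx n x = v ↔ x ∈ Set.Ioc (((v:ℕ):ℝ)/n) (((v:ℕ)+1 : ℝ)/n) := by
  have hn := npos n
  have h1 : 0 < ⌈(n:ℝ) * x⌉₊ := Nat.ceil_pos.mpr (mul_pos hn hx.1)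
  rw [Fin.ext_iff, idx_val hx.2, Set.mem_Ioc, div_lt_iff₀ hn, le_div_iff₀ hn, mul_comm x]
  have h2 : ⌈(n:ℝ) * x⌉₊ - 1 = (v:ℕ) ↔ ⌈(n:ℝ) * x⌉₊ = (v:ℕ) + 1 := by omega
  rw [h2, Nat.ceil_eq_iff (by omega)]
  push_cast
  simp

lemma le_rupv {n : ℕ} [NeZero n] {x : ℝ} (hx : x ∈ Set.Ioc (0:ℝ) 1) : x ≤ rupv n (idx n x) :=
  ((idx_eq_iff hx _).mp rfl).2

lemma idx_rupv {n : ℕ} [NeZero n] (v : Fin n) : idx n (rupv n v) = v := by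
  rw [idx_eq_iff ⟨rupv_pos v, rupv_le v⟩]
  have := npos n
  exact ⟨by unfold rupv; gcongr; linarith, le_rfl⟩

lemma ae_Ioc : ∀ᵐ x ∂mI, x ∈ Set.Ioc (0:ℝ) 1 := by
  have : mI = volume.restrict (Set.Ioc (0:ℝ) 1) := restrict_Ioc_eq_restrict_Icc.symm
  rw [this]
  exact ae_restrict_mem measurableSet_Ioc

lemma ae_Ioc2 : ∀ᵐ p ∂mS, p.1 ∈ Set.Ioc (0:ℝ) 1 ∧ p.2 ∈ Set.Ioc (0:ℝ) 1 :=
  (Measure.quasiMeasurePreserving_fst.ae ae_Ioc).and (Measure.quasiMeasurePreserving_snd.ae ae_Ioc)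

lemma mI_idx {n : ℕ} [NeZero n] (v : Fin n) : mI.real (idx n ⁻¹' {v}) = 1 / n := by
  have hn := npos n
  have hv : ((v:ℕ):ℝ) + 1 ≤ n := by exact_mod_cast v.2
  have e : mI = volume.restrict (Set.Ioc (0:ℝ) 1) := restrict_Ioc_eq_restrict_Icc.symm
  rw [e, measureReal_restrict_apply (measurable_idx n (measurableSet_singleton v))]
  have : idx n ⁻¹' {v} ∩ Set.Ioc (0:ℝ) 1 = Set.Ioc (((v:ℕ):ℝ)/n) (((v:ℕ)+1 : ℝ)/n) := by
    ext x
    constructor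
    · rintro ⟨h1, h2⟩
      exact (idx_eq_iff h2 v).mp h1
    · intro h
      have hx : x ∈ Set.Ioc (0:ℝ) 1 :=
        ⟨lt_of_le_of_lt (by positivity) h.1, h.2.trans (by rwa [div_le_one hn])⟩
      exact ⟨(idx_eq_iff hx v).mpr h, hx⟩
  rw [this, Real.volume_real_Ioc_of_le (by gcongr; linarith)]
  field_simp; ring

lemma mon_bad {n : ℕ} [NeZero n] (f : ℝ → ℕ) (K : ℕ)
    (hf : MonotoneOn f (Set.Icc 0 1)) (hK : ∀ x, f x ≤ K) :
    mI.real {x | f (rupv n (idx n x)) ≠ f x} ≤ K / n := by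
  classical
  have hn := npos n
  set B : Finset (Fin n) := Finset.univ.filter
    (fun v => f (((v:ℕ):ℝ)/n) < f ((((v:ℕ)+1:ℕ):ℝ)/n)) with hB
  have hsub : ∀ᵐ x ∂mI, x ∈ {x | f (rupv n (idx n x)) ≠ f x} → x ∈ idx n ⁻¹' (B : Set (Fin n)) := by
    filter_upwards [ae_Ioc] with x hx hbad
    have h1 := (idx_eq_iff hx (idx n x)).mp rfl
    have h2 : f (((idx n x:ℕ):ℝ)/n) ≤ f x :=
      hf ⟨by positivity, h1.1.le.trans hx.2⟩ ⟨hx.1.le, hx.2⟩ h1.1.le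
    have h3 : f x ≤ f (rupv n (idx n x)) :=
      hf ⟨hx.1.le, hx.2⟩ ⟨(rupv_pos _).le, rupv_le _⟩ (le_rupv hx)
    change f _ ≠ f x at hbad
    have h4 : rupv n (idx n x) = (((idx n x:ℕ)+1:ℕ):ℝ)/n := by unfold rupv; push_cast; rfl
    rw [h4] at h3 hbad
    rw [Set.mem_preimage, Finset.mem_coe, hB, Finset.mem_filter]
    exact ⟨Finset.mem_univ _, by omega⟩
  have h1 : mI.real {x | f (rupv n (idx n x)) ≠ f x} ≤ mI.real (idx n ⁻¹' (B : Set (Fin n))) :=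
    ENNReal.toReal_mono (measure_ne_top _ _) (measure_mono_ae hsub)
  refine h1.trans ?_
  have h2 : idx n ⁻¹' (B : Set (Fin n)) = ⋃ v ∈ B, idx n ⁻¹' {v} := by
    ext x; simp
  rw [h2]
  refine (measureReal_biUnion_finset_le _ _).trans ?_
  simp_rw [mI_idx]
  rw [Finset.sum_const, nsmul_eq_mul, mul_one_div]
  gcongr
  have h3 : (B.card : ℝ) ≤ ∑ v : Fin n, ((f ((((v:ℕ)+1:ℕ):ℝ)/n) : ℝ) - f (((v:ℕ):ℝ)/n)) := by
    have : (B.card : ℝ) = ∑ v : Fin n, if f (((v:ℕ):ℝ)/n) < f ((((v:ℕ)+1:ℕ):ℝ)/n) then (1:ℝ) else 0 := by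
      simp [hB]
    rw [this]
    refine Finset.sum_le_sum fun v _ => ?_
    have hv : ((v:ℕ):ℝ) + 1 ≤ n := by exact_mod_cast v.2
    split_ifs with h
    · have : (f (((v:ℕ):ℝ)/n) : ℝ) + 1 ≤ f ((((v:ℕ)+1:ℕ):ℝ)/n) := by exact_mod_cast h
      linarith
    · rw [sub_nonneg]
      norm_cast
      apply hf ⟨by positivity, (div_le_one hn).mpr (by linarith)⟩
        ⟨by positivity, (div_le_one hn).mpr (by push_cast; linarith)⟩
      push_cast
      gcongr; linarith
  have h4 : ∑ v : Fin n, ((f ((((v:ℕ)+1:ℕ):ℝ)/n) : ℝ) - f (((v:ℕ):ℝ)/n))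
      = (f (((n:ℕ):ℝ)/n) : ℝ) - f (((0:ℕ):ℝ)/n) := by
    rw [Fin.sum_univ_eq_sum_range (fun v : ℕ => (f (((v+1:ℕ):ℝ)/n) : ℝ) - f ((v:ℝ)/n)) n]
    exact Finset.sum_range_sub (fun v : ℕ => (f ((v:ℝ)/n) : ℝ)) n
  have h5 : (f (((n:ℕ):ℝ)/n) : ℝ) ≤ K := by exact_mod_cast hK _
  have h6 : (0:ℝ) ≤ f (((0:ℕ):ℝ)/n) := Nat.cast_nonneg _
  have h7 : (B.card : ℝ) ≤ K := by linarith
  exact_mod_cast h7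

lemma step_int {n : ℕ} [NeZero n] (μ ν : Measure ℝ) [IsFiniteMeasure μ] [IsFiniteMeasure ν]
    (D : Fin n → Fin n → ℝ) :
    ∫ p, D (idx n p.1) (idx n p.2) ∂(μ.prod ν) =
      ∑ v, ∑ w, μ.real (idx n ⁻¹' {v}) * ν.real (idx n ⁻¹' {w}) * D v w := by
  have hm : Measurable (fun p : ℝ × ℝ => (idx n p.1, idx n p.2)) :=
    ((measurable_idx n).comp measurable_fst).prodMk ((measurable_idx n).comp measurable_snd)
  have h1 : ∫ p, D (idx n p.1) (idx n p.2) ∂(μ.prod ν) =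
      ∫ q, D q.1 q.2 ∂((μ.prod ν).map (fun p : ℝ × ℝ => (idx n p.1, idx n p.2))) := by
    rw [integral_map hm.aemeasurable]
    exact (measurable_of_countable _).aestronglyMeasurable
  rw [h1, integral_fintype Integrable.of_finite, ← Finset.univ_product_univ, Finset.sum_product]
  refine Finset.sum_congr rfl fun v _ => Finset.sum_congr rfl fun w _ => ?_
  rw [map_measureReal_apply hm (measurableSet_singleton _), smul_eq_mul]
  congr 1
  have : (fun p : ℝ × ℝ => (idx n p.1, idx n p.2)) ⁻¹' {(v, w)} =
      (idx n ⁻¹' {v}) ×ˢ (idx n ⁻¹' {w}) := by ext p; simp [Prod.ext_iff]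
  rw [this, measureReal_prod_prod]

lemma step_intS {n : ℕ} [NeZero n] (D : Fin n → Fin n → ℝ) :
    ∫ p, D (idx n p.1) (idx n p.2) ∂mS = (∑ v, ∑ w, D v w) / (n:ℝ)^2 := by
  have := npos n
  rw [step_int]
  simp_rw [mI_idx, ← Finset.mul_sum]
  field_simp

lemma measurable_step {n : ℕ} [NeZero n] (D : Fin n → Fin n → ℝ) :
    Measurable (fun p : ℝ × ℝ => D (idx n p.1) (idx n p.2)) :=
  (measurable_of_countable (fun q : Fin n × Fin n => D q.1 q.2)).comp
    (((measurable_idx n).comp measurable_fst).prodMk ((measurable_idx n).comp measurable_snd))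

/-- comparison of integrals -/
lemma int_abs_le (Φ : ℝ × ℝ → ℝ) (B : Set ℝ) (hB : MeasurableSet B)
    (c C : ℝ) (hC : 0 ≤ C)
    (h : ∀ᵐ p ∂mS, p.1 ∉ B → p.2 ∉ B → |Φ p| ≤ c) (h' : ∀ᵐ p ∂mS, |Φ p| ≤ c + C) :
    ∫ p, |Φ p| ∂mS ≤ c + 2 * C * mI.real B := by
  have hi : ∀ s : Set (ℝ × ℝ), MeasurableSet s → Integrable (s.indicator (fun _ => C)) mS :=
    fun s hs => (integrable_const C).indicator hs
  have m1 : MeasurableSet (Prod.fst ⁻¹' B : Set (ℝ × ℝ)) := measurable_fst hB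
  have m2 : MeasurableSet (Prod.snd ⁻¹' B : Set (ℝ × ℝ)) := measurable_snd hB
  have h1 : ∫ p, |Φ p| ∂mS ≤ ∫ p, (c + ((Prod.fst ⁻¹' B : Set (ℝ × ℝ)).indicator (fun _ => C) p +
      (Prod.snd ⁻¹' B : Set (ℝ × ℝ)).indicator (fun _ => C) p)) ∂mS := by
    apply integral_mono_of_nonneg
    · exact Eventually.of_forall fun p => abs_nonneg _
    · exact (integrable_const c).add ((hi _ m1).add (hi _ m2))
    · filter_upwards [h, h'] with p hp hp'
      by_cases a1 : p.1 ∈ B <;> by_cases a2 : p.2 ∈ B <;> simp [a1, a2]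
      · linarith
      · linarith
      · linarith
      · exact hp a1 a2
  refine h1.trans (le_of_eq ?_)
  have h2 : Integrable (fun p => (Prod.fst ⁻¹' B : Set (ℝ × ℝ)).indicator (fun _ => C) p +
      (Prod.snd ⁻¹' B : Set (ℝ × ℝ)).indicator (fun _ => C) p) mS := (hi _ m1).add (hi _ m2)
  rw [integral_add (integrable_const c) h2, integral_add (hi _ m1) (hi _ m2), integral_indicator_const _ m1, integral_indicator_const _ m2]
  have e1 : mS.real (Prod.fst ⁻¹' B : Set (ℝ × ℝ)) = mI.real B := by
    rw [← Set.prod_univ, measureReal_prod_prod]; simp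
  have e2 : mS.real (Prod.snd ⁻¹' B : Set (ℝ × ℝ)) = mI.real B := by
    rw [← Set.univ_prod, measureReal_prod_prod]; simp
  rw [e1, e2]
  simp
  ring

def valR (R : ℕ) (j : Fin R) : ℝ := ((j:ℕ) + 1 : ℝ) / ((R:ℝ) + 1)

lemma valR_lower (R : ℕ) (j : Fin R) : 1 / ((R:ℝ)+1) ≤ valR R j := by
  unfold valR; gcongr; simp

lemma valR_upper (R : ℕ) (j : Fin R) : 1 / ((R:ℝ)+1) ≤ 1 - valR R j := by
  have h : ((j:ℕ):ℝ) + 1 ≤ R := by exact_mod_cast j.2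
  unfold valR
  rw [le_sub_iff_add_le, ← add_div]
  apply div_le_one_of_le₀ <;> linarith

lemma valR_mem (R : ℕ) (j : Fin R) : valR R j ∈ Set.Ioo (0:ℝ) 1 := by
  have h1 := valR_lower R j
  have h2 := valR_upper R j
  have h0 : 0 < 1 / ((R:ℝ)+1) := by positivity
  constructor <;> linarith

lemma exists_rnd (R : ℕ) [NeZero R] : ∃ rnd : ℝ → Fin R, ∀ d ∈ Set.Icc (0:ℝ) 1,
    |valR R (rnd d) - d| ≤ 1 / ((R:ℝ)+1) := by
  refine ⟨idx R, fun d hd => ?_⟩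
  have hR := npos R
  have hv : ((idx R d : ℕ):ℝ) + 1 ≥ R * d ∧ ((idx R d : ℕ):ℝ) ≤ R * d := by
    rcases hd.1.eq_or_lt with rfl | h0
    · rw [idx_val (by norm_num)]; simp
    · have := (idx_eq_iff ⟨h0, hd.2⟩ (idx R d)).mp rfl
      rw [Set.mem_Ioc, div_lt_iff₀ hR, le_div_iff₀ hR] at this
      constructor <;> linarith [this.1, this.2]
  have e : valR R (idx R d) - d = (((idx R d : ℕ):ℝ) + 1 - R * d - d) / ((R:ℝ)+1) := by
    unfold valR; field_simp; ring
  rw [e, abs_div, abs_of_pos (by positivity : 0 < (R:ℝ)+1)]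
  gcongr
  rw [abs_le]
  constructor <;> linarith [hv.1, hv.2, hd.1, hd.2]

def Ug (M R : ℕ) [NeZero M] (g : Fin M → Fin M → Fin R) : ℝ → ℝ → ℝ :=
  fun x y => valR R (g (idx M x) (idx M y))

def CutLe (U : ℝ → ℝ → ℝ) (c : ℝ) : Prop :=
  ∀ S T : Set ℝ, MeasurableSet S → MeasurableSet T → S ⊆ Set.Icc 0 1 → T ⊆ Set.Icc 0 1 →
    |∫ p in S ×ˢ T, U p.1 p.2| ≤ c

lemma mS_eq : mS = (volume : Measure (ℝ × ℝ)).restrict (Set.Icc 0 1 ×ˢ Set.Icc 0 1) := by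
  unfold mS mI
  rw [Measure.volume_eq_prod, Measure.prod_restrict]

lemma restrict_ST {S T : Set ℝ} (hS : S ⊆ Set.Icc 0 1) (hT : T ⊆ Set.Icc 0 1) :
    (volume : Measure (ℝ × ℝ)).restrict (S ×ˢ T) = mS.restrict (S ×ˢ T) := by
  rw [mS_eq, Measure.restrict_restrict_of_subset (Set.prod_mono hS hT)]

lemma restrict_ST_prod (S T : Set ℝ) :
    (volume : Measure (ℝ × ℝ)).restrict (S ×ˢ T) = (volume.restrict S).prod (volume.restrict T) := by
  rw [Measure.volume_eq_prod, Measure.prod_restrict]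

lemma integrable_of_bdd {μ : Measure (ℝ × ℝ)} [IsFiniteMeasure μ] {Φ : ℝ × ℝ → ℝ}
    (hm : Measurable Φ) (C : ℝ) (h : ∀ p, |Φ p| ≤ C) : Integrable Φ μ :=
  Integrable.of_bound hm.aestronglyMeasurable C (Eventually.of_forall h)

lemma cutLe_of_L1 (U : ℝ → ℝ → ℝ) (c : ℝ) (hU : Integrable (fun p : ℝ × ℝ => U p.1 p.2) mS)
    (h : ∫ p, |U p.1 p.2| ∂mS ≤ c) : CutLe U c := by
  intro S T _ _ hS hT
  rw [restrict_ST hS hT]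
  refine (abs_integral_le_integral_abs).trans (le_trans ?_ h)
  exact setIntegral_le_integral hU.abs (Eventually.of_forall fun _ => abs_nonneg _)

lemma cutLe_add {U V : ℝ → ℝ → ℝ} {c d : ℝ} (hU : Integrable (fun p : ℝ × ℝ => U p.1 p.2) mS)
    (hV : Integrable (fun p : ℝ × ℝ => V p.1 p.2) mS) (h1 : CutLe U c) (h2 : CutLe V d) :
    CutLe (fun x y => U x y + V x y) (c + d) := by
  intro S T mS' mT hS hT
  have h3 := h1 S T mS' mT hS hT
  have h4 := h2 S T mS' mT hS hT
  rw [restrict_ST hS hT] at *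
  rw [integral_add hU.restrict hV.restrict]
  exact (abs_add_le _ _).trans (add_le_add h3 h4)

lemma cutLe_step {n : ℕ} [NeZero n] (D : Fin n → Fin n → ℝ) (C : ℝ)
    (h : ∀ S T : Finset (Fin n), |∑ v ∈ S, ∑ w ∈ T, D v w| ≤ (n:ℝ)^2 * C) :
    CutLe (fun x y => D (idx n x) (idx n y)) C := by
  intro S T mS' mT hS hT
  have hn := npos n
  have fS : IsFiniteMeasure (volume.restrict S) :=
    ⟨by rw [Measure.restrict_apply_univ]; exact (measure_mono hS).trans_lt (by simp)⟩
  have fT : IsFiniteMeasure (volume.restrict T) :=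
    ⟨by rw [Measure.restrict_apply_univ]; exact (measure_mono hT).trans_lt (by simp)⟩
  rw [restrict_ST_prod, step_int]
  have key : ∀ X : Set ℝ, X ⊆ Set.Icc 0 1 → ∀ v : Fin n,
      (n:ℝ) * (volume.restrict X).real (idx n ⁻¹' {v}) ∈ Set.Icc (0:ℝ) 1 := by
    intro X hX v
    refine ⟨by positivity, ?_⟩
    have h1 : (volume.restrict X).real (idx n ⁻¹' {v}) ≤ mI.real (idx n ⁻¹' {v}) :=
      ENNReal.toReal_mono (measure_ne_top _ _) (Measure.restrict_mono_set volume hX _)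
    rw [mI_idx] at h1
    calc _ ≤ (n:ℝ) * (1/n) := by gcongr
      _ = 1 := by field_simp
  have h2 := bilin_ext D _ h _ _ (key S hS) (key T hT)
  have h3 : ∑ v, ∑ w, ((n:ℝ) * (volume.restrict S).real (idx n ⁻¹' {v})) *
      ((n:ℝ) * (volume.restrict T).real (idx n ⁻¹' {w})) * D v w = (n:ℝ)^2 *
      ∑ v, ∑ w, (volume.restrict S).real (idx n ⁻¹' {v}) *
      (volume.restrict T).real (idx n ⁻¹' {w}) * D v w := by
    simp_rw [Finset.mul_sum]
    exact Finset.sum_congr rfl fun v _ => Finset.sum_congr rfl fun w _ => by ring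
  rw [h3, abs_mul, abs_of_pos (by positivity)] at h2
  exact le_of_mul_le_mul_left h2 (by positivity)

lemma graphonOfGraph_eq {n : ℕ} [NeZero n] (G : SimpleGraph (Fin n)) {x y : ℝ}
    (hx : x ∈ Set.Ioc (0:ℝ) 1) (hy : y ∈ Set.Ioc (0:ℝ) 1) :
    graphonOfGraph G x y = adjR G (idx n x) (idx n y) := by
  have key : ∀ z ∈ Set.Ioc (0:ℝ) 1, ∀ i : Fin n, ⌈(n : ℝ) * z⌉ = ((i : ℕ) : ℤ) + 1 ↔ idx n z = i := by
    intro z hz i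
    have hn := npos n
    rw [idx_eq_iff hz, Int.ceil_eq_iff, Set.mem_Ioc, div_lt_iff₀ hn, le_div_iff₀ hn, mul_comm z]
    push_cast
    simp
  unfold graphonOfGraph adjR
  have : (∃ i j : Fin n, G.Adj i j ∧ ⌈(n : ℝ) * x⌉ = ((i : ℕ) : ℤ) + 1 ∧
      ⌈(n : ℝ) * y⌉ = ((j : ℕ) : ℤ) + 1) ↔ G.Adj (idx n x) (idx n y) := by
    simp_rw [key x hx, key y hy]
    constructor
    · rintro ⟨i, j, h, rfl, rfl⟩; exact h
    · intro h; exact ⟨_, _, h, rfl, rfl⟩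
  by_cases h : G.Adj (idx n x) (idx n y)
  · rw [if_pos (this.mpr h), if_pos h]
  · rw [if_neg (fun h1 => h (this.mp h1)), if_neg h]

end GE

namespace GE

lemma cutLe_congr {U V : ℝ → ℝ → ℝ} {c : ℝ} (h : ∀ᵐ p ∂mS, U p.1 p.2 = V p.1 p.2)
    (hU : CutLe U c) : CutLe V c := by
  intro S T mS' mT hS hT
  have := hU S T mS' mT hS hT
  rw [restrict_ST hS hT] at *
  rwa [← integral_congr_ae (ae_restrict_of_ae h)]

lemma measurable_Ug (M R : ℕ) [NeZero M] (g : Fin M → Fin M → Fin R) :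
    Measurable (fun p : ℝ × ℝ => Ug M R g p.1 p.2) :=
  measurable_step (fun s t => valR R (g s t))

lemma sum_CE_avg {n : ℕ} (c : Fin n → ℕ) (A : Fin n → Fin n → ℝ) (P : ℕ → ℕ → ℝ) :
    ∑ v, ∑ w, CE (A v w) (P (c v) (c w)) =
      ∑ v, ∑ w, CE (avgN c A (c v) (c w)) (P (c v) (c w)) := by
  have h := sum_avgN c A (fun k l => Real.logb 2 (1 - P k l) - Real.logb 2 (P k l))
  have e : ∀ a p, CE a p = a * (Real.logb 2 (1 - p) - Real.logb 2 p) - Real.logb 2 (1-p) :=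
    fun a p => by unfold CE; ring
  simp_rw [e, Finset.sum_sub_distrib] at *
  rw [h]

lemma int_diff_le {Φ Ψ : ℝ × ℝ → ℝ} (hΦ : Integrable Φ mS) (hΨ : Integrable Ψ mS)
    {b : ℝ} (h : ∫ p, |Φ p - Ψ p| ∂mS ≤ b) : ∫ p, Φ p ∂mS ≤ ∫ p, Ψ p ∂mS + b := by
  have h1 : ∫ p, Φ p ∂mS - ∫ p, Ψ p ∂mS = ∫ p, (Φ p - Ψ p) ∂mS := (integral_sub hΦ hΨ).symm
  have h2 : ∫ p, (Φ p - Ψ p) ∂mS ≤ ∫ p, |Φ p - Ψ p| ∂mS :=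
    integral_mono (hΦ.sub hΨ) (hΦ.sub hΨ).abs fun p => le_abs_self _
  linarith

lemma abs_sub_le_of_mem {a b C : ℝ} (h1 : 0 ≤ a) (h2 : a ≤ C) (h3 : 0 ≤ b) (h4 : b ≤ C) :
    |a - b| ≤ C := by rw [abs_le]; constructor <;> linarith

lemma reg_cont {n M R : ℕ} [NeZero n] [NeZero M] [NeZero R] (K l : ℕ)
    (G : SimpleGraph (Fin n)) (c : Fin n → ℕ) (hmono : Monotone c) (hcK : ∀ v, c v < K)
    (hcut : ∀ S T, |dcut c (adjR G) S T| ≤ (n:ℝ)^2 / l) :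
    ∃ g : Fin M → Fin M → Fin R, (∀ s t, g s t = g t s) ∧
      CutLe (fun x y => graphonOfGraph G x y - Ug M R g x y)
        (1 / l + 1 / ((R:ℝ)+1) + 2 * K / M) ∧
      ∑ v, ∑ w, CE (adjR G v w) (Ug M R g (rupv n v) (rupv n w)) ≤
        (n:ℝ)^2 * (∫ p, binEnt (Ug M R g p.1 p.2) ∂mS + 1 / ((R:ℝ)+1) * Real.logb 2 (R+1)
          + 2 * Real.logb 2 (R+1) * (K / M) + 2 * (K / M) + 2 * Real.logb 2 (R+1) * (M / n)) := by
  obtain ⟨rnd, hrnd⟩ := exists_rnd R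
  have hn := npos n
  set A := adjR G with hA
  have hAm := adjR_mem G
  have hEm := avgN_mem c A hAm
  set P : ℕ → ℕ → ℝ := fun k l => valR R (rnd (avgN c A k l)) with hP
  set g : Fin M → Fin M → Fin R := fun s t =>
    rnd (avgN c A (c (idx n (rupv M s))) (c (idx n (rupv M t)))) with hg
  set Λ := Real.logb 2 ((R:ℝ)+1) with hΛ
  have hΛ0 : 0 ≤ Λ := Real.logb_nonneg (by norm_num) (by linarith [npos R])
  have hR0 : 0 < 1 / ((R:ℝ)+1) := by positivity
  -- bad sets
  set B1 : Set ℝ := {x | c (idx n (rupv M (idx M x))) ≠ c (idx n x)} with hB1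
  have mB1 : MeasurableSet B1 := by
    have h1 : Measurable (fun x => c (idx n x)) := (measurable_of_countable c).comp (measurable_idx n)
    have h2 : Measurable (fun x => c (idx n (rupv M (idx M x)))) :=
      (measurable_of_countable (fun s => c (idx n (rupv M s)))).comp (measurable_idx M)
    exact (measurableSet_eq_fun h2 h1).compl
  have b1 : mI.real B1 ≤ K / M := mon_bad (fun x => c (idx n x)) K
    (fun x _ y hy hxy => hmono (idx_mono hxy hy.2)) (fun x => (hcK _).le)
  set B2 : Set ℝ := {x | ((idx M (rupv n (idx n x)) : Fin M) : ℕ) ≠ ((idx M x : Fin M) : ℕ)} with hB2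
  have mB2 : MeasurableSet B2 := by
    have h1 : Measurable (fun x => ((idx M x : Fin M) : ℕ)) :=
      (measurable_of_countable (fun s : Fin M => (s:ℕ))).comp (measurable_idx M)
    have h2 : Measurable (fun x => ((idx M (rupv n (idx n x)) : Fin M) : ℕ)) :=
      (measurable_of_countable (fun v : Fin n => ((idx M (rupv n v) : Fin M) : ℕ))).comp
        (measurable_idx n)
    exact (measurableSet_eq_fun h2 h1).compl
  have b2 : mI.real B2 ≤ M / n := mon_bad (fun x => ((idx M x : Fin M) : ℕ)) M
    (fun x _ y hy hxy => idx_mono hxy hy.2) (fun x => (idx M x).2.le)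
  have eq1 : ∀ x y, x ∉ B1 → y ∉ B1 → Ug M R g x y = P (c (idx n x)) (c (idx n y)) := by
    intro x y hx hy
    have hx' : c (idx n (rupv M (idx M x))) = c (idx n x) := not_not.mp hx
    have hy' : c (idx n (rupv M (idx M y))) = c (idx n y) := not_not.mp hy
    simp only [Ug, hg, hP, hx', hy']
  have eq2 : ∀ x y, x ∉ B2 → y ∉ B2 →
      Ug M R g (rupv n (idx n x)) (rupv n (idx n y)) = Ug M R g x y := by
    intro x y hx hy
    have hx' : idx M (rupv n (idx n x)) = idx M x := Fin.ext (not_not.mp hx)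
    have hy' : idx M (rupv n (idx n y)) = idx M y := Fin.ext (not_not.mp hy)
    simp only [Ug, hx', hy']
  have CEb : ∀ a ∈ Set.Icc (0:ℝ) 1, ∀ j, 0 ≤ CE a (valR R j) ∧ CE a (valR R j) ≤ Λ := fun a ha j =>
    ⟨CE_nonneg ha (valR_mem R j), CE_le ha (valR_lower R j) (valR_upper R j)⟩
  have BEb : ∀ j, binEnt (valR R j) ∈ Set.Icc (0:ℝ) 1 := fun j =>
    binEnt_mem ⟨(valR_mem R j).1.le, (valR_mem R j).2.le⟩
  have mU := measurable_Ug M R g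
  refine ⟨g, ?_, ?_, ?_⟩
  · intro s t
    simp only [hg]
    rw [avgN_symm c A (adjR_symm G)]
  · have c1 : CutLe (fun x y => (fun v w => A v w - avgN c A (c v) (c w)) (idx n x) (idx n y)) (1/l) := by
      refine cutLe_step (fun v w => A v w - avgN c A (c v) (c w)) (1/l) ?_
      intro S T
      rw [mul_one_div]; exact hcut S T
    have i1 : Integrable (fun p : ℝ × ℝ => (fun v w => A v w - avgN c A (c v) (c w))
        (idx n p.1) (idx n p.2)) mS :=
      integrable_of_bdd (measurable_step (fun v w => A v w - avgN c A (c v) (c w))) 1 fun p =>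
        abs_sub_le_of_mem (hAm _ _).1 (hAm _ _).2 (hEm _ _).1 (hEm _ _).2
    have mE : Measurable (fun p : ℝ × ℝ => avgN c A (c (idx n p.1)) (c (idx n p.2))) :=
      measurable_step (fun v w => avgN c A (c v) (c w))
    have bd : ∀ x y, |avgN c A (c (idx n x)) (c (idx n y)) - Ug M R g x y| ≤ 1 := fun x y =>
        abs_sub_le_of_mem (hEm _ _).1 (hEm _ _).2 (valR_mem R _).1.le (valR_mem R _).2.le
    have i2 : Integrable (fun p : ℝ × ℝ => avgN c A (c (idx n p.1)) (c (idx n p.2))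
        - Ug M R g p.1 p.2) mS :=
      integrable_of_bdd (mE.sub mU) 1 fun p => bd _ _
    have c2 : CutLe (fun x y => avgN c A (c (idx n x)) (c (idx n y)) - Ug M R g x y)
        (1 / ((R:ℝ)+1) + 2 * 1 * mI.real B1) := by
      apply cutLe_of_L1 _ _ i2
      apply int_abs_le _ B1 mB1 _ _ zero_le_one
      · refine Eventually.of_forall fun p hx hy => ?_
        rw [eq1 _ _ hx hy, abs_sub_comm]
        exact hrnd _ (hEm _ _)
      · exact Eventually.of_forall fun p => (bd _ _).trans (by linarith)
    have c3 := cutLe_add i1 i2 c1 c2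
    have c4 : CutLe (fun x y => graphonOfGraph G x y - Ug M R g x y)
        (1/l + (1 / ((R:ℝ)+1) + 2 * 1 * mI.real B1)) := by
      refine cutLe_congr ?_ c3
      filter_upwards [ae_Ioc2] with p hp
      rw [graphonOfGraph_eq G hp.1 hp.2]
      ring
    intro S T hS hT hS' hT'
    refine (c4 S T hS hT hS' hT').trans ?_
    have : 2 * (K:ℝ) / M = 2 * (K / M) := by ring
    rw [this]; linarith
  · have e0 : ∑ v, ∑ w, CE (A v w) (Ug M R g (rupv n v) (rupv n w)) = (n:ℝ)^2 *
        ∫ p, CE (A (idx n p.1) (idx n p.2))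
          (Ug M R g (rupv n (idx n p.1)) (rupv n (idx n p.2))) ∂mS := by
      rw [step_intS (fun v w => CE (A v w) (Ug M R g (rupv n v) (rupv n w)))]
      field_simp
    rw [e0]
    gcongr
    have mA : Measurable (fun p : ℝ × ℝ => A (idx n p.1) (idx n p.2)) := measurable_step A
    have ib : ∀ (f : ℝ × ℝ → ℝ), Measurable f → (∀ p, 0 ≤ f p ∧ f p ≤ Λ) → Integrable f mS :=
      fun f hf h => integrable_of_bdd hf Λ fun p => by
        rw [abs_of_nonneg (h p).1]; exact (h p).2
    have j1 : Integrable (fun p : ℝ × ℝ => CE (A (idx n p.1) (idx n p.2))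
          (Ug M R g (rupv n (idx n p.1)) (rupv n (idx n p.2)))) mS :=
      ib _ (measurable_step (fun v w => CE (A v w) (Ug M R g (rupv n v) (rupv n w))))
        fun p => CEb _ (hAm _ _) _
    have j2 : Integrable (fun p : ℝ × ℝ => CE (A (idx n p.1) (idx n p.2)) (Ug M R g p.1 p.2)) mS :=
      ib _ (measurable_CE.comp (mA.prodMk mU)) fun p => CEb _ (hAm _ _) _
    have j3 : Integrable (fun p : ℝ × ℝ => CE (A (idx n p.1) (idx n p.2))
        (P (c (idx n p.1)) (c (idx n p.2)))) mS :=
      ib _ (measurable_step (fun v w => CE (A v w) (P (c v) (c w)))) fun p => CEb _ (hAm _ _) _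
    have s1 := int_diff_le j1 j2 (b := 0 + 2 * Λ * mI.real B2) (by
      apply int_abs_le _ B2 mB2 _ _ hΛ0
      · refine Eventually.of_forall fun p hx hy => ?_
        rw [eq2 _ _ hx hy]; simp
      · refine Eventually.of_forall fun p => ?_
        rw [zero_add]
        exact abs_sub_le_of_mem (CEb _ (hAm _ _) _).1 (CEb _ (hAm _ _) _).2
          (CEb _ (hAm _ _) _).1 (CEb _ (hAm _ _) _).2)
    have s2 := int_diff_le j2 j3 (b := 0 + 2 * Λ * mI.real B1) (by
      apply int_abs_le _ B1 mB1 _ _ hΛ0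
      · refine Eventually.of_forall fun p hx hy => ?_
        rw [eq1 _ _ hx hy]; simp
      · refine Eventually.of_forall fun p => ?_
        rw [zero_add]
        exact abs_sub_le_of_mem (CEb _ (hAm _ _) _).1 (CEb _ (hAm _ _) _).2
          (CEb _ (hAm _ _) _).1 (CEb _ (hAm _ _) _).2)
    have s3 : ∫ p : ℝ × ℝ, CE (A (idx n p.1) (idx n p.2)) (P (c (idx n p.1)) (c (idx n p.2))) ∂mS
        ≤ ∫ p : ℝ × ℝ, binEnt (P (c (idx n p.1)) (c (idx n p.2))) ∂mS + 1 / ((R:ℝ)+1) * Λ := by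
      rw [step_intS (fun v w => CE (A v w) (P (c v) (c w))), sum_CE_avg c A P,
        step_intS (fun v w => binEnt (P (c v) (c w))), div_add' _ _ _ (by positivity)]
      gcongr
      have : 1 / ((R:ℝ)+1) * Λ * (n:ℝ)^2 = ∑ v : Fin n, ∑ w : Fin n, 1 / ((R:ℝ)+1) * Λ := by
        simp; ring
      rw [this]
      simp_rw [← Finset.sum_add_distrib]
      refine Finset.sum_le_sum fun v _ => Finset.sum_le_sum fun w _ => ?_
      exact CE_le_ent (valR_lower R _) (valR_upper R _) (hrnd _ (hEm _ _))
    have j4 : Integrable (fun p : ℝ × ℝ => binEnt (P (c (idx n p.1)) (c (idx n p.2)))) mS :=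
      integrable_of_bdd (measurable_step (fun v w => binEnt (P (c v) (c w)))) 1 fun p => by
        rw [abs_of_nonneg (BEb _).1]; exact (BEb _).2
    have j5 : Integrable (fun p : ℝ × ℝ => binEnt (Ug M R g p.1 p.2)) mS :=
      integrable_of_bdd (measurable_binEnt.comp mU) 1 fun p => by
        have h := BEb (g (idx M p.1) (idx M p.2))
        change |binEnt (valR R _)| ≤ 1
        rw [abs_of_nonneg h.1]; exact h.2
    have s4 := int_diff_le j4 j5 (b := 0 + 2 * 1 * mI.real B1) (by
      apply int_abs_le _ B1 mB1 _ _ zero_le_one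
      · refine Eventually.of_forall fun p hx hy => ?_
        rw [eq1 _ _ hx hy]; simp
      · refine Eventually.of_forall fun p => ?_
        rw [zero_add]
        exact abs_sub_le_of_mem (BEb _).1 (BEb _).2 (BEb _).1 (BEb _).2)
    have t1 : 2 * Λ * mI.real B2 ≤ 2 * Λ * (M / n) := by gcongr
    have t2 : 2 * Λ * mI.real B1 ≤ 2 * Λ * (K / M) := by gcongr
    linarith

end GE

namespace GE

lemma params (l K : ℕ) (hl : 1 ≤ l) (ε : ℝ) (hε : 0 < ε) : ∃ M R : ℕ, 0 < M ∧ 0 < R ∧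
    1 / ((R:ℝ)+1) + 2 * K / M ≤ 2 / l ∧
    1 / ((R:ℝ)+1) * Real.logb 2 ((R:ℝ)+1) + 2 * Real.logb 2 ((R:ℝ)+1) * (K / M) + 2 * (K / M) ≤ ε / 4 := by
  have hl' : (0:ℝ) < l := by exact_mod_cast hl
  have t0 : Tendsto (fun R : ℕ => (R:ℝ) + 1) atTop atTop :=
    tendsto_atTop_add_const_right _ _ tendsto_natCast_atTop_atTop
  have t1 : Tendsto (fun R : ℕ => 1 / ((R:ℝ)+1)) atTop (nhds 0) := tendsto_one_div_add_atTop_nhds_zero_nat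
  have t2 : Tendsto (fun R : ℕ => 1 / ((R:ℝ)+1) * Real.logb 2 ((R:ℝ)+1)) atTop (nhds 0) := by
    have h : Tendsto (fun x : ℝ => Real.log x / x) atTop (nhds 0) :=
      (Real.isLittleO_log_id_atTop).tendsto_div_nhds_zero
    have := (h.comp t0).div_const (Real.log 2)
    rw [zero_div] at this
    refine this.congr fun R => ?_
    simp only [Function.comp, Real.logb]; ring
  obtain ⟨R, h1, h2, h3⟩ := ((t1.eventually (gt_mem_nhds (show (0:ℝ) < 1 / l by positivity))).and
    ((t2.eventually (gt_mem_nhds (show (0:ℝ) < ε / 8 by positivity))).and (eventually_gt_atTop 0))).exists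
  have u1 : Tendsto (fun M : ℕ => (K:ℝ) / M) atTop (nhds 0) := tendsto_const_div_atTop_nhds_zero_nat _
  have u2 : Tendsto (fun M : ℕ => 2 * Real.logb 2 ((R:ℝ)+1) * (K / M) + 2 * (K / M)) atTop (nhds 0) := by
    simpa using (u1.const_mul (2 * Real.logb 2 ((R:ℝ)+1))).add (u1.const_mul 2)
  obtain ⟨M, k1, k2, k3⟩ := ((u1.eventually (gt_mem_nhds (show (0:ℝ) < 1 / (2*l) by positivity))).and
    ((u2.eventually (gt_mem_nhds (show (0:ℝ) < ε / 8 by positivity))).and (eventually_gt_atTop 0))).exists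
  refine ⟨M, R, k3, h3, ?_, ?_⟩
  · have e : (2:ℝ) * K / M = 2 * (K / M) := by ring
    have e2 : (2:ℝ) / l = 1 / l + 2 * (1 / (2 * l)) := by field_simp; norm_num
    rw [e, e2]; linarith
  · linarith

lemma adjR_comap {n : ℕ} (G : SimpleGraph (Fin n)) (π : Equiv.Perm (Fin n)) :
    adjR (G.comap ⇑π) = fun v w => adjR G (π v) (π w) := by
  funext v w; rfl

lemma approx {n : ℕ} [NeZero n] (m : ℕ) (Mf Rf : ℕ → ℕ) [∀ l, NeZero (Mf l)] [∀ l, NeZero (Rf l)] (ε : ℝ)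
    (hcut : ∀ l, 1 ≤ l → 1 / ((Rf l:ℝ)+1) + 2 * ((4^(l^2):ℕ):ℝ) / Mf l ≤ 2 / l)
    (hent : ∀ l, 1 ≤ l → 1 / ((Rf l:ℝ)+1) * Real.logb 2 ((Rf l:ℝ)+1)
      + 2 * Real.logb 2 ((Rf l:ℝ)+1) * (((4^(l^2):ℕ):ℝ) / Mf l) + 2 * (((4^(l^2):ℕ):ℝ) / Mf l) ≤ ε / 4)
    (G : SimpleGraph (Fin n)) : ∃ π : Equiv.Perm (Fin n), ∀ l, 1 ≤ l → l ≤ m →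
      ∃ g : Fin (Mf l) → Fin (Mf l) → Fin (Rf l), (∀ s t, g s t = g t s) ∧
        CutLe (fun x y => graphonOfGraph (G.comap ⇑π) x y - Ug (Mf l) (Rf l) g x y) (3 / l) ∧
        ∑ v, ∑ w, CE (adjR (G.comap ⇑π) v w) (Ug (Mf l) (Rf l) g (rupv n v) (rupv n w)) ≤
          (n:ℝ)^2 * (∫ p, binEnt (Ug (Mf l) (Rf l) g p.1 p.2) ∂mS + ε / 4
            + 2 * Real.logb 2 ((Rf l:ℝ)+1) * (Mf l / n)) := by
  obtain ⟨π, hπ⟩ := reg_disc (adjR G) (adjR_mem G) m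
  refine ⟨π, fun l hl hlm => ?_⟩
  obtain ⟨c, hc, hcK, hd⟩ := hπ l hl hlm
  obtain ⟨g, h1, h2, h3⟩ := reg_cont (M := Mf l) (R := Rf l) (4^(l^2)) l (G.comap ⇑π) c hc hcK
    (by rw [adjR_comap]; exact hd)
  refine ⟨g, h1, ?_, ?_⟩
  · intro S T mS' mT hS hT
    refine (h2 S T mS' mT hS hT).trans ?_
    have := hcut l hl
    have e : (3:ℝ) / l = 1 / l + 2 / l := by ring
    rw [e]; linarith
  · refine h3.trans ?_
    refine mul_le_mul_of_nonneg_left ?_ (by positivity)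
    have := hent l hl
    linarith

lemma cnt {n M R : ℕ} [NeZero n] [NeZero M] (Qn : Set (SimpleGraph (Fin n))) (B : ℝ)
    (h : ∀ G ∈ Qn, ∃ π : Equiv.Perm (Fin n), ∃ g : Fin M → Fin M → Fin R, (∀ s t, g s t = g t s) ∧
      ∑ v, ∑ w, CE (adjR (G.comap ⇑π) v w) (Ug M R g (rupv n v) (rupv n w)) ≤ B) :
    (Nat.card Qn : ℝ) ≤ (n.factorial : ℝ) * (R:ℝ)^(M*M) * 2^(B/2) := by
  classical
  let I := Equiv.Perm (Fin n) × (Fin M → Fin M → Fin R)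
  let F : (Fin M → Fin M → Fin R) → Finset (SimpleGraph (Fin n)) := fun g =>
    if (∀ s t, g s t = g t s) then Finset.univ.filter (fun G : SimpleGraph (Fin n) =>
      ∑ v, ∑ w, CE (adjR G v w) (Ug M R g (rupv n v) (rupv n w)) ≤ B) else ∅
  have hF : ∀ g, ((F g).card : ℝ) ≤ 2^(B/2) := by
    intro g
    by_cases hg : ∀ s t, g s t = g t s
    · have := count (fun v w => Ug M R g (rupv n v) (rupv n w))
        (fun v w => by simp only [Ug]; rw [hg]) (fun v w => valR_mem R _) B
      simp only [F, if_pos hg]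
      convert this using 3
    · simp only [F, if_neg hg]; simp; positivity
  let FF : I → Finset (SimpleGraph (Fin n)) := fun i => (F i.2).image (fun G => G.comap ⇑i.1.symm)
  have hsub : Qn.toFinset ⊆ Finset.univ.biUnion FF := by
    intro G hG
    obtain ⟨π, g, hg, hs⟩ := h G (by simpa using hG)
    simp only [Finset.mem_biUnion, Finset.mem_univ, true_and]
    refine ⟨(π, g), Finset.mem_image.mpr ⟨G.comap ⇑π, ?_, ?_⟩⟩
    · simp only [F, if_pos hg]; simpa using hs
    · ext a b; simp
  have h1 : Nat.card Qn ≤ ∑ i : I, (FF i).card := by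
    rw [Nat.card_eq_fintype_card, ← Set.toFinset_card]
    exact (Finset.card_le_card hsub).trans Finset.card_biUnion_le
  have h2 : (Nat.card Qn : ℝ) ≤ ∑ i : I, ((FF i).card : ℝ) := by exact_mod_cast h1
  refine h2.trans ?_
  have h3 : ∑ i : I, ((FF i).card : ℝ) ≤ ∑ i : I, (2:ℝ)^(B/2) :=
    Finset.sum_le_sum fun i _ => le_trans (by exact_mod_cast Finset.card_image_le) (hF i.2)
  refine h3.trans (le_of_eq ?_)
  rw [Finset.sum_const, Finset.card_univ, nsmul_eq_mul]
  congr 1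
  simp only [I, Fintype.card_prod, Fintype.card_perm, Fintype.card_fin, Fintype.card_pi, Finset.prod_const,
    Finset.card_univ]
  push_cast
  rw [← pow_mul]

lemma asym (s ε D C : ℝ) (hε : 0 < ε) (hC : 1 ≤ C) :
    ∃ N : ℕ, ∀ n ≥ N, (n.factorial : ℝ) * C * 2^(((n:ℝ)^2 * (s + 3/4*ε + D / n))/2)
      ≤ 2^((s + ε) * choose2 n) := by
  have t2 : Tendsto (fun n : ℕ => Real.logb 2 n / n) atTop (nhds 0) := by
    have h : Tendsto (fun x : ℝ => Real.log x / x) atTop (nhds 0) :=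
      (Real.isLittleO_log_id_atTop).tendsto_div_nhds_zero
    have := (h.comp tendsto_natCast_atTop_atTop (α := ℕ)).div_const (Real.log 2)
    rw [zero_div] at this
    refine this.congr fun R => ?_
    simp only [Function.comp, Real.logb]; ring
  have t3 : Tendsto (fun n : ℕ => (Real.logb 2 C + D/2 + (s+ε)/2) / (n:ℝ)) atTop (nhds 0) :=
    tendsto_const_div_atTop_nhds_zero_nat _
  obtain ⟨N, hN⟩ := eventually_atTop.mp
    ((t2.eventually (gt_mem_nhds (show (0:ℝ) < ε / 16 by positivity))).and
    ((t3.eventually (gt_mem_nhds (show (0:ℝ) < ε / 16 by positivity))).and (eventually_ge_atTop 1)))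
  refine ⟨N, fun n hn => ?_⟩
  obtain ⟨h1, h2, h3⟩ := hN n hn
  have hn1 : (1:ℝ) ≤ n := by exact_mod_cast h3
  have hn0 : (0:ℝ) < n := by linarith
  rw [div_lt_iff₀ hn0] at h1 h2
  have hC0 : 0 < C := by linarith
  have hlC : 0 ≤ Real.logb 2 C := Real.logb_nonneg (by norm_num) hC
  have hf : (n.factorial : ℝ) ≤ 2^(n * Real.logb 2 n) := by
    rw [mul_comm, Real.rpow_mul (by norm_num), Real.rpow_logb (by norm_num) (by norm_num) hn0, Real.rpow_natCast]
    exact_mod_cast Nat.factorial_le_pow n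
  calc (n.factorial : ℝ) * C * 2^(((n:ℝ)^2 * (s + 3/4*ε + D / n))/2)
      ≤ 2^(n * Real.logb 2 n) * 2^(Real.logb 2 C) * 2^(((n:ℝ)^2 * (s + 3/4*ε + D / n))/2) := by
        rw [Real.rpow_logb (by norm_num) (by norm_num) hC0]; gcongr
    _ = 2^(n * Real.logb 2 n + Real.logb 2 C + ((n:ℝ)^2 * (s + 3/4*ε + D / n))/2) := by
        rw [Real.rpow_add (by norm_num), Real.rpow_add (by norm_num)]
    _ ≤ _ := by
        apply Real.rpow_le_rpow_of_exponent_le (by norm_num)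
        have e : (n:ℝ)^2 * (s + 3/4*ε + D / n) = n^2 * (s + 3/4*ε) + D * n := by field_simp
        rw [e]; unfold choose2
        nlinarith [mul_le_mul_of_nonneg_left h1.le hn0.le, mul_le_mul_of_nonneg_left h2.le hn0.le,
          mul_nonneg hlC (sub_nonneg.mpr hn1)]

/-- For each `m`, a good graph. -/
lemma good (Q : GraphClass) (hQ : IsGraphClass Q) (s ε : ℝ) (hε : 0 < ε)
    (hbig : ∀ N : ℕ, ∃ n ≥ N, (2:ℝ) ^ ((s + ε) * choose2 n) < (Nat.card ↥(Q n) : ℝ))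
    (Mf Rf : ℕ → ℕ) [∀ l, NeZero (Mf l)] [∀ l, NeZero (Rf l)]
    (hcut : ∀ l, 1 ≤ l → 1 / ((Rf l:ℝ)+1) + 2 * ((4^(l^2):ℕ):ℝ) / Mf l ≤ 2 / l)
    (hent : ∀ l, 1 ≤ l → 1 / ((Rf l:ℝ)+1) * Real.logb 2 ((Rf l:ℝ)+1)
      + 2 * Real.logb 2 ((Rf l:ℝ)+1) * (((4^(l^2):ℕ):ℝ) / Mf l) + 2 * (((4^(l^2):ℕ):ℝ) / Mf l) ≤ ε / 4)
    (m : ℕ) (hm : 1 ≤ m) :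
    ∃ n, m ≤ n ∧ ∃ G ∈ Q n, ∃ g : ∀ l, Fin (Mf l) → Fin (Mf l) → Fin (Rf l),
      (∀ l, 1 ≤ l → l ≤ m → (∀ s t, g l s t = g l t s) ∧
        CutLe (fun x y => graphonOfGraph G x y - Ug (Mf l) (Rf l) (g l) x y) (3 / l)) ∧
      s + ε / 2 ≤ ∫ p, binEnt (Ug (Mf m) (Rf m) (g m) p.1 p.2) ∂mS := by
  set Λ := Real.logb 2 ((Rf m:ℝ)+1)
  obtain ⟨N, hN⟩ := asym s ε (2 * Λ * Mf m) ((Rf m:ℝ)^(Mf m * Mf m)) hε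
    (one_le_pow₀ (by exact_mod_cast NeZero.pos (Rf m)))
  obtain ⟨n, hn, hb⟩ := hbig (N + m)
  have : NeZero n := ⟨by omega⟩
  refine ⟨n, by omega, ?_⟩
  by_contra hcon
  push Not at hcon
  apply absurd hb
  rw [not_lt]
  refine le_trans (cnt (M := Mf m) (R := Rf m) (Q n) ((n:ℝ)^2 * (s + 3/4*ε + 2 * Λ * Mf m / n)) ?_)
    (hN n (by omega))
  intro G hG
  obtain ⟨π, hπ⟩ := approx m Mf Rf ε hcut hent G
  have hg' : ∀ l, ∃ g : Fin (Mf l) → Fin (Mf l) → Fin (Rf l), 1 ≤ l → l ≤ m → (∀ s t, g s t = g t s) ∧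
        CutLe (fun x y => graphonOfGraph (G.comap ⇑π) x y - Ug (Mf l) (Rf l) g x y) (3 / l) ∧
        ∑ v, ∑ w, CE (adjR (G.comap ⇑π) v w) (Ug (Mf l) (Rf l) g (rupv n v) (rupv n w)) ≤
          (n:ℝ)^2 * (∫ p, binEnt (Ug (Mf l) (Rf l) g p.1 p.2) ∂mS + ε / 4
            + 2 * Real.logb 2 ((Rf l:ℝ)+1) * (Mf l / n)) := by
    intro l
    by_cases h : 1 ≤ l ∧ l ≤ m
    · obtain ⟨g, hg⟩ := hπ l h.1 h.2
      exact ⟨g, fun _ _ => hg⟩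
    · exact ⟨fun _ _ => 0, fun a b => absurd ⟨a, b⟩ h⟩
  choose g hg using hg'
  have h1 := hcon (G.comap ⇑π) (hQ n π G hG) g (fun l a b => ⟨(hg l a b).1, (hg l a b).2.1⟩)
  obtain ⟨a1, _, a3⟩ := hg m hm le_rfl
  refine ⟨π, g m, a1, a3.trans ?_⟩
  refine mul_le_mul_of_nonneg_left ?_ (by positivity)
  have : 2 * Λ * (Mf m : ℝ) / n = 2 * Λ * (Mf m / n) := by ring
  rw [this]
  linarith

end GE

namespace GE

instance : IsProbabilityMeasure mS := by unfold mS; infer_instance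

lemma memLp_bdd {f : ℝ × ℝ → ℝ} (hf : Measurable f) (C : ℝ) (h : ∀ p, |f p| ≤ C) : MemLp f 2 mS :=
  MemLp.of_bound hf.aestronglyMeasurable C (Eventually.of_forall h)

lemma weak_lim0 (𝒰 : Ultrafilter ℕ) (U : ℕ → ℝ × ℝ → ℝ) (hm : ∀ m, Measurable (U m))
    (hb : ∀ m p, U m p ∈ Set.Icc (0:ℝ) 1) : ∃ W : ℝ × ℝ → ℝ, Measurable W ∧
      ∀ (f : ℝ × ℝ → ℝ) (C : ℝ), Measurable f → (∀ p, |f p| ≤ C) →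
        Integrable (fun p => f p * W p) mS ∧
        Tendsto (fun m => ∫ p, f p * U m p ∂mS) 𝒰 (nhds (∫ p, f p * W p ∂mS)) := by
  let H := Lp ℝ 2 mS
  have hbb : ∀ m p, |U m p| ≤ 1 := fun m p => abs_le.mpr ⟨by linarith [(hb m p).1], (hb m p).2⟩
  let u : ℕ → H := fun m => (memLp_bdd (hm m) 1 (hbb m)).toLp (U m)
  have hu : ∀ m, ‖u m‖ ≤ 1 := by
    intro m
    have h0 : ∀ᵐ p ∂mS, ‖u m p‖ ≤ 1 := by
      filter_upwards [(memLp_bdd (hm m) 1 (hbb m)).coeFn_toLp] with p hp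
      rw [hp]; exact hbb m p
    have := Lp.norm_le_of_ae_bound (p := 2) zero_le_one h0
    rw [show measureUnivNNReal mS = 1 by simp [measureUnivNNReal]] at this
    simpa using this
  let T : ℕ → WeakDual ℝ H := fun m => StrongDual.toWeakDual (InnerProductSpace.toDual ℝ H (u m))
  have hK := WeakDual.isCompact_closedBall (0 : StrongDual ℝ H) 1
  obtain ⟨x, -, hx⟩ := hK.ultrafilter_le_nhds (𝒰.map T) (by
    rw [le_principal_iff]
    refine Filter.mem_map.mpr (Filter.univ_mem' fun m => ?_)
    change (InnerProductSpace.toDual ℝ H (u m)) ∈ Metric.closedBall 0 1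
    rw [mem_closedBall_zero_iff, LinearIsometryEquiv.norm_map]
    exact hu m)
  let W0 : H := (InnerProductSpace.toDual ℝ H).symm (WeakDual.toStrongDual x)
  refine ⟨W0, (Lp.stronglyMeasurable W0).measurable, fun f C hf hC => ?_⟩
  have hfL := memLp_bdd hf C hC
  have hev : Tendsto (fun m => T m (hfL.toLp f)) 𝒰 (nhds (x (hfL.toLp f))) := by
    have : Tendsto T 𝒰 (nhds x) := hx
    exact ((WeakDual.eval_continuous (hfL.toLp f)).tendsto x).comp this
  have e1 : ∀ m, T m (hfL.toLp f) = ∫ p, f p * U m p ∂mS := by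
    intro m
    change inner ℝ (u m) (hfL.toLp f) = _
    rw [L2.inner_def]
    apply integral_congr_ae
    filter_upwards [(memLp_bdd (hm m) 1 (hbb m)).coeFn_toLp, hfL.coeFn_toLp] with p h1 h2
    rw [h1, h2]; simp
  have e2 : x (hfL.toLp f) = ∫ p, f p * W0 p ∂mS := by
    have : x (hfL.toLp f) = inner ℝ W0 (hfL.toLp f) := by
      rw [InnerProductSpace.toDual_symm_apply]; rfl
    rw [this, L2.inner_def]
    apply integral_congr_ae
    filter_upwards [hfL.coeFn_toLp] with p h2
    rw [h2]; simp
  refine ⟨?_, ?_⟩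
  · exact hfL.integrable_mul (Lp.memLp W0)
  · rw [← e2]; simpa only [e1] using hev

lemma weak_lim (𝒰 : Ultrafilter ℕ) (U : ℕ → ℝ → ℝ → ℝ)
    (hm : ∀ m, Measurable (fun p : ℝ × ℝ => U m p.1 p.2))
    (hb : ∀ m x y, U m x y ∈ Set.Icc (0:ℝ) 1) (hs : ∀ᶠ m in (𝒰 : Filter ℕ), ∀ x y, U m x y = U m y x) :
    ∃ W : ℝ → ℝ → ℝ, IsGraphon W ∧
      ∀ (f : ℝ × ℝ → ℝ) (C : ℝ), Measurable f → (∀ p, |f p| ≤ C) →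
        Tendsto (fun m => ∫ p, f p * U m p.1 p.2 ∂mS) 𝒰 (nhds (∫ p, f p * W p.1 p.2 ∂mS)) := by
  obtain ⟨W0, mW, hW⟩ := weak_lim0 𝒰 (fun m p => U m p.1 p.2) hm (fun m p => hb m _ _)
  have ind : ∀ (A : Set (ℝ × ℝ)), MeasurableSet A → Integrable W0 mS ∧
      Tendsto (fun m => ∫ p in A, U m p.1 p.2 ∂mS) 𝒰 (nhds (∫ p in A, W0 p ∂mS)) := by
    intro A hA
    obtain ⟨-, h2⟩ := hW (A.indicator 1) 1 (measurable_one.indicator hA) (fun p => by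
      by_cases h : p ∈ A <;> simp [h])
    obtain ⟨h1, -⟩ := hW 1 1 measurable_one (fun p => by simp)
    refine ⟨by simpa using h1, ?_⟩
    have e : ∀ g : ℝ × ℝ → ℝ, ∫ p, A.indicator 1 p * g p ∂mS = ∫ p in A, g p ∂mS := by
      intro g
      rw [← integral_indicator hA]
      congr 1; funext p
      by_cases h : p ∈ A <;> simp [h]
    simpa only [e] using h2
  have iU : ∀ m, Integrable (fun p : ℝ × ℝ => U m p.1 p.2) mS := fun m =>
    integrable_of_bdd (hm m) 1 fun p => abs_le.mpr ⟨by linarith [(hb m p.1 p.2).1], (hb m _ _).2⟩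
  have iW : Integrable W0 mS := (ind univ MeasurableSet.univ).1
  have p0 : 0 ≤ᵐ[mS] W0 := by
    refine ae_nonneg_of_forall_setIntegral_nonneg iW fun A hA _ => ?_
    refine ge_of_tendsto (ind A hA).2 (Eventually.of_forall fun m => ?_)
    exact integral_nonneg fun p => (hb m _ _).1
  have p1 : 0 ≤ᵐ[mS] fun p => 1 - W0 p := by
    refine ae_nonneg_of_forall_setIntegral_nonneg ((integrable_const 1).sub iW) fun A hA _ => ?_
    rw [integral_sub (integrable_const 1).integrableOn iW.integrableOn, sub_nonneg]
    refine le_of_tendsto (ind A hA).2 (Eventually.of_forall fun m => ?_)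
    exact integral_mono (iU m).integrableOn (integrable_const 1).integrableOn fun p => (hb m _ _).2
  let W1 : ℝ × ℝ → ℝ := fun p => max 0 (min 1 (W0 p))
  have mW1 : Measurable W1 := measurable_const.max (measurable_const.min mW)
  have hW1 : ∀ p, W1 p ∈ Set.Icc (0:ℝ) 1 := fun p =>
    ⟨le_max_left _ _, max_le zero_le_one (min_le_left _ _)⟩
  have eW : W0 =ᵐ[mS] W1 := by
    filter_upwards [p0, p1] with p h0 h1
    have h0' : 0 ≤ W0 p := h0
    have h1' : 0 ≤ 1 - W0 p := h1
    simp only [W1]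
    rw [min_eq_right (by linarith), max_eq_right h0']
  have lim1 : ∀ (f : ℝ × ℝ → ℝ) (C : ℝ), Measurable f → (∀ p, |f p| ≤ C) →
        Tendsto (fun m => ∫ p, f p * U m p.1 p.2 ∂mS) 𝒰 (nhds (∫ p, f p * W1 p ∂mS)) := by
    intro f C hf hC
    have := (hW f C hf hC).2
    rwa [integral_congr_ae (g := fun p => f p * W1 p)] at this
    filter_upwards [eW] with p hp
    rw [hp]
  have lim2 : ∀ (f : ℝ × ℝ → ℝ) (C : ℝ), Measurable f → (∀ p, |f p| ≤ C) →
        Tendsto (fun m => ∫ p, f p * U m p.1 p.2 ∂mS) 𝒰 (nhds (∫ p, f p * W1 p.swap ∂mS)) := by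
    intro f C hf hC
    have := lim1 (fun p => f p.swap) C (hf.comp measurable_swap) (fun p => hC _)
    have e1 : ∫ p, f p.swap * W1 p ∂mS = ∫ p, f p * W1 p.swap ∂mS := by
      unfold mS
      rw [← integral_prod_swap]; simp
    rw [e1] at this
    refine this.congr' ?_
    filter_upwards [hs] with m hsm
    unfold mS
    rw [← integral_prod_swap]
    congr 1; funext p
    simp only [Prod.swap_swap, Prod.fst_swap, Prod.snd_swap]
    rw [hsm]
  refine ⟨fun x y => (W1 (x, y) + W1 (y, x)) / 2, ⟨fun x y => by simp only [add_comm], ?_, fun x y => ?_⟩, ?_⟩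
  · change Measurable fun p : ℝ × ℝ => (W1 (p.1, p.2) + W1 (p.2, p.1)) / 2
    exact ((mW1.comp (measurable_fst.prodMk measurable_snd)).add
      (mW1.comp (measurable_snd.prodMk measurable_fst))).div_const 2
  · have := hW1 (x, y); have := hW1 (y, x)
    simp only [Set.mem_Icc] at *
    constructor <;> linarith
  · intro f C hf hC
    have := ((lim1 f C hf hC).add (lim2 f C hf hC)).div_const 2
    have bd : ∀ p q, |f p * W1 q| ≤ C := fun p q => by
      rw [abs_mul, abs_of_nonneg (hW1 q).1]
      exact (mul_le_of_le_one_right (abs_nonneg _) (hW1 q).2).trans (hC p)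
    have i1 : Integrable (fun p => f p * W1 p) mS := integrable_of_bdd (hf.mul mW1) C fun p => bd _ _
    have i2 : Integrable (fun p => f p * W1 p.swap) mS :=
      integrable_of_bdd (hf.mul (mW1.comp measurable_swap)) C fun p => bd _ _
    rw [← integral_add i1 i2, ← integral_div] at this
    convert this using 2
    · ring
    · congr 1; funext p
      change _ = (f p * W1 (p.1, p.2) + f p * W1 (p.2, p.1)) / 2
      ring
end GE

namespace GE

lemma graphon_int {W : ℝ → ℝ → ℝ} (hW : IsGraphon W) : Integrable (fun p : ℝ × ℝ => W p.1 p.2) mS :=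
  integrable_of_bdd hW.2.1 1 fun p =>
    abs_le.mpr ⟨by linarith [(hW.2.2 p.1 p.2).1], (hW.2.2 p.1 p.2).2⟩

lemma binEnt_int {W : ℝ → ℝ → ℝ} (hm : Measurable (fun p : ℝ × ℝ => W p.1 p.2))
    (hb : ∀ x y, W x y ∈ Set.Icc (0:ℝ) 1) : Integrable (fun p : ℝ × ℝ => binEnt (W p.1 p.2)) mS :=
  integrable_of_bdd (measurable_binEnt.comp hm) 1 fun p => by
    have := binEnt_mem (hb p.1 p.2)
    exact abs_le.mpr ⟨by linarith [this.1], this.2⟩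

lemma graphonEnt_eq {W : ℝ → ℝ → ℝ} (hW : IsGraphon W) :
    graphonEnt W = ∫ p, binEnt (W p.1 p.2) ∂mS := by
  unfold mS
  rw [integral_prod _ (binEnt_int hW.2.1 hW.2.2)]
  rfl

lemma graphonEnt_le {W : ℝ → ℝ → ℝ} (hW : IsGraphon W) : graphonEnt W ≤ 1 := by
  rw [graphonEnt_eq hW]
  calc _ ≤ ∫ p : ℝ × ℝ, (1:ℝ) ∂mS := integral_mono (binEnt_int hW.2.1 hW.2.2) (integrable_const _)
        fun p => (binEnt_mem (hW.2.2 p.1 p.2)).2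
    _ = 1 := by simp

lemma ent_limit (𝒰 : Ultrafilter ℕ) (U : ℕ → ℝ → ℝ → ℝ)
    (hm : ∀ m, Measurable (fun p : ℝ × ℝ => U m p.1 p.2))
    (hb : ∀ m x y, U m x y ∈ Set.Icc (0:ℝ) 1) (W : ℝ → ℝ → ℝ) (hW : IsGraphon W)
    (hlim : ∀ (f : ℝ × ℝ → ℝ) (C : ℝ), Measurable f → (∀ p, |f p| ≤ C) →
        Tendsto (fun m => ∫ p, f p * U m p.1 p.2 ∂mS) 𝒰 (nhds (∫ p, f p * W p.1 p.2 ∂mS)))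
    (c : ℝ) (hc : ∀ m, c ≤ ∫ p, binEnt (U m p.1 p.2) ∂mS) : c ≤ ∫ p, binEnt (W p.1 p.2) ∂mS := by
  have key : ∀ R : ℕ, 2 ≤ R →
      c ≤ ∫ p, binEnt (W p.1 p.2) ∂mS - Real.logb 2 (1 - 2 * (1 / ((R:ℝ)+1))) := by
    intro R hR
    have hR' : (2:ℝ) ≤ R := by exact_mod_cast hR
    set r := 1 / ((R:ℝ)+1) with hr
    have r0 : 0 < r := by positivity
    have r1 : 2 * r < 1 := by
      rw [hr, mul_one_div, div_lt_one (by positivity)]; linarith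
    let a : ℝ × ℝ → ℝ := fun p => (1 - 2*r) * W p.1 p.2 + (2*r)/2
    have ma : Measurable a := (hW.2.1.const_mul _).add_const _
    have a1 : ∀ p, r ≤ a p := fun p => by
      have := hW.2.2 p.1 p.2; simp only [a]; nlinarith [this.1]
    have a2 : ∀ p, r ≤ 1 - a p := fun p => by
      have := hW.2.2 p.1 p.2; simp only [a]; nlinarith [this.2]
    let f : ℝ × ℝ → ℝ := fun p => Real.logb 2 (1 - a p) - Real.logb 2 (a p)
    let h : ℝ × ℝ → ℝ := fun p => Real.logb 2 (1 - a p)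
    have mh : Measurable h := by unfold h Real.logb; fun_prop
    have mf : Measurable f := by unfold f Real.logb; fun_prop
    have bh : ∀ p, |h p| ≤ Real.logb 2 (R+1) := fun p => by
      have e2 := logb_mem (a2 p) (by linarith [a1 p])
      rw [abs_le]; constructor
      · exact e2.1
      · have : (0:ℝ) ≤ Real.logb 2 (R+1) := Real.logb_nonneg (by norm_num) (by linarith)
        exact e2.2.trans this
    have bf : ∀ p, |f p| ≤ Real.logb 2 (R+1) := fun p => by
      have e1 := logb_mem (a1 p) (by linarith [a2 p])
      have e2 := logb_mem (a2 p) (by linarith [a1 p])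
      rw [abs_le]; constructor <;> simp only [f] <;> linarith [e1.1, e1.2, e2.1, e2.2]
    have eCE : ∀ x p, CE x (a p) = f p * x - h p := by
      intro x p; simp only [CE, f, h]; ring
    have ih : Integrable h mS := integrable_of_bdd mh _ bh
    have ifx : ∀ V : ℝ → ℝ → ℝ, Measurable (fun p : ℝ × ℝ => V p.1 p.2) →
        (∀ x y, V x y ∈ Set.Icc (0:ℝ) 1) → Integrable (fun p => f p * V p.1 p.2) mS := by
      intro V mV bV
      refine integrable_of_bdd (mf.mul mV) (Real.logb 2 (R+1)) fun p => ?_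
      rw [abs_mul, abs_of_nonneg (bV p.1 p.2).1]
      exact (mul_le_of_le_one_right (abs_nonneg _) (bV _ _).2).trans (bf p)
    have t1 : Tendsto (fun m => ∫ p, f p * U m p.1 p.2 ∂mS - ∫ p, h p ∂mS) 𝒰
        (nhds (∫ p, f p * W p.1 p.2 ∂mS - ∫ p, h p ∂mS)) :=
      (hlim f _ mf bf).sub_const _
    have t2 : c ≤ ∫ p, f p * W p.1 p.2 ∂mS - ∫ p, h p ∂mS := by
      refine ge_of_tendsto t1 (Eventually.of_forall fun m => (hc m).trans ?_)
      rw [← integral_sub (ifx _ (hm m) (hb m)) ih]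
      refine integral_mono (binEnt_int (hm m) (hb m)) ((ifx _ (hm m) (hb m)).sub ih) fun p => ?_
      change binEnt (U m p.1 p.2) ≤ f p * U m p.1 p.2 - h p
      rw [← eCE]
      exact gibbs (hb m _ _) ⟨by linarith [a1 p], by linarith [a2 p]⟩
    refine t2.trans ?_
    have e : ∫ p, binEnt (W p.1 p.2) ∂mS - Real.logb 2 (1 - 2*r)
        = ∫ p, (binEnt (W p.1 p.2) - Real.logb 2 (1 - 2*r)) ∂mS := by
      rw [integral_sub (binEnt_int hW.2.1 hW.2.2) (integrable_const _)]; simp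
    rw [e, ← integral_sub (ifx _ hW.2.1 hW.2.2) ih]
    refine integral_mono ((ifx _ hW.2.1 hW.2.2).sub ih)
      ((binEnt_int hW.2.1 hW.2.2).sub (integrable_const _)) fun p => ?_
    change f p * W p.1 p.2 - h p ≤ binEnt (W p.1 p.2) - Real.logb 2 (1 - 2*r)
    rw [← eCE]
    exact CE_shrink (by linarith) r1 (hW.2.2 _ _)
  have t : Tendsto (fun R : ℕ => ∫ p, binEnt (W p.1 p.2) ∂mS - Real.logb 2 (1 - 2 * (1 / ((R:ℝ)+1))))
      atTop (nhds (∫ p, binEnt (W p.1 p.2) ∂mS - Real.logb 2 (1 - 2 * 0))) := by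
    refine Tendsto.const_sub _ ?_
    have h1 : Tendsto (fun R : ℕ => 1 - 2 * (1 / ((R:ℝ)+1))) atTop (nhds (1 - 2 * 0)) :=
      (tendsto_one_div_add_atTop_nhds_zero_nat.const_mul 2).const_sub 1
    exact ((Real.continuousAt_log (by norm_num)).tendsto.comp h1).div_const _
  have := ge_of_tendsto t ((eventually_ge_atTop 2).mono key)
  simpa using this

lemma gog_int {n : ℕ} [NeZero n] (G : SimpleGraph (Fin n)) :
    Integrable (fun p : ℝ × ℝ => graphonOfGraph G p.1 p.2) mS := by
  have h : Integrable (fun p : ℝ × ℝ => adjR G (idx n p.1) (idx n p.2)) mS :=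
    integrable_of_bdd (measurable_step (adjR G)) 1 fun p => by
      have := adjR_mem G (idx n p.1) (idx n p.2)
      exact abs_le.mpr ⟨by linarith [this.1], this.2⟩
  refine h.congr ?_
  filter_upwards [ae_Ioc2] with p hp
  exact (graphonOfGraph_eq G hp.1 hp.2).symm

lemma cutLe_tri {U V W : ℝ → ℝ → ℝ} {a b : ℝ} (iU : Integrable (fun p : ℝ × ℝ => U p.1 p.2) mS)
    (iV : Integrable (fun p : ℝ × ℝ => V p.1 p.2) mS) (iW : Integrable (fun p : ℝ × ℝ => W p.1 p.2) mS)
    (h1 : CutLe (fun x y => U x y - V x y) a) (h2 : CutLe (fun x y => V x y - W x y) b) :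
    CutLe (fun x y => U x y - W x y) (a + b) := by
  have := cutLe_add (U := fun x y => U x y - V x y) (V := fun x y => V x y - W x y)
    (iU.sub iV) (iV.sub iW) h1 h2
  refine cutLe_congr (Eventually.of_forall fun p => ?_) this
  change U p.1 p.2 - V p.1 p.2 + (V p.1 p.2 - W p.1 p.2) = _
  ring

lemma cutLe_symm {U V : ℝ → ℝ → ℝ} {a : ℝ} (h : CutLe (fun x y => U x y - V x y) a) :
    CutLe (fun x y => V x y - U x y) a := by
  intro S T mS' mT hS hT
  have := h S T mS' mT hS hT
  rw [← abs_neg, ← integral_neg] at this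
  simpa only [neg_sub] using this

lemma cutLe_mono {U : ℝ → ℝ → ℝ} {a b : ℝ} (h : CutLe U a) (hab : a ≤ b) : CutLe U b :=
  fun S T mS' mT hS hT => (h S T mS' mT hS hT).trans hab

lemma cutNorm_nonneg (U : ℝ → ℝ → ℝ) : 0 ≤ cutNorm U := by
  apply Real.sSup_nonneg
  rintro r ⟨S, T, -, -, -, -, rfl⟩
  exact abs_nonneg _

lemma deltaCut_nonneg (U V : ℝ → ℝ → ℝ) : 0 ≤ deltaCut U V := by
  apply Real.sInf_nonneg
  rintro r ⟨_, _, -, -, rfl⟩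
  exact cutNorm_nonneg _

lemma deltaCut_le {U V : ℝ → ℝ → ℝ} {c : ℝ} (hc : 0 ≤ c) (h : CutLe (fun x y => U x y - V x y) c) :
    deltaCut U V ≤ c := by
  have hid : IsMPSelf id := ⟨MeasurePreserving.id _, fun x hx => hx⟩
  refine le_trans (csInf_le ⟨0, ?_⟩ ⟨id, id, hid, hid, rfl⟩) ?_
  · rintro r ⟨_, _, -, -, rfl⟩
    exact cutNorm_nonneg _
  · apply Real.sSup_le _ hc
    rintro r ⟨S, T, mS', mT, hS, hT, rfl⟩
    exact h S T mS' mT hS hT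

lemma cutLe_lim (𝒰 : Ultrafilter ℕ) (U : ℕ → ℝ → ℝ → ℝ)
    (hi : ∀ m, Integrable (fun p : ℝ × ℝ => U m p.1 p.2) mS) (W : ℝ → ℝ → ℝ) (hW : IsGraphon W)
    (hlim : ∀ (f : ℝ × ℝ → ℝ) (C : ℝ), Measurable f → (∀ p, |f p| ≤ C) →
        Tendsto (fun m => ∫ p, f p * U m p.1 p.2 ∂mS) 𝒰 (nhds (∫ p, f p * W p.1 p.2 ∂mS)))
    (V : ℝ → ℝ → ℝ) (iV : Integrable (fun p : ℝ × ℝ => V p.1 p.2) mS) (c : ℝ)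
    (h : ∀ᶠ m in (𝒰 : Filter ℕ), CutLe (fun x y => V x y - U m x y) c) :
    CutLe (fun x y => V x y - W x y) c := by
  intro S T mS' mT hS hT
  have hA := mS'.prod mT
  have e : ∀ g : ℝ × ℝ → ℝ, ∫ p, (S ×ˢ T).indicator 1 p * g p ∂mS = ∫ p in S ×ˢ T, g p ∂mS := by
    intro g
    rw [← integral_indicator hA]
    congr 1; funext p
    by_cases h : p ∈ S ×ˢ T
    · rw [indicator_of_mem h, indicator_of_mem h]; simp
    · rw [indicator_of_notMem h, indicator_of_notMem h]; simp
  have t := hlim ((S ×ˢ T).indicator 1) 1 (measurable_one.indicator hA) (fun p => by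
    by_cases h : p ∈ S ×ˢ T
    · rw [indicator_of_mem h]; simp
    · rw [indicator_of_notMem h]; simp)
  simp only [e] at t
  have t2 := (t.const_sub (∫ p in S ×ˢ T, V p.1 p.2 ∂mS)).abs
  rw [restrict_ST hS hT, integral_sub iV.integrableOn (graphon_int hW).integrableOn]
  refine le_of_tendsto t2 (h.mono fun m hm => ?_)
  have := hm S T mS' mT hS hT
  rwa [restrict_ST hS hT, integral_sub iV.integrableOn (hi m).integrableOn] at this

theorem main (Q : GraphClass) (hQ : IsGraphClass Q) :
    ∀ ε : ℝ, 0 < ε → ∃ N : ℕ, ∀ n ≥ N,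
      (Nat.card ↥(Q n) : ℝ) ≤
        (2 : ℝ) ^ ((sSup (graphonEnt '' limitSet Q) + ε) * choose2 n) := by
  intro ε hε
  by_contra hcon
  push Not at hcon
  set s := sSup (graphonEnt '' limitSet Q) with hs
  have hpar : ∀ l : ℕ, ∃ M R : ℕ, 0 < M ∧ 0 < R ∧ (1 ≤ l →
    1 / ((R:ℝ)+1) + 2 * ((4^(l^2):ℕ):ℝ) / M ≤ 2 / l ∧
    1 / ((R:ℝ)+1) * Real.logb 2 ((R:ℝ)+1) + 2 * Real.logb 2 ((R:ℝ)+1) * (((4^(l^2):ℕ):ℝ) / M)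
      + 2 * (((4^(l^2):ℕ):ℝ) / M) ≤ ε / 4) := by
    intro l
    by_cases hl : 1 ≤ l
    · obtain ⟨M, R, h1, h2, h3, h4⟩ := params l (4^(l^2)) hl ε hε
      exact ⟨M, R, h1, h2, fun _ => ⟨h3, h4⟩⟩
    · exact ⟨1, 1, one_pos, one_pos, fun h => absurd h hl⟩
  choose Mf Rf hM hR hp using hpar
  haveI : ∀ l, NeZero (Mf l) := fun l => ⟨(hM l).ne'⟩
  haveI : ∀ l, NeZero (Rf l) := fun l => ⟨(hR l).ne'⟩
  have hgood := fun k : ℕ => good Q hQ s ε hε hcon Mf Rf (fun l hl => (hp l hl).1)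
    (fun l hl => (hp l hl).2) (k+1) (by omega)
  choose nk hnk Gk hGk gk hgk hek using hgood
  haveI : ∀ k, NeZero (nk k) := fun k => ⟨by have := hnk k; omega⟩
  let 𝒰 : Ultrafilter ℕ := hyperfilter ℕ
  have h𝒰 : (𝒰 : Filter ℕ) ≤ atTop := Nat.hyperfilter_le_atTop
  have bU : ∀ (l : ℕ) (g : Fin (Mf l) → Fin (Mf l) → Fin (Rf l)) x y,
      Ug (Mf l) (Rf l) g x y ∈ Set.Icc (0:ℝ) 1 := fun l g x y =>
    ⟨(valR_mem _ _).1.le, (valR_mem _ _).2.le⟩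
  have iUg : ∀ (l : ℕ) (g : Fin (Mf l) → Fin (Mf l) → Fin (Rf l)),
      Integrable (fun p : ℝ × ℝ => Ug (Mf l) (Rf l) g p.1 p.2) mS := fun l g =>
    integrable_of_bdd (measurable_Ug _ _ g) 1 fun p =>
      abs_le.mpr ⟨by linarith [(bU l g p.1 p.2).1], (bU l g p.1 p.2).2⟩
  let U : ℕ → ℝ → ℝ → ℝ := fun k => Ug (Mf (k+1)) (Rf (k+1)) (gk k (k+1))
  have mU : ∀ k, Measurable (fun p : ℝ × ℝ => U k p.1 p.2) := fun k => measurable_Ug _ _ _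
  obtain ⟨W, hW, hlim⟩ := weak_lim 𝒰 U mU (fun k => bU _ _) (Eventually.of_forall fun k x y => by
    simp only [U, Ug]; rw [(hgk k (k+1) (by omega) le_rfl).1])
  -- stabilisation
  have hstab : ∀ l, ∃ g : Fin (Mf l) → Fin (Mf l) → Fin (Rf l), ∀ᶠ k in (𝒰 : Filter ℕ), gk k l = g := by
    intro l
    obtain ⟨g, hg⟩ := Ultrafilter.eq_pure_of_finite (𝒰.map (fun k => gk k l))
    refine ⟨g, ?_⟩
    have : ({g} : Set _) ∈ 𝒰.map (fun k => gk k l) := by rw [hg]; exact rfl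
    exact this
  choose gl hgl using hstab
  have cutW : ∀ l, 1 ≤ l → CutLe (fun x y => Ug (Mf l) (Rf l) (gl l) x y - W x y) (6 / l) := by
    intro l hl
    have hl0 : (0:ℝ) < l := by exact_mod_cast hl
    refine cutLe_lim 𝒰 U (fun k => iUg _ _) W hW hlim _ (iUg _ _) _ ?_
    filter_upwards [hgl l, h𝒰 (eventually_ge_atTop l)] with k hk hkl
    rw [← hk]
    have h1 := (hgk k l hl (by omega)).2
    have h2 := (hgk k (k+1) (by omega) le_rfl).2
    refine cutLe_mono (cutLe_tri (iUg _ _) (gog_int (Gk k)) (iUg _ _) (cutLe_symm h1) h2) ?_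
    have : (3:ℝ) / ((k+1:ℕ):ℝ) ≤ 3 / l := by
      gcongr; omega
    have e : (6:ℝ) / l = 3 / l + 3 / l := by ring
    rw [e]; linarith
  have hdel : ∀ l : ℕ, ∃ k, l ≤ k ∧ deltaCut (graphonOfGraph (Gk k)) W ≤ 9 * (1 / ((l:ℝ)+1)) := by
    intro l
    obtain ⟨k, hk, hkl⟩ := ((hgl (l+1)).and (h𝒰 (eventually_ge_atTop (l+1)))).exists
    refine ⟨k, by omega, deltaCut_le (by positivity) ?_⟩
    have h1 := (hgk k (l+1) (by omega) (by omega)).2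
    rw [hk] at h1
    refine cutLe_mono (cutLe_tri (gog_int (Gk k)) (iUg _ _) (graphon_int hW) h1 (cutW (l+1) (by omega))) ?_
    push_cast
    apply le_of_eq; ring
  choose kl hkl hdl using hdel
  have hmem : W ∈ limitSet Q := by
    refine ⟨hW, fun l => nk (kl l), fun l => Gk (kl l), fun l => hGk _, ?_, ?_⟩
    · refine tendsto_atTop_mono (fun l => ?_) tendsto_id
      have := hnk (kl l); have := hkl l
      simp only [id]; omega
    · refine squeeze_zero (fun l => deltaCut_nonneg _ _) hdl ?_
      simpa using tendsto_one_div_add_atTop_nhds_zero_nat.const_mul (9:ℝ)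
  have hent := ent_limit 𝒰 U mU (fun k => bU _ _) W hW hlim (s + ε/2) hek
  rw [← graphonEnt_eq hW] at hent
  have hle : graphonEnt W ≤ s := by
    refine le_csSup ⟨1, ?_⟩ ⟨W, hmem, rfl⟩
    rintro _ ⟨V, hV, rfl⟩
    exact graphonEnt_le hV.1
  linarith

end GE

/-- Theorem 1.1: for any graph class `Q`,
`limsup_n log₂|Q_n| / C(n,2) ≤ sup_{W ∈ Q̂} Ent(W)`; equivalently, for every `ε > 0` and
all sufficiently large `n`, `|Q_n| ≤ 2^{(s+ε) C(n,2)}`. -/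
theorem stmt9 (Q : GraphClass) (hQ : IsGraphClass Q) (hne : (limitSet Q).Nonempty) :
    ∀ ε : ℝ, 0 < ε → ∃ N : ℕ, ∀ n ≥ N,
      (Nat.card ↥(Q n) : ℝ) ≤
        (2 : ℝ) ^ ((sSup (graphonEnt '' limitSet Q) + ε) * choose2 n) := by
  exact GE.main Q hQ

end
end

section
/- If Q is a random-free graph class, then for every ε > 0 there exists N such that for all n ≥ N, |Q_n| ≤ 2^{ε·n²}, where |Q_n| is the number of labelled graphs on {1,…,n} in Q. -/
open MeasureTheory Set Filter

noncomputable section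

/-- Lebesgue measure on the unit interval. -/
abbrev muI : Measure ℝ := volume.restrict (Set.Icc (0:ℝ) 1)

/-- Lebesgue measure on the unit square. -/
abbrev PI2 : Measure (ℝ × ℝ) := muI.prod muI

instance muI_prob : IsProbabilityMeasure muI := ⟨by simp [muI]⟩

theorem PI2_eq : PI2 = volume.restrict (Set.Icc (0:ℝ) 1 ×ˢ Set.Icc (0:ℝ) 1) := by
  unfold PI2 muI
  rw [Measure.prod_restrict, Measure.volume_eq_prod]

/-- the vertex whose interval contains `x`. -/
def cell (n : ℕ) (hn : 0 < n) (x : ℝ) : Fin n :=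
  ⟨min (⌈(n:ℝ) * x⌉ - 1).toNat (n - 1), by omega⟩

theorem cell_mono (n : ℕ) (hn : 0 < n) : Monotone (cell n hn) := by
  intro x y h
  have h1 : (n:ℝ) * x ≤ n * y := by gcongr
  have h2 := Int.ceil_le_ceil h1
  show min (⌈(n:ℝ) * x⌉ - 1).toNat (n - 1) ≤ min (⌈(n:ℝ) * y⌉ - 1).toNat (n - 1)
  omega

theorem cell_meas (n : ℕ) (hn : 0 < n) : Measurable (cell n hn) := by
  let g : ℤ → Fin n := fun z => ⟨min (z - 1).toNat (n - 1), by omega⟩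
  have : Measurable (fun x : ℝ => g ⌈(n:ℝ) * x⌉) :=
    (measurable_from_top (f := g)).comp (Int.measurable_ceil.comp (by fun_prop))
  exact this

theorem cell_iff (n : ℕ) (hn : 0 < n) {x : ℝ} (hx : x ∈ Set.Ioc (0:ℝ) 1) (i : Fin n) :
    cell n hn x = i ↔ ⌈(n : ℝ) * x⌉ = ((i : ℕ) : ℤ) + 1 := by
  have hn' : (0:ℝ) < n := by exact_mod_cast hn
  have h1 : 0 < ⌈(n:ℝ) * x⌉ := Int.ceil_pos.2 (mul_pos hn' hx.1)
  have h2 : ⌈(n:ℝ) * x⌉ ≤ n := by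
    apply Int.ceil_le.2
    push_cast
    nlinarith [hx.2]
  have := i.2
  rw [Fin.ext_iff]
  simp only [cell]
  omega

theorem cell_preimage (n : ℕ) (hn : 0 < n) (i : Fin n) :
    cell n hn ⁻¹' {i} ∩ Set.Ioc 0 1 = Set.Ioc (((i:ℕ):ℝ) / n) ((((i:ℕ):ℝ) + 1) / n) := by
  have hn' : (0:ℝ) < n := by exact_mod_cast hn
  ext x
  have key : ⌈(n : ℝ) * x⌉ = ((i : ℕ) : ℤ) + 1 ↔
      x ∈ Set.Ioc (((i:ℕ):ℝ) / n) ((((i:ℕ):ℝ) + 1) / n) := by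
    rw [Int.ceil_eq_iff, Set.mem_Ioc, div_lt_iff₀ hn', le_div_iff₀ hn']
    push_cast
    constructor <;> rintro ⟨h, h'⟩ <;> constructor <;> linarith
  constructor
  · rintro ⟨h, hx⟩
    exact key.1 ((cell_iff n hn hx i).1 h)
  · intro h
    have hi : (((i:ℕ):ℝ) + 1) ≤ n := by exact_mod_cast i.2
    have hx : x ∈ Set.Ioc (0:ℝ) 1 := by
      refine ⟨lt_of_le_of_lt (by positivity) h.1, h.2.trans ?_⟩
      rw [div_le_one hn']; exact hi
    exact ⟨(cell_iff n hn hx i).2 (key.2 h), hx⟩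

theorem muI_Ioc : muI = volume.restrict (Set.Ioc (0:ℝ) 1) :=
  (restrict_Ioc_eq_restrict_Icc).symm

theorem muI_cell (n : ℕ) (hn : 0 < n) (i : Fin n) :
    muI.real (cell n hn ⁻¹' {i}) = 1 / n := by
  have hn' : (0:ℝ) < n := by exact_mod_cast hn
  rw [muI_Ioc, measureReal_restrict_apply (cell_meas n hn (measurableSet_singleton i)),
    cell_preimage]
  rw [Real.volume_real_Ioc_of_le (by gcongr; linarith)]
  field_simp
  ring

open Classical in
/-- the adjacency indicator. -/
def adjR {n : ℕ} (G : SimpleGraph (Fin n)) (i j : Fin n) : ℝ := if G.Adj i j then 1 else 0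

theorem graphonOfGraph_eq {n : ℕ} (hn : 0 < n) (G : SimpleGraph (Fin n)) {x y : ℝ}
    (hx : x ∈ Set.Ioc (0:ℝ) 1) (hy : y ∈ Set.Ioc (0:ℝ) 1) :
    graphonOfGraph G x y = adjR G (cell n hn x) (cell n hn y) := by
  unfold graphonOfGraph adjR
  congr 1
  apply propext
  constructor
  · rintro ⟨i, j, h, h1, h2⟩
    rw [← cell_iff n hn hx] at h1
    rw [← cell_iff n hn hy] at h2
    rwa [h1, h2]
  · intro h
    exact ⟨_, _, h, (cell_iff n hn hx _).1 rfl, (cell_iff n hn hy _).1 rfl⟩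

theorem PI2_Ioc : ∀ᵐ p ∂PI2, p.1 ∈ Set.Ioc (0:ℝ) 1 ∧ p.2 ∈ Set.Ioc (0:ℝ) 1 := by
  have : PI2 = (volume : Measure (ℝ × ℝ)).restrict (Set.Ioc (0:ℝ) 1 ×ˢ Set.Ioc (0:ℝ) 1) := by
    unfold PI2
    rw [muI_Ioc, Measure.prod_restrict, Measure.volume_eq_prod]
  rw [this]
  exact ae_restrict_mem (measurableSet_Ioc.prod measurableSet_Ioc)

theorem graphonOfGraph_ae {n : ℕ} (hn : 0 < n) (G : SimpleGraph (Fin n)) :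
    ∀ᵐ p ∂PI2, graphonOfGraph G p.1 p.2 = adjR G (cell n hn p.1) (cell n hn p.2) := by
  filter_upwards [PI2_Ioc] with p hp
  exact graphonOfGraph_eq hn G hp.1 hp.2

theorem cellfun_meas {n : ℕ} (hn : 0 < n) (F : Fin n → Fin n → ℝ) :
    Measurable (fun p : ℝ × ℝ => F (cell n hn p.1) (cell n hn p.2)) := by
  have h1 : Measurable (fun q : Fin n × Fin n => F q.1 q.2) := measurable_of_finite _
  exact h1.comp (((cell_meas n hn).comp measurable_fst).prodMk ((cell_meas n hn).comp measurable_snd))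

theorem integral_cell {n : ℕ} (hn : 0 < n) (F : Fin n → Fin n → ℝ) (S T : Set ℝ) :
    ∫ p in S ×ˢ T, F (cell n hn p.1) (cell n hn p.2) ∂PI2 =
      ∑ i, ∑ j, (muI.restrict S).real (cell n hn ⁻¹' {i}) *
        ((muI.restrict T).real (cell n hn ⁻¹' {j})) * F i j := by
  have h1 : Measurable (fun q : Fin n × Fin n => F q.1 q.2) := measurable_of_finite _
  have hc := cell_meas n hn
  have hm : Measurable (Prod.map (cell n hn) (cell n hn)) := hc.prodMap hc
  rw [PI2, ← Measure.prod_restrict]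
  have := integral_map (μ := (muI.restrict S).prod (muI.restrict T)) hm.aemeasurable
    (h1.aestronglyMeasurable)
  simp only [Prod.map_fst, Prod.map_snd] at this
  rw [← this, ← Measure.map_prod_map _ _ hc hc, integral_fintype (Integrable.of_finite)]
  rw [Fintype.sum_prod_type]
  refine Finset.sum_congr rfl fun i _ => Finset.sum_congr rfl fun j _ => ?_
  rw [← Set.singleton_prod_singleton, measureReal_prod_prod, smul_eq_mul,
    map_measureReal_apply hc (measurableSet_singleton i),
    map_measureReal_apply hc (measurableSet_singleton j)]


/-- The structured approximation with `J` terms. -/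
def fkU {V : Type} (e : ℝ) (J : ℕ) (s : ℕ → SignType) (a b : ℕ → V → Bool) (u v : V) : ℝ :=
  e * ∑ i ∈ Finset.range J, ((s i : ℤ) : ℝ) * ((a i u && b i v).toNat : ℝ)

theorem fkU_congr {V : Type} (e : ℝ) (J : ℕ) (s s' : ℕ → SignType) (a b a' b' : ℕ → V → Bool)
    (hs : ∀ i < J, s i = s' i) (ha : ∀ i < J, a i = a' i) (hb : ∀ i < J, b i = b' i) (u v : V) :
    fkU e J s a b u v = fkU e J s' a' b' u v := by
  unfold fkU
  congr 1
  refine Finset.sum_congr rfl fun i hi => ?_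
  have := Finset.mem_range.1 hi
  rw [hs i this, ha i this, hb i this]

theorem fkU_succ {V : Type} (e : ℝ) (J : ℕ) (s : ℕ → SignType) (a b : ℕ → V → Bool) (u v : V) :
    fkU e (J+1) s a b u v =
      fkU e J s a b u v + e * (((s J : ℤ) : ℝ) * ((a J u && b J v).toNat : ℝ)) := by
  unfold fkU
  rw [Finset.sum_range_succ, mul_add]

theorem fk_step {V : Type} [Fintype V] [DecidableEq V] (A : V → V → ℝ) (hA : ∀ u v, |A u v| ≤ 1)
    (e : ℝ) (he : 0 < e) (J : ℕ) :
    ∃ (s : ℕ → SignType) (a b : ℕ → V → Bool),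
      (∀ S T : Finset V, |∑ u ∈ S, ∑ v ∈ T, (A u v - fkU e J s a b u v)| ≤
        e * (Fintype.card V : ℝ)^2) ∨
      ∑ u, ∑ v, (A u v - fkU e J s a b u v)^2 ≤ (Fintype.card V : ℝ)^2 * (1 - J * e^2) := by
  induction J with
  | zero =>
    refine ⟨fun _ => 0, fun _ _ => false, fun _ _ => false, Or.inr ?_⟩
    have : ∀ u v : V, (A u v - fkU e 0 (fun _ => 0) (fun _ _ => false) (fun _ _ => false) u v)^2 ≤ 1 := by
      intro u v
      simp only [fkU, Finset.range_zero, Finset.sum_empty, mul_zero, sub_zero]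
      rw [← sq_abs]
      have := hA u v
      have h0 := abs_nonneg (A u v)
      nlinarith
    calc _ ≤ ∑ u : V, ∑ v : V, (1:ℝ) := Finset.sum_le_sum fun u _ => Finset.sum_le_sum fun v _ => this u v
      _ = _ := by simp; ring
  | succ J ih =>
    obtain ⟨s, a, b, h⟩ := ih
    by_cases hg : ∀ S T : Finset V, |∑ u ∈ S, ∑ v ∈ T, (A u v - fkU e J s a b u v)| ≤
        e * (Fintype.card V : ℝ)^2
    · refine ⟨fun i => if i = J then 0 else s i, a, b, Or.inl fun S T => ?_⟩
      refine le_trans (le_of_eq ?_) (hg S T)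
      congr 1
      refine Finset.sum_congr rfl fun u _ => Finset.sum_congr rfl fun v _ => ?_
      rw [fkU_succ, fkU_congr e J (fun i => if i = J then 0 else s i) s a b a b
        (fun i hi => if_neg hi.ne) (fun _ _ => rfl) (fun _ _ => rfl)]
      simp
    · have hen := h.resolve_left hg
      push Not at hg
      obtain ⟨S, T, hST⟩ := hg
      set c := ∑ u ∈ S, ∑ v ∈ T, (A u v - fkU e J s a b u v) with hc
      refine ⟨fun i => if i = J then SignType.sign c else s i,
        fun i => if i = J then (fun u => decide (u ∈ S)) else a i,
        fun i => if i = J then (fun u => decide (u ∈ T)) else b i, Or.inr ?_⟩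
      have hU : ∀ u v, fkU e (J+1) (fun i => if i = J then SignType.sign c else s i)
        (fun i => if i = J then (fun u => decide (u ∈ S)) else a i)
        (fun i => if i = J then (fun u => decide (u ∈ T)) else b i) u v =
        fkU e J s a b u v + e * (((SignType.sign c : ℤ) : ℝ) * (if u ∈ S then (if v ∈ T then 1 else 0) else 0)) := by
        intro u v
        rw [fkU_succ, fkU_congr e J _ s _ _ a b (fun i hi => if_neg hi.ne)
          (fun i hi => if_neg hi.ne) (fun i hi => if_neg hi.ne)]
        by_cases h1 : u ∈ S <;> by_cases h2 : v ∈ T <;> simp [h1, h2]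
      simp only [hU]
      set σ : ℝ := ((SignType.sign c : ℤ) : ℝ) with hσ
      have hσc : σ * c = |c| := by
        rw [hσ]
        rcases lt_trichotomy c 0 with h | h | h
        · simp [h, abs_of_neg]
        · simp [h]
        · simp [h, abs_of_pos]
      have hσ2 : σ^2 ≤ 1 := by
        rw [hσ]
        rcases lt_trichotomy c 0 with h | h | h <;> simp [h]
      have hexp : ∀ u v, (A u v - (fkU e J s a b u v + e * (σ * (if u ∈ S then (if v ∈ T then 1 else 0) else 0))))^2
        = (A u v - fkU e J s a b u v)^2 - 2 * e * σ * (if u ∈ S then (if v ∈ T then (A u v - fkU e J s a b u v) else 0) else 0)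
          + e^2 * σ^2 * (if u ∈ S then (if v ∈ T then 1 else 0) else 0) := by
        intro u v
        by_cases h1 : u ∈ S <;> by_cases h2 : v ∈ T <;> simp [h1, h2]
        ring
      simp only [hexp, Finset.sum_add_distrib, Finset.sum_sub_distrib, ← Finset.mul_sum]
      have h1 : ∑ u, ∑ v, (if u ∈ S then (if v ∈ T then (A u v - fkU e J s a b u v) else 0) else 0) = c := by
        rw [hc, ← Finset.sum_subset (Finset.subset_univ S)]
        · refine Finset.sum_congr rfl fun u hu => ?_
          simp [hu]
        · intro u _ hu
          simp [hu]
      have h2 : ∑ u : V, ∑ v : V, (if u ∈ S then (if v ∈ T then (1:ℝ) else 0) else 0) ≤ (Fintype.card V : ℝ)^2 := by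
        calc _ ≤ ∑ u : V, ∑ v : V, (1:ℝ) := Finset.sum_le_sum fun u _ => Finset.sum_le_sum fun v _ => by
              split_ifs <;> norm_num
          _ = _ := by simp; ring
      have h20 : 0 ≤ ∑ u : V, ∑ v : V, (if u ∈ S then (if v ∈ T then (1:ℝ) else 0) else 0) := 
        Finset.sum_nonneg fun u _ => Finset.sum_nonneg fun v _ => by split_ifs <;> norm_num
      rw [h1]
      have h3 : e^2 * σ^2 * ∑ u : V, ∑ v : V, (if u ∈ S then (if v ∈ T then (1:ℝ) else 0) else 0) ≤
        e^2 * 1 * (Fintype.card V : ℝ)^2 := by gcongr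
      have h4 : 2 * e * σ * c = 2 * e * |c| := by rw [← hσc]; ring
      have h5 : e * (e * (Fintype.card V : ℝ)^2) ≤ e * |c| := by gcongr
      rw [h4]
      push_cast
      nlinarith

theorem fk_exists {V : Type} [Fintype V] [DecidableEq V] [Nonempty V]
    (A : V → V → ℝ) (hA : ∀ u v, |A u v| ≤ 1)
    (e : ℝ) (he : 0 < e) (J : ℕ) (hJ : 1 < J * e^2) :
    ∃ (s : ℕ → SignType) (a b : ℕ → V → Bool),
      ∀ S T : Finset V, |∑ u ∈ S, ∑ v ∈ T, (A u v - fkU e J s a b u v)| ≤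
        e * (Fintype.card V : ℝ)^2 := by
  obtain ⟨s, a, b, h | h⟩ := fk_step A hA e he J
  · exact ⟨s, a, b, h⟩
  · exfalso
    have h0 : 0 ≤ ∑ u, ∑ v, (A u v - fkU e J s a b u v)^2 :=
      Finset.sum_nonneg fun u _ => Finset.sum_nonneg fun v _ => sq_nonneg _
    have : (0:ℝ) < (Fintype.card V : ℝ)^2 := by
      have := Fintype.card_pos (α := V)
      positivity
    nlinarith

/-- Passing from sets to weights. -/
theorem weight_bound {V : Type} [Fintype V] (R : V → V → ℝ) (c : ℝ)
    (h : ∀ S T : Finset V, |∑ u ∈ S, ∑ v ∈ T, R u v| ≤ c) (α β : V → ℝ)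
    (M : ℝ) (hα0 : ∀ u, 0 ≤ α u) (hα1 : ∀ u, α u ≤ M)
    (hβ0 : ∀ u, 0 ≤ β u) (hβ1 : ∀ u, β u ≤ M) (hM : 0 ≤ M) :
    |∑ u, ∑ v, α u * β v * R u v| ≤ M^2 * c := by
  classical
  have lin : ∀ (γ r : V → ℝ), (∀ u, 0 ≤ γ u) → (∀ u, γ u ≤ M) →
      ∃ S : Finset V, ∑ u, γ u * r u ≤ M * ∑ u ∈ S, r u := by
    intro γ r h0 h1
    refine ⟨Finset.univ.filter (fun u => 0 < r u), ?_⟩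
    rw [Finset.sum_filter, Finset.mul_sum]
    refine Finset.sum_le_sum fun u _ => ?_
    split_ifs with hr
    · exact mul_le_mul_of_nonneg_right (h1 u) hr.le
    · rw [mul_zero]
      exact mul_nonpos_of_nonneg_of_nonpos (h0 u) (not_lt.1 hr)
  have main : ∀ R : V → V → ℝ, (∀ S T : Finset V, |∑ u ∈ S, ∑ v ∈ T, R u v| ≤ c) →
      ∑ u, ∑ v, α u * β v * R u v ≤ M^2 * c := by
    intro R h
    obtain ⟨S, hS⟩ := lin α (fun u => ∑ v, β v * R u v) hα0 hα1
    obtain ⟨T, hT⟩ := lin β (fun v => ∑ u ∈ S, R u v) hβ0 hβ1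
    calc ∑ u, ∑ v, α u * β v * R u v = ∑ u, α u * ∑ v, β v * R u v := by
          simp only [Finset.mul_sum, mul_assoc]
      _ ≤ M * ∑ u ∈ S, ∑ v, β v * R u v := hS
      _ = M * ∑ v, β v * ∑ u ∈ S, R u v := by
          rw [Finset.sum_comm]; simp only [Finset.mul_sum]
      _ ≤ M * (M * ∑ v ∈ T, ∑ u ∈ S, R u v) := by gcongr
      _ ≤ M * (M * c) := by
          gcongr
          rw [Finset.sum_comm]
          exact (le_abs_self _).trans (h S T)
      _ = M^2 * c := by ring
  rw [abs_le]
  constructor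
  · have := main (fun u v => - R u v) (fun S T => by simpa [Finset.sum_neg_distrib] using h S T)
    simp only [mul_neg, Finset.sum_neg_distrib] at this
    linarith
  · exact main R h


/-- The integer with binary digits given by the first `m` bits. -/
def key : ℕ → (ℕ → Bool) → ℕ
  | 0, _ => 0
  | m + 1, a => 2 * key m a + (a m).toNat

theorem key_lt (m : ℕ) (a : ℕ → Bool) : key m a < 2 ^ m := by
  induction m with
  | zero => simp [key]
  | succ m ih =>
    have := Bool.toNat_le (a m)
    simp only [key, pow_succ]
    omega

theorem key_congr (m : ℕ) (a b : ℕ → Bool) (h : ∀ i < m, a i = b i) : key m a = key m b := by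
  induction m with
  | zero => rfl
  | succ m ih =>
    simp only [key]
    rw [ih fun i hi => h i (by omega), h m (by omega)]

theorem key_inj (m : ℕ) (a b : ℕ → Bool) (h : key m a = key m b) : ∀ i < m, a i = b i := by
  induction m with
  | zero => intro i hi; omega
  | succ m ih =>
    simp only [key] at h
    have h1 := Bool.toNat_le (a m)
    have h2 := Bool.toNat_le (b m)
    intro i hi
    rcases Nat.lt_succ_iff_lt_or_eq.1 hi with h' | rfl
    · exact ih (by omega) i h'
    · have : (a i).toNat = (b i).toNat := by omega
      revert this
      cases a i <;> cases b i <;> simp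

theorem key_mono (m : ℕ) (a b : Lex (ℕ → Bool)) (h : a ≤ b) :
    key m (ofLex a) ≤ key m (ofLex b) := by
  rcases eq_or_lt_of_le h with rfl | h
  · exact le_rfl
  · obtain ⟨i, h1, h2⟩ := h
    have hlt : ∀ d, key (i + 1 + d) (ofLex a) + 1 ≤ key (i + 1 + d) (ofLex b) := by
      intro d
      induction d with
      | zero =>
        have h3 : key i (ofLex a) = key i (ofLex b) := key_congr i _ _ h1
        have h4 : (ofLex a) i = false ∧ (ofLex b) i = true := by
          have : (ofLex a) i < (ofLex b) i := h2
          revert this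
          cases (ofLex a) i <;> cases (ofLex b) i <;> simp
        simp only [key, h3, h4.1, h4.2]
        simp
      | succ d ih =>
        have h1 := Bool.toNat_le ((ofLex a) (i + 1 + d))
        rw [← add_assoc]
        simp only [key]
        omega
    by_cases hm : m ≤ i
    · exact (key_congr m _ _ fun j hj => h1 j (by omega)).le
    · obtain ⟨d, rfl⟩ := Nat.exists_eq_add_of_le (Nat.succ_le_of_lt (not_le.1 hm))
      have := hlt d
      simp only [Nat.succ_eq_add_one]
      omega

/-- accuracy at level `l`. -/
def eL (l : ℕ) : ℝ := 1 / ((l : ℝ) + 1)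

theorem eL_pos (l : ℕ) : 0 < eL l := by unfold eL; positivity

/-- number of terms at level `l`. -/
def jL (l : ℕ) : ℕ := (l + 1) ^ 2 + 1

/-- number of relevant bits at level `l`. -/
def mL (l : ℕ) : ℕ := Nat.pair l (2 * jL l)

theorem jL_spec (l : ℕ) : 1 < (jL l : ℝ) * (eL l) ^ 2 := by
  unfold jL eL
  push_cast
  rw [div_pow, one_pow, mul_one_div, lt_div_iff₀ (by positivity)]
  linarith

/-- The structured approximation at level `l`, as a function of the codes. -/
def lvlU (l : ℕ) (s : ℕ → SignType) (a b : ℕ → Bool) : ℝ :=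
  fkU (eL l) (jL l) s (fun i (w : ℕ → Bool) => w (Nat.pair l (2 * i)))
    (fun i (w : ℕ → Bool) => w (Nat.pair l (2 * i + 1))) a b

theorem lvlU_congr (l : ℕ) (s s' : ℕ → SignType) (a b a' b' : ℕ → Bool)
    (hs : ∀ i < jL l, s i = s' i) (ha : key (mL l) a = key (mL l) a')
    (hb : key (mL l) b = key (mL l) b') : lvlU l s a b = lvlU l s' a' b' := by
  unfold lvlU fkU
  congr 1
  refine Finset.sum_congr rfl fun i hi => ?_
  have hi := Finset.mem_range.1 hi
  beta_reduce
  rw [hs i hi, key_inj _ _ _ ha _ (Nat.pair_lt_pair_right l (by omega)),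
    key_inj _ _ _ hb _ (Nat.pair_lt_pair_right l (by omega))]

theorem lvlU_bound (l : ℕ) (s : ℕ → SignType) (a b : ℕ → Bool) :
    |lvlU l s a b| ≤ eL l * jL l := by
  unfold lvlU fkU
  rw [abs_mul, abs_of_pos (eL_pos l)]
  have := (eL_pos l).le
  gcongr
  refine (Finset.abs_sum_le_sum_abs _ _).trans ?_
  calc _ ≤ ∑ i ∈ Finset.range (jL l), (1:ℝ) := Finset.sum_le_sum fun i _ => by
        rw [abs_mul]
        have h1 : |((s i : ℤ) : ℝ)| ≤ 1 := by
          cases s i <;> simp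
        have h2 : |((a (Nat.pair l (2 * i)) && b (Nat.pair l (2 * i + 1))).toNat : ℝ)| ≤ 1 := by
          cases (a (Nat.pair l (2 * i)) && b (Nat.pair l (2 * i + 1))) <;> simp
        exact mul_le_one₀ h1 (abs_nonneg _) h2
    _ = _ := by simp

/-- regularity at level `l`. -/
def RegAt {n : ℕ} (H : SimpleGraph (Fin n)) (x : Fin n → ℕ → Bool) (s : ℕ → ℕ → SignType)
    (l : ℕ) : Prop :=
  ∀ S T : Finset (Fin n), |∑ u ∈ S, ∑ v ∈ T, (adjR H u v - lvlU l (s l) (x u) (x v))| ≤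
    eL l * (n : ℝ)^2

theorem adjR_abs {n : ℕ} (H : SimpleGraph (Fin n)) (u v : Fin n) : |adjR H u v| ≤ 1 := by
  unfold adjR; split_ifs <;> simp

theorem sorted_exists {n : ℕ} (hn : 0 < n) (G : SimpleGraph (Fin n)) :
    ∃ (π : Equiv.Perm (Fin n)) (x : Fin n → ℕ → Bool) (s : ℕ → ℕ → SignType),
      Monotone (fun u => toLex (x u)) ∧ ∀ l, RegAt (G.comap ⇑π) x s l := by
  have : Nonempty (Fin n) := ⟨⟨0, hn⟩⟩
  have h := fun l => fk_exists (adjR G) (adjR_abs G) (eL l) (eL_pos l) (jL l) (jL_spec l)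
  choose s a b h using h
  let x0 : Fin n → ℕ → Bool := fun u i =>
    if (Nat.unpair i).2 % 2 = 0 then a (Nat.unpair i).1 ((Nat.unpair i).2 / 2) u
    else b (Nat.unpair i).1 ((Nat.unpair i).2 / 2) u
  have hx1 : ∀ u l i, x0 u (Nat.pair l (2 * i)) = a l i u := by
    intro u l i
    simp [x0]
  have hx2 : ∀ u l i, x0 u (Nat.pair l (2 * i + 1)) = b l i u := by
    intro u l i
    have : (2 * i + 1) / 2 = i := by omega
    simp [x0, this]
  let f : Fin n → Lex (ℕ → Bool) := fun u => toLex (x0 u)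
  refine ⟨Tuple.sort f, fun u => x0 (Tuple.sort f u), s, Tuple.monotone_sort f, fun l S T => ?_⟩
  have := h l (S.map (Tuple.sort f).toEmbedding) (T.map (Tuple.sort f).toEmbedding)
  simp only [Finset.sum_map, Fintype.card_fin] at this
  refine le_trans (le_of_eq ?_) this
  congr 1
  refine Finset.sum_congr rfl fun u _ => Finset.sum_congr rfl fun v _ => ?_
  congr 1
  simp only [lvlU, fkU, hx1, hx2]
  rfl

theorem muI_restrict_cell_le (n : ℕ) (hn : 0 < n) (i : Fin n) (S : Set ℝ) :
    (muI.restrict S).real (cell n hn ⁻¹' {i}) ≤ 1 / n := by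
  rw [← muI_cell n hn i]
  exact ENNReal.toReal_mono (measure_ne_top _ _) (Measure.restrict_le_self _)

theorem reg_integral {n : ℕ} (hn : 0 < n) (H : SimpleGraph (Fin n)) (x : Fin n → ℕ → Bool)
    (s : ℕ → ℕ → SignType) (l : ℕ) (h : RegAt H x s l) (S T : Set ℝ) :
    |∫ p in S ×ˢ T, (adjR H (cell n hn p.1) (cell n hn p.2) -
      lvlU l (s l) (x (cell n hn p.1)) (x (cell n hn p.2))) ∂PI2| ≤ eL l := by
  have hn' : (0:ℝ) < n := by exact_mod_cast hn
  rw [integral_cell hn (fun u v => adjR H u v - lvlU l (s l) (x u) (x v)) S T]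
  refine (weight_bound _ _ h _ _ (1 / n) (fun _ => measureReal_nonneg)
    (fun i => muI_restrict_cell_le n hn i S) (fun _ => measureReal_nonneg)
    (fun i => muI_restrict_cell_le n hn i T) (by positivity)).trans (le_of_eq ?_)
  field_simp

/-- Two monotone integer functions agreeing on a grid agree up to small measure. -/
theorem grid_close (M N : ℕ) (hN : 0 < N) (K K' : ℝ → ℕ) (hK : Monotone K) (hK' : Monotone K')
    (hM : ∀ t, K t < M) (h : ∀ j ≤ N, K ((j:ℝ) / N) = K' ((j:ℝ) / N)) :
    muI {t | K t ≠ K' t} ≤ ENNReal.ofReal ((M : ℝ) / N) := by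
  classical
  have hN' : (0:ℝ) < N := by exact_mod_cast hN
  let g : ℕ → ℕ := fun j => K ((j:ℝ) / N)
  have hg : Monotone g := fun i j hij => hK (by gcongr)
  let B := (Finset.range N).filter (fun j => g j < g (j+1))
  have hB : B.card ≤ M := by
    have h1 : ∀ m, ((Finset.range m).filter (fun j => g j < g (j+1))).card + g 0 ≤ g m := by
      intro m
      induction m with
      | zero => simp
      | succ m ih =>
        rw [Finset.range_add_one, Finset.filter_insert]
        have := hg (Nat.le_succ m)
        simp only [Nat.succ_eq_add_one] at this
        split_ifs with hlt
        · rw [Finset.card_insert_of_notMem (by simp)]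
          omega
        · omega
    have h2 := h1 N
    have h3 : g N < M := hM _
    have h4 : B.card = ((Finset.range N).filter (fun j => g j < g (j+1))).card := rfl
    omega
  have hsub : {t | K t ≠ K' t} ∩ Set.Ioc 0 1 ⊆
      ⋃ j ∈ B, Set.Ioc ((j:ℝ) / N) (((j:ℝ) + 1) / N) := by
    rintro t ⟨ht, ht01⟩
    have hpre := cell_preimage N hN (cell N hN t)
    have htm : t ∈ cell N hN ⁻¹' {cell N hN t} ∩ Set.Ioc 0 1 := ⟨rfl, ht01⟩
    rw [hpre] at htm
    set j : ℕ := (cell N hN t : ℕ) with hj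
    have hjN : j < N := (cell N hN t).2
    simp only [Set.mem_iUnion]
    refine ⟨j, ?_, htm⟩
    refine Finset.mem_filter.2 ⟨Finset.mem_range.2 hjN, ?_⟩
    by_contra hcon
    apply ht
    have e1 := h j hjN.le
    have e2 := h (j+1) hjN
    have hge : g (j+1) ≤ g j := not_lt.1 hcon
    simp only [g] at hge
    push_cast at e2 hge
    have a1 := hK htm.1.le
    have a2 := hK htm.2
    have a3 := hK' htm.1.le
    have a4 := hK' htm.2
    omega
  have hms : MeasurableSet {t | K t ≠ K' t} :=
    (measurableSet_eq_fun hK.measurable hK'.measurable).compl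
  rw [muI_Ioc, Measure.restrict_apply hms]
  calc _ ≤ volume (⋃ j ∈ B, Set.Ioc ((j:ℝ) / N) (((j:ℝ) + 1) / N)) := measure_mono hsub
    _ ≤ ∑ j ∈ B, volume (Set.Ioc ((j:ℝ) / N) (((j:ℝ) + 1) / N)) := measure_biUnion_finset_le _ _
    _ = ∑ j ∈ B, ENNReal.ofReal (1 / N) := by
        refine Finset.sum_congr rfl fun j _ => ?_
        rw [Real.volume_Ioc]
        congr 1
        field_simp
        ring
    _ = ENNReal.ofReal (B.card * (1 / N)) := by
        rw [Finset.sum_const, nsmul_eq_mul, ENNReal.ofReal_mul (by positivity), ENNReal.ofReal_natCast]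
    _ ≤ _ := by
        apply ENNReal.ofReal_le_ofReal
        rw [mul_one_div]
        gcongr

/-- the key function on the unit interval. -/
def keyF (l : ℕ) {n : ℕ} (hn : 0 < n) (x : Fin n → ℕ → Bool) (t : ℝ) : ℕ :=
  key (mL l) (x (cell n hn t))

theorem keyF_mono (l : ℕ) {n : ℕ} (hn : 0 < n) (x : Fin n → ℕ → Bool)
    (hx : Monotone (fun u => toLex (x u))) : Monotone (keyF l hn x) := by
  intro t t' h
  exact key_mono _ _ _ (hx (cell_mono n hn h))

theorem PI2_real_fst (E : Set ℝ) : PI2.real (Prod.fst ⁻¹' E) = muI.real E := by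
  rw [← Set.prod_univ, measureReal_prod_prod]; simp

theorem PI2_real_snd (E : Set ℝ) : PI2.real (Prod.snd ⁻¹' E) = muI.real E := by
  rw [← Set.univ_prod, measureReal_prod_prod]; simp

theorem int_bdd {ν : Measure (ℝ × ℝ)} [IsFiniteMeasure ν] {f : ℝ × ℝ → ℝ} (hf : Measurable f)
    (C : ℝ) (hC : ∀ p, |f p| ≤ C) : Integrable f ν :=
  Integrable.of_bound hf.aestronglyMeasurable C (Eventually.of_forall hC)

theorem code_close (l : ℕ) : ∃ N : ℕ, ∀ (n n' : ℕ) (hn : 0 < n) (hn' : 0 < n')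
    (H : SimpleGraph (Fin n)) (H' : SimpleGraph (Fin n'))
    (x : Fin n → ℕ → Bool) (x' : Fin n' → ℕ → Bool) (s s' : ℕ → ℕ → SignType),
    Monotone (fun u => toLex (x u)) → Monotone (fun u => toLex (x' u)) →
    RegAt H x s l → RegAt H' x' s' l →
    (∀ i < jL l, s l i = s' l i) →
    (∀ j ≤ N, keyF l hn x ((j:ℝ) / N) = keyF l hn' x' ((j:ℝ) / N)) →
    ∀ S T : Set ℝ, 
    |∫ p in S ×ˢ T, adjR H (cell n hn p.1) (cell n hn p.2) ∂PI2 -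
      ∫ p in S ×ˢ T, adjR H' (cell n' hn' p.1) (cell n' hn' p.2) ∂PI2| ≤ 3 * eL l := by
  have hB0 : 0 ≤ eL l * jL l := mul_nonneg (eL_pos l).le (Nat.cast_nonneg _)
  obtain ⟨N, hN⟩ := exists_nat_gt (4 * (eL l * jL l) * ((2 ^ (mL l) : ℕ) : ℝ) / eL l)
  have hNpos : (0:ℝ) < N := lt_of_le_of_lt (by have := eL_pos l; positivity) hN
  refine ⟨N, ?_⟩
  intro n n' hn hn' H H' x x' s s' hx hx' hR hR' hs hk S T
  set E : Set ℝ := {t | keyF l hn x t ≠ keyF l hn' x' t} with hE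
  have hEm : MeasurableSet E :=
    (measurableSet_eq_fun (keyF_mono l hn x hx).measurable (keyF_mono l hn' x' hx').measurable).compl
  have hEmu : muI.real E ≤ ((2 ^ (mL l) : ℕ) : ℝ) / N := by
    apply ENNReal.toReal_le_of_le_ofReal (by positivity)
    exact grid_close (2 ^ mL l) N (by exact_mod_cast hNpos) _ _ (keyF_mono l hn x hx)
      (keyF_mono l hn' x' hx') (fun t => key_lt _ _) hk
  let f := fun p : ℝ × ℝ => adjR H (cell n hn p.1) (cell n hn p.2)
  let f' := fun p : ℝ × ℝ => adjR H' (cell n' hn' p.1) (cell n' hn' p.2)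
  let u := fun p : ℝ × ℝ => lvlU l (s l) (x (cell n hn p.1)) (x (cell n hn p.2))
  let u' := fun p : ℝ × ℝ => lvlU l (s' l) (x' (cell n' hn' p.1)) (x' (cell n' hn' p.2))
  have fm : Measurable f := cellfun_meas hn _
  have fm' : Measurable f' := cellfun_meas hn' _
  have um : Measurable u := cellfun_meas hn (fun a b => lvlU l (s l) (x a) (x b))
  have um' : Measurable u' := cellfun_meas hn' (fun a b => lvlU l (s' l) (x' a) (x' b))
  have fi : Integrable f (PI2.restrict (S ×ˢ T)) := int_bdd fm 1 fun p => adjR_abs _ _ _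
  have fi' : Integrable f' (PI2.restrict (S ×ˢ T)) := int_bdd fm' 1 fun p => adjR_abs _ _ _
  have ui : Integrable u (PI2.restrict (S ×ˢ T)) := int_bdd um _ fun p => lvlU_bound _ _ _ _
  have ui' : Integrable u' (PI2.restrict (S ×ˢ T)) := int_bdd um' _ fun p => lvlU_bound _ _ _ _
  have r1 : |∫ p in S ×ˢ T, (f p - u p) ∂PI2| ≤ eL l := reg_integral hn H x s l hR S T
  have r2 : |∫ p in S ×ˢ T, (f' p - u' p) ∂PI2| ≤ eL l := reg_integral hn' H' x' s' l hR' S T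
  have r3 : |∫ p in S ×ˢ T, (u p - u' p) ∂PI2| ≤ eL l := by
    let w : ℝ × ℝ → ℝ := fun p => 2 * (eL l * jL l) *
      ((Prod.fst ⁻¹' E).indicator (fun _ => (1:ℝ)) p + (Prod.snd ⁻¹' E).indicator (fun _ => (1:ℝ)) p)
    have hE1 : MeasurableSet (Prod.fst ⁻¹' E : Set (ℝ × ℝ)) := measurable_fst hEm
    have hE2 : MeasurableSet (Prod.snd ⁻¹' E : Set (ℝ × ℝ)) := measurable_snd hEm
    have i1 : Integrable ((Prod.fst ⁻¹' E).indicator (fun _ => (1:ℝ))) PI2 :=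
      (integrable_const 1).indicator hE1
    have i2 : Integrable ((Prod.snd ⁻¹' E).indicator (fun _ => (1:ℝ))) PI2 :=
      (integrable_const 1).indicator hE2
    have wi : Integrable w PI2 := (i1.add i2).const_mul _
    have hw0 : ∀ p, 0 ≤ w p := fun p => by
      have h1 : 0 ≤ (Prod.fst ⁻¹' E).indicator (fun _ => (1:ℝ)) p :=
        Set.indicator_nonneg (fun _ _ => zero_le_one) p
      have h2 : 0 ≤ (Prod.snd ⁻¹' E).indicator (fun _ => (1:ℝ)) p :=
        Set.indicator_nonneg (fun _ _ => zero_le_one) p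
      simp only [w]
      positivity
    have hw : ∀ p, |u p - u' p| ≤ w p := by
      intro p
      by_cases hp : p.1 ∈ E ∨ p.2 ∈ E
      · have b1 : |u p| ≤ eL l * jL l := lvlU_bound _ _ _ _
        have b2 : |u' p| ≤ eL l * jL l := lvlU_bound _ _ _ _
        have b3 : (1:ℝ) ≤ (Prod.fst ⁻¹' E).indicator (fun _ => (1:ℝ)) p + (Prod.snd ⁻¹' E).indicator (fun _ => (1:ℝ)) p := by
          have h1 : 0 ≤ (Prod.fst ⁻¹' E).indicator (fun _ => (1:ℝ)) p :=
            Set.indicator_nonneg (fun _ _ => zero_le_one) p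
          have h2 : 0 ≤ (Prod.snd ⁻¹' E).indicator (fun _ => (1:ℝ)) p :=
            Set.indicator_nonneg (fun _ _ => zero_le_one) p
          rcases hp with hp | hp
          · have : (Prod.fst ⁻¹' E).indicator (fun _ => (1:ℝ)) p = 1 :=
              Set.indicator_of_mem (s := Prod.fst ⁻¹' E) hp _
            linarith
          · have : (Prod.snd ⁻¹' E).indicator (fun _ => (1:ℝ)) p = 1 :=
              Set.indicator_of_mem (s := Prod.snd ⁻¹' E) hp _
            linarith
        have b4 := abs_sub (u p) (u' p)
        simp only [w]
        nlinarith
      · push Not at hp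
        have e1 : keyF l hn x p.1 = keyF l hn' x' p.1 := not_not.1 hp.1
        have e2 : keyF l hn x p.2 = keyF l hn' x' p.2 := not_not.1 hp.2
        have : u p = u' p := lvlU_congr l _ _ _ _ _ _ hs e1 e2
        rw [this, sub_self, abs_zero]
        exact hw0 p
    calc |∫ p in S ×ˢ T, (u p - u' p) ∂PI2| ≤ ∫ p in S ×ˢ T, |u p - u' p| ∂PI2 :=
          abs_integral_le_integral_abs
      _ ≤ ∫ p in S ×ˢ T, w p ∂PI2 :=
          integral_mono (ui.sub ui').abs wi.restrict hw
      _ ≤ ∫ p, w p ∂PI2 := setIntegral_le_integral wi (Eventually.of_forall hw0)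
      _ = 2 * (eL l * jL l) * (muI.real E + muI.real E) := by
          simp only [w]
          rw [integral_const_mul, integral_add i1 i2, integral_indicator_const _ hE1,
            integral_indicator_const _ hE2, PI2_real_fst, PI2_real_snd]
          simp
      _ ≤ 2 * (eL l * jL l) * (((2 ^ (mL l) : ℕ) : ℝ) / N + ((2 ^ (mL l) : ℕ) : ℝ) / N) := by gcongr
      _ ≤ eL l := by
          rw [div_lt_iff₀ (eL_pos l)] at hN
          rw [← add_div, mul_div_assoc', div_le_iff₀ hNpos]
          nlinarith
  rw [integral_sub fi ui] at r1
  rw [integral_sub fi' ui'] at r2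
  rw [integral_sub ui ui'] at r3
  show |∫ p in S ×ˢ T, f p ∂PI2 - ∫ p in S ×ˢ T, f' p ∂PI2| ≤ 3 * eL l
  rw [abs_le] at *
  constructor <;> linarith [r1.1, r1.2, r2.1, r2.2, r3.1, r3.2]


/-- Weak limits along an ultrafilter. -/
theorem weak_limit (U : Ultrafilter ℕ) (f : ℕ → ℝ × ℝ → ℝ) (hm : ∀ k, Measurable (f k))
    (h0 : ∀ k p, 0 ≤ f k p) (h1 : ∀ k p, f k p ≤ 1) :
    ∃ g : ℝ × ℝ → ℝ, Measurable g ∧ (∀ p, g p ∈ Set.Icc (0:ℝ) 1) ∧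
      ∀ B : Set (ℝ × ℝ), MeasurableSet B →
        Tendsto (fun k => ∫ p in B, f k p ∂PI2) U (nhds (∫ p in B, g p ∂PI2)) := by
  have hb : ∀ k p, ‖f k p‖ ≤ 1 := fun k p => by
    rw [Real.norm_eq_abs, abs_of_nonneg (h0 k p)]; exact h1 k p
  have hL : ∀ k, MemLp (f k) 2 PI2 := fun k =>
    MemLp.of_bound (hm k).aestronglyMeasurable 1 (Eventually.of_forall (hb k))
  let F : ℕ → Lp ℝ 2 PI2 := fun k => (hL k).toLp
  have hFae : ∀ k, F k =ᵐ[PI2] f k := fun k => (hL k).coeFn_toLp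
  obtain ⟨r, hFn⟩ : ∃ r : ℝ, ∀ k, ‖F k‖ ≤ r := by
    refine ⟨(measureUnivNNReal PI2 : ℝ) ^ (2:ENNReal).toReal⁻¹ * 1, fun k => ?_⟩
    exact Lp.norm_le_of_ae_bound (p := 2) (μ := PI2) (f := F k) (C := 1) zero_le_one (by
      filter_upwards [hFae k] with p hp
      rw [hp]; exact hb k p)
  let D := InnerProductSpace.toDual ℝ (Lp ℝ 2 PI2)
  let L : ℕ → WeakDual ℝ (Lp ℝ 2 PI2) := fun k => StrongDual.toWeakDual (D (F k))
  have hcomp := WeakDual.isCompact_closedBall (𝕜 := ℝ) (E := Lp ℝ 2 PI2) 0 r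
  have hmem : ∀ k, L k ∈ WeakDual.toStrongDual ⁻¹' Metric.closedBall (0 : StrongDual ℝ (Lp ℝ 2 PI2)) r := by
    intro k
    show D (F k) ∈ Metric.closedBall _ _
    rw [mem_closedBall_zero_iff, LinearIsometryEquiv.norm_map]
    exact hFn k
  obtain ⟨Λ, -, hΛ⟩ := hcomp.ultrafilter_le_nhds (U.map L) (by
    rw [le_principal_iff]
    exact Filter.mem_map.2 (Eventually.of_forall hmem))
  have hΛ' : Tendsto L U (nhds Λ) := hΛ
  let G : Lp ℝ 2 PI2 := D.symm (WeakDual.toStrongDual Λ)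
  have hlim : ∀ B : Set (ℝ × ℝ), MeasurableSet B →
      Tendsto (fun k => ∫ p in B, f k p ∂PI2) U (nhds (∫ p in B, G p ∂PI2)) := by
    intro B hB
    have hne : PI2 B ≠ ⊤ := measure_ne_top _ _
    have h := ((WeakDual.eval_continuous (𝕜 := ℝ) (indicatorConstLp 2 hB hne (1:ℝ))).tendsto Λ).comp hΛ'
    have e1 : ∀ k, (L k) (indicatorConstLp 2 hB hne (1:ℝ)) = ∫ p in B, f k p ∂PI2 := by
      intro k
      show inner ℝ (F k) (indicatorConstLp 2 hB hne (1:ℝ)) = _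
      rw [real_inner_comm, L2.inner_indicatorConstLp_one]
      exact integral_congr_ae (ae_restrict_of_ae (hFae k))
    have e2 : Λ (indicatorConstLp 2 hB hne (1:ℝ)) = ∫ p in B, G p ∂PI2 := by
      have : Λ (indicatorConstLp 2 hB hne (1:ℝ)) = inner ℝ G (indicatorConstLp 2 hB hne (1:ℝ)) := by
        have h2 : D G = WeakDual.toStrongDual Λ := D.apply_symm_apply _
        have h3 : D G (indicatorConstLp 2 hB hne (1:ℝ)) = inner ℝ G (indicatorConstLp 2 hB hne (1:ℝ)) := rfl
        rw [← h3, h2]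
        rfl
      rw [this, real_inner_comm, L2.inner_indicatorConstLp_one]
    rw [e2] at h
    refine h.congr fun k => ?_
    exact e1 k
  have hGi : Integrable G PI2 := (Lp.memLp G).integrable (by norm_num)
  have hfi : ∀ k, Integrable (f k) PI2 := fun k => (hL k).integrable (by norm_num)
  have hG0 : 0 ≤ᵐ[PI2] G := by
    refine ae_nonneg_of_forall_setIntegral_nonneg hGi fun B hB _ => ?_
    exact ge_of_tendsto' (hlim B hB) fun k => integral_nonneg (h0 k)
  have hG1 : G ≤ᵐ[PI2] fun _ => (1:ℝ) := by
    refine ae_le_of_forall_setIntegral_le hGi (integrable_const 1) fun B hB _ => ?_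
    exact le_of_tendsto' (hlim B hB) fun k =>
      integral_mono (hfi k).restrict (integrable_const 1) (h1 k)
  have hGm := (Lp.stronglyMeasurable G).measurable
  refine ⟨fun p => max 0 (min 1 (G p)), by fun_prop, fun p => ⟨le_max_left _ _, ?_⟩, fun B hB => ?_⟩
  · exact max_le zero_le_one (min_le_left _ _)
  · have : ∫ p in B, max 0 (min 1 (G p)) ∂PI2 = ∫ p in B, G p ∂PI2 := by
      refine integral_congr_ae (ae_restrict_of_ae ?_)
      filter_upwards [hG0, hG1] with p hp hp'
      have hp : 0 ≤ G p := hp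
      rw [min_eq_right hp', max_eq_right hp]
    rw [this]
    exact hlim B hB

theorem PI2_swap : MeasurePreserving Prod.swap PI2 PI2 := Measure.measurePreserving_swap

/-- Symmetric version. -/
theorem weak_limit_graphon (U : Ultrafilter ℕ) (f : ℕ → ℝ × ℝ → ℝ) (hm : ∀ k, Measurable (f k))
    (h0 : ∀ k p, 0 ≤ f k p) (h1 : ∀ k p, f k p ≤ 1) (hs : ∀ k p, f k p.swap = f k p) :
    ∃ W : ℝ → ℝ → ℝ, IsGraphon W ∧
      ∀ B : Set (ℝ × ℝ), MeasurableSet B →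
        Tendsto (fun k => ∫ p in B, f k p ∂PI2) U (nhds (∫ p in B, W p.1 p.2 ∂PI2)) := by
  obtain ⟨g, gm, g01, hg⟩ := weak_limit U f hm h0 h1
  have gsm : Measurable (fun p : ℝ × ℝ => g p.swap) := gm.comp measurable_swap
  refine ⟨fun x y => (g (x, y) + g (y, x)) / 2, ⟨fun x y => by ring, ?_, fun x y => ?_⟩, fun B hB => ?_⟩
  · exact (gm.add gsm).div_const 2
  · have a := g01 (x, y)
    have b := g01 (y, x)
    constructor <;> linarith [a.1, a.2, b.1, b.2]
  · have hB' : MeasurableSet (Prod.swap ⁻¹' B) := measurable_swap hB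
    have t1 := hg B hB
    have t2 := hg _ hB'
    have sw : ∀ h : ℝ × ℝ → ℝ, ∫ p in Prod.swap ⁻¹' B, h p ∂PI2 = ∫ p in B, h p.swap ∂PI2 := by
      intro h
      have := PI2_swap.setIntegral_preimage_emb
        (MeasurableEquiv.prodComm (α := ℝ) (β := ℝ)).measurableEmbedding (fun p => h p.swap) B
      simpa using this
    have gi : Integrable g (PI2.restrict B) := int_bdd gm 1 fun p => by
      rw [abs_of_nonneg (g01 p).1]; exact (g01 p).2
    have gsi : Integrable (fun p : ℝ × ℝ => g p.swap) (PI2.restrict B) := int_bdd gsm 1 fun p => by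
      rw [abs_of_nonneg (g01 _).1]; exact (g01 _).2
    rw [sw] at t2
    have t3 := (t1.add t2).div_const 2
    rw [← integral_add gi gsi, ← integral_div] at t3
    refine t3.congr fun k => ?_
    rw [sw]
    simp only [hs]
    ring

/-- If the weak limit is 0/1 valued then the convergence is in `L¹`. -/
theorem L1_limit (U : Ultrafilter ℕ) (f : ℕ → ℝ × ℝ → ℝ) (hm : ∀ k, Measurable (f k))
    (h0 : ∀ k p, 0 ≤ f k p) (h1 : ∀ k p, f k p ≤ 1)
    (g : ℝ × ℝ → ℝ) (gm : Measurable g) (g01 : ∀ p, g p ∈ Set.Icc (0:ℝ) 1)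
    (hg : ∀ B : Set (ℝ × ℝ), MeasurableSet B →
        Tendsto (fun k => ∫ p in B, f k p ∂PI2) U (nhds (∫ p in B, g p ∂PI2)))
    (hrf : ∀ᵐ p ∂PI2, g p = 0 ∨ g p = 1) :
    Tendsto (fun k => ∫ p, |f k p - g p| ∂PI2) U (nhds 0) := by
  let B : Set (ℝ × ℝ) := {p | g p = 1}
  have hB : MeasurableSet B := gm (measurableSet_singleton 1)
  have fi : ∀ k, Integrable (f k) PI2 := fun k => int_bdd (hm k) 1 fun p => by
    rw [abs_of_nonneg (h0 k p)]; exact h1 k p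
  have gi : Integrable g PI2 := int_bdd gm 1 fun p => by
    rw [abs_of_nonneg (g01 p).1]; exact (g01 p).2
  have e1 : ∀ k, ∫ p, |f k p - g p| ∂PI2 =
      (∫ p in B, g p ∂PI2 - ∫ p in B, f k p ∂PI2) + (∫ p in Bᶜ, f k p ∂PI2 - ∫ p in Bᶜ, g p ∂PI2) := by
    intro k
    rw [← integral_add_compl (f := fun p => |f k p - g p|) hB ((fi k).sub gi).abs, ← integral_sub gi.restrict (fi k).restrict,
      ← integral_sub (fi k).restrict gi.restrict]
    congr 1
    · refine setIntegral_congr_fun hB fun p hp => ?_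
      have hp : g p = 1 := hp
      have := h1 k p
      simp only [hp]
      rw [abs_of_nonpos (by linarith)]; ring
    · refine integral_congr_ae ?_
      filter_upwards [ae_restrict_of_ae hrf, ae_restrict_mem hB.compl] with p hp hp'
      have hp : g p = 0 := hp.resolve_right hp'
      have := h0 k p
      simp only [hp, Pi.sub_apply]
      rw [abs_of_nonneg (by linarith)]
  have t := ((tendsto_const_nhds (x := ∫ p in B, g p ∂PI2)).sub (hg B hB)).add
    ((hg Bᶜ hB.compl).sub (tendsto_const_nhds (x := ∫ p in Bᶜ, g p ∂PI2)))
  simp only [sub_self, add_zero] at t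
  exact t.congr fun k => (e1 k).symm


/-- `L¹` distance of the graphons of two labelled graphs. -/
def L1d {m n : ℕ} (H : SimpleGraph (Fin m)) (G : SimpleGraph (Fin n)) : ℝ :=
  ∫ p, |graphonOfGraph H p.1 p.2 - graphonOfGraph G p.1 p.2| ∂PI2

theorem graphon_aesm {n : ℕ} (hn : 0 < n) (G : SimpleGraph (Fin n)) :
    Integrable (fun p : ℝ × ℝ => graphonOfGraph G p.1 p.2) PI2 := by
  refine Integrable.congr (f := fun p : ℝ × ℝ => adjR G (cell n hn p.1) (cell n hn p.2))
    (int_bdd (cellfun_meas hn _) 1 fun p => adjR_abs _ _ _) ?_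
  filter_upwards [graphonOfGraph_ae hn G] with p hp
  exact hp.symm

theorem L1d_triangle {m n n' : ℕ} (hm : 0 < m) (hn : 0 < n) (hn' : 0 < n')
    (H : SimpleGraph (Fin m)) (G : SimpleGraph (Fin n)) (G' : SimpleGraph (Fin n')) :
    L1d G G' ≤ L1d H G + L1d H G' := by
  have i1 := graphon_aesm hm H
  have i2 := graphon_aesm hn G
  have i3 := graphon_aesm hn' G'
  unfold L1d
  have e := integral_add (i1.sub i2).abs (i1.sub i3).abs
  simp only [Pi.sub_apply] at e
  rw [← e]
  refine integral_mono (i2.sub i3).abs ((i1.sub i2).abs.add (i1.sub i3).abs) fun p => ?_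
  simp only [Pi.sub_apply]
  have := abs_sub_le (graphonOfGraph G p.1 p.2) (graphonOfGraph H p.1 p.2) (graphonOfGraph G' p.1 p.2)
  rw [abs_sub_comm (graphonOfGraph G p.1 p.2) (graphonOfGraph H p.1 p.2)] at this
  exact this

open Classical in
/-- set of pairs where the adjacency differs -/
def diffSet {n : ℕ} (G G' : SimpleGraph (Fin n)) : Finset (Fin n × Fin n) :=
  Finset.univ.filter fun q => ¬ (G.Adj q.1 q.2 ↔ G'.Adj q.1 q.2)

theorem diffSet_inj {n : ℕ} (G0 G G' : SimpleGraph (Fin n)) (h : diffSet G0 G = diffSet G0 G') :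
    G = G' := by
  ext u v
  have := Finset.ext_iff.1 h (u, v)
  simp only [diffSet, Finset.mem_filter, Finset.mem_univ, true_and] at this
  tauto

theorem L1d_same {n : ℕ} (hn : 0 < n) (G G' : SimpleGraph (Fin n)) :
    ((diffSet G G').card : ℝ) = L1d G G' * (n:ℝ)^2 := by
  classical
  have hn' : (0:ℝ) < n := by exact_mod_cast hn
  have e : L1d G G' = ∫ p in Set.univ ×ˢ Set.univ,
      |adjR G (cell n hn p.1) (cell n hn p.2) - adjR G' (cell n hn p.1) (cell n hn p.2)| ∂PI2 := by
    rw [Set.univ_prod_univ, Measure.restrict_univ]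
    refine integral_congr_ae ?_
    filter_upwards [graphonOfGraph_ae hn G, graphonOfGraph_ae hn G'] with p h1 h2
    rw [h1, h2]
  rw [e, integral_cell hn (fun u v => |adjR G u v - adjR G' u v|)]
  simp only [Measure.restrict_univ, muI_cell]
  have : ∀ u v, |adjR G u v - adjR G' u v| = if ¬ (G.Adj u v ↔ G'.Adj u v) then (1:ℝ) else 0 := by
    intro u v
    unfold adjR
    by_cases h1 : G.Adj u v <;> by_cases h2 : G'.Adj u v <;> simp [h1, h2]
  simp only [this]
  simp only [← Finset.mul_sum]
  rw [← Fintype.sum_prod_type' (f := fun u v => if ¬ (G.Adj u v ↔ G'.Adj u v) then (1:ℝ) else 0)]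
  rw [diffSet, Finset.card_filter]
  push_cast
  field_simp

/-- number of small sets. -/
theorem small_sets {α : Type} [Fintype α] (x θ : ℝ) (hx0 : 0 < x) (hx1 : x < 1)
    (A : Finset (Finset α)) (hA : ∀ D ∈ A, (D.card : ℝ) ≤ θ * Fintype.card α) :
    (A.card : ℝ) * x ^ (θ * Fintype.card α) ≤ (1 + x) ^ (Fintype.card α) := by
  classical
  calc (A.card : ℝ) * x ^ (θ * Fintype.card α) = ∑ D ∈ A, x ^ (θ * Fintype.card α) := by
        rw [Finset.sum_const, nsmul_eq_mul]
    _ ≤ ∑ D ∈ A, x ^ D.card := Finset.sum_le_sum fun D hD => by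
        rw [← Real.rpow_natCast]
        exact Real.rpow_le_rpow_of_exponent_ge hx0 hx1.le (hA D hD)
    _ ≤ ∑ D : Finset α, x ^ D.card :=
        Finset.sum_le_sum_of_subset_of_nonneg (Finset.subset_univ _) fun _ _ _ => by positivity
    _ = (1 + x) ^ (Fintype.card α) := by
        have := Fintype.sum_pow_mul_eq_add_pow α x 1
        simp only [one_pow, mul_one] at this
        rw [this, add_comm]

/-- number of graphs in an `L¹` ball. -/
theorem ball_count {m n : ℕ} (hm : 0 < m) (hn : 0 < n) (H : SimpleGraph (Fin m)) (δ x : ℝ)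
    (hx0 : 0 < x) (hx1 : x < 1) (A : Finset (SimpleGraph (Fin n)))
    (hA : ∀ G ∈ A, L1d H G ≤ δ) :
    (A.card : ℝ) * x ^ (2 * δ * (n:ℝ)^2) ≤ (1 + x) ^ (n^2) := by
  classical
  rcases A.eq_empty_or_nonempty with rfl | ⟨G0, hG0⟩
  · simp; positivity
  · have hinj : Function.Injective (diffSet G0) := fun G G' h => diffSet_inj G0 G G' h
    have := small_sets x (2 * δ) hx0 hx1 (A.image (diffSet G0)) (by
      intro D hD
      obtain ⟨G, hG, rfl⟩ := Finset.mem_image.1 hD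
      rw [L1d_same hn]
      have h1 := L1d_triangle hm hn hn H G0 G
      have h2 := hA G hG
      have h3 := hA G0 hG0
      simp only [Fintype.card_prod, Fintype.card_fin]
      push_cast
      rw [← sq]
      gcongr
      linarith)
    rw [Finset.card_image_of_injective _ hinj] at this
    simp only [Fintype.card_prod, Fintype.card_fin] at this
    push_cast at this
    rw [← sq, ← sq] at this
    exact this

theorem comap_perm_inj {n : ℕ} (ρ : Equiv.Perm (Fin n)) :
    Function.Injective (fun G : SimpleGraph (Fin n) => G.comap ⇑ρ) := by
  intro G G' h
  ext u v
  have := congrArg (fun K : SimpleGraph (Fin n) => K.Adj (ρ.symm u) (ρ.symm v)) h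
  simpa using this

/-- number of graphs close to a finite family, up to relabelling -/
theorem bad_count (s : Finset (Σ n : ℕ, SimpleGraph (Fin n))) (hs : ∀ y ∈ s, 0 < y.1)
    {n : ℕ} (hn : 0 < n) (δ x : ℝ) (hx0 : 0 < x) (hx1 : x < 1) (A : Finset (SimpleGraph (Fin n)))
    (hA : ∀ G ∈ A, ∃ y ∈ s, ∃ (π : Equiv.Perm (Fin y.1)) (ρ : Equiv.Perm (Fin n)),
      L1d (y.2.comap ⇑π) (G.comap ⇑ρ) ≤ δ) :
    (A.card : ℝ) * x ^ (2 * δ * (n:ℝ)^2) ≤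
      (∑ y ∈ s, (y.1.factorial : ℝ)) * (n.factorial : ℝ) * (1 + x) ^ (n^2) := by
  classical
  let C : (y : Σ n : ℕ, SimpleGraph (Fin n)) → Equiv.Perm (Fin y.1) → Equiv.Perm (Fin n) →
    Finset (SimpleGraph (Fin n)) := fun y π ρ => A.filter fun G => L1d (y.2.comap ⇑π) (G.comap ⇑ρ) ≤ δ
  have hsub : A ⊆ s.biUnion fun y => Finset.univ.biUnion fun π => Finset.univ.biUnion fun ρ => C y π ρ := by
    intro G hG
    obtain ⟨y, hy, π, ρ, h⟩ := hA G hG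
    simp only [Finset.mem_biUnion, Finset.mem_univ, true_and]
    exact ⟨y, hy, π, ρ, Finset.mem_filter.2 ⟨hG, h⟩⟩
  have hC : ∀ y ∈ s, ∀ π ρ, ((C y π ρ).card : ℝ) * x ^ (2 * δ * (n:ℝ)^2) ≤ (1 + x) ^ (n^2) := by
    intro y hy π ρ
    have := ball_count (hs y hy) hn (y.2.comap ⇑π) δ x hx0 hx1
      ((C y π ρ).image (fun G : SimpleGraph (Fin n) => G.comap ⇑ρ)) (by
        intro G hG
        obtain ⟨G', hG', rfl⟩ := Finset.mem_image.1 hG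
        exact (Finset.mem_filter.1 hG').2)
    rwa [Finset.card_image_of_injective _ (comap_perm_inj ρ)] at this
  have hx : 0 ≤ x ^ (2 * δ * (n:ℝ)^2) := by positivity
  have hcard : (A.card : ℝ) ≤ ∑ y ∈ s, ∑ π : Equiv.Perm (Fin y.1), ∑ ρ : Equiv.Perm (Fin n), ((C y π ρ).card : ℝ) := by
    have h1 : A.card ≤ ∑ y ∈ s, ∑ π : Equiv.Perm (Fin y.1), ∑ ρ : Equiv.Perm (Fin n), (C y π ρ).card :=
      (Finset.card_le_card hsub).trans <| Finset.card_biUnion_le.trans <|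
        Finset.sum_le_sum fun y _ => Finset.card_biUnion_le.trans <|
          Finset.sum_le_sum fun π _ => Finset.card_biUnion_le
    exact_mod_cast h1
  calc (A.card : ℝ) * x ^ (2 * δ * (n:ℝ)^2)
      ≤ (∑ y ∈ s, ∑ π : Equiv.Perm (Fin y.1), ∑ ρ : Equiv.Perm (Fin n), ((C y π ρ).card : ℝ)) *
        x ^ (2 * δ * (n:ℝ)^2) := by gcongr
    _ = ∑ y ∈ s, ∑ π : Equiv.Perm (Fin y.1), ∑ ρ : Equiv.Perm (Fin n),
        ((C y π ρ).card : ℝ) * x ^ (2 * δ * (n:ℝ)^2) := by simp only [Finset.sum_mul]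
    _ ≤ ∑ y ∈ s, ∑ π : Equiv.Perm (Fin y.1), ∑ ρ : Equiv.Perm (Fin n), (1 + x) ^ (n^2) :=
        Finset.sum_le_sum fun y hy => Finset.sum_le_sum fun π _ => Finset.sum_le_sum fun ρ _ => hC y hy π ρ
    _ = _ := by
        simp only [Finset.sum_const, Finset.card_univ, Fintype.card_perm, Fintype.card_fin,
          nsmul_eq_mul, Finset.sum_mul]
        refine Finset.sum_congr rfl fun y _ => by ring

theorem fact_asymp (C ε : ℝ) (hε : 0 < ε) :
    ∀ᶠ n : ℕ in atTop, C * (n.factorial : ℝ) < (2:ℝ) ^ (ε * (n:ℝ)^2) := by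
  set a : ℝ := (2:ℝ) ^ ε with ha
  have ha1 : 1 < a := Real.one_lt_rpow (by norm_num) hε
  have h := tendsto_pow_const_div_const_pow_of_one_lt 1 ha1
  set C' := max C 1 with hC'
  have hC1 : 1 ≤ C' := le_max_right _ _
  have hev := h.eventually (gt_mem_nhds (show (0:ℝ) < 1 / C' by positivity))
  filter_upwards [hev, eventually_gt_atTop 0] with n hn hn0
  have hap : 0 < a ^ n := by positivity
  rw [pow_one, div_lt_div_iff₀ hap (by positivity), one_mul] at hn
  have e : (2:ℝ) ^ (ε * (n:ℝ)^2) = (a ^ n) ^ n := by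
    rw [ha, ← pow_mul, ← Real.rpow_natCast ((2:ℝ) ^ ε), ← Real.rpow_mul (by norm_num)]
    congr 1; push_cast; ring
  rw [e]
  calc C * (n.factorial : ℝ) ≤ C' * (n:ℝ)^n := by
        have : (n.factorial : ℝ) ≤ (n:ℝ)^n := by exact_mod_cast Nat.factorial_le_pow n
        have h2 : C ≤ C' := le_max_left _ _
        gcongr
    _ ≤ C' ^ n * (n:ℝ)^n := by
        gcongr
        exact le_self_pow₀ hC1 hn0.ne'
    _ = (n * C') ^ n := by rw [mul_pow, mul_comm]
    _ < (a ^ n) ^ n := pow_lt_pow_left₀ hn (by positivity) hn0.ne'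

/-- the far sequence. -/
theorem far_seq (Q : GraphClass) (ε : ℝ) (hε : 0 < ε)
    (hbig : ∀ N : ℕ, ∃ n ≥ N, (2 : ℝ) ^ (ε * (n : ℝ)^2) < (Nat.card ↥(Q n) : ℝ)) :
    ∃ δ : ℝ, 0 < δ ∧ ∃ y : ℕ → (Σ n : ℕ, SimpleGraph (Fin n)),
      (∀ k, 0 < (y k).1 ∧ (y k).2 ∈ Q (y k).1) ∧
      ∀ j k, j < k → (y j).1 < (y k).1 ∧
        ∀ (π : Equiv.Perm (Fin (y j).1)) (ρ : Equiv.Perm (Fin (y k).1)),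
          δ < L1d ((y j).2.comap ⇑π) ((y k).2.comap ⇑ρ) := by
  classical
  obtain ⟨x, hx0, hx1, hx2⟩ : ∃ x : ℝ, 0 < x ∧ x < 1 ∧ 1 + x ≤ (2:ℝ) ^ (ε/4) := by
    have : 1 < (2:ℝ) ^ (ε/4) := Real.one_lt_rpow (by norm_num) (by positivity)
    refine ⟨min ((2:ℝ) ^ (ε/4) - 1) (1/2), lt_min (by linarith) (by norm_num), ?_, ?_⟩
    · exact lt_of_le_of_lt (min_le_right _ _) (by norm_num)
    · linarith [min_le_left ((2:ℝ) ^ (ε/4) - 1) (1/2)]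
  have hlx : Real.logb 2 x < 0 := Real.logb_neg (by norm_num) hx0 hx1
  set δ : ℝ := (ε / 4) / (-(Real.logb 2 x)) / 2 with hδ
  have hδ0 : 0 < δ := by
    have : 0 < -(Real.logb 2 x) := by linarith
    positivity
  have hxδ : x ^ (2 * δ) = (2:ℝ) ^ (-(ε/4)) := by
    conv_lhs => rw [← Real.rpow_logb (b := 2) (by norm_num) (by norm_num) hx0]
    rw [← Real.rpow_mul (by norm_num)]
    congr 1
    rw [hδ]
    have : Real.logb 2 x ≠ 0 := hlx.ne
    field_simp
  refine ⟨δ, hδ0, ?_⟩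
  refine exists_seq_of_forall_finset_exists (α := Σ n : ℕ, SimpleGraph (Fin n))
    (fun y => 0 < y.1 ∧ y.2 ∈ Q y.1)
    (fun z y => z.1 < y.1 ∧ ∀ (π : Equiv.Perm (Fin z.1)) (ρ : Equiv.Perm (Fin y.1)),
          δ < L1d (z.2.comap ⇑π) (y.2.comap ⇑ρ)) ?_
  intro s hs
  obtain ⟨N1, hN1⟩ := eventually_atTop.1 (fact_asymp (∑ y ∈ s, (y.1.factorial : ℝ)) (ε/2) (by positivity))
  obtain ⟨n, hn, hcard⟩ := hbig (max N1 (s.sup (fun y => y.1) + 1))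
  have hnN1 : N1 ≤ n := le_trans (le_max_left _ _) hn
  have hns : s.sup (fun y => y.1) + 1 ≤ n := le_trans (le_max_right _ _) hn
  have hn0 : 0 < n := by omega
  by_contra hcon
  push Not at hcon
  have key := bad_count s (fun y hy => (hs y hy).1) hn0 δ x hx0 hx1 (Finset.univ.filter (fun G => G ∈ Q n)) (by
    intro G hG
    have hG := (Finset.mem_filter.1 hG).2
    obtain ⟨y, hy, hyc⟩ := hcon ⟨n, G⟩ ⟨hn0, hG⟩
    have : y.1 ≤ s.sup (fun y => y.1) := Finset.le_sup (f := fun y : (Σ n : ℕ, SimpleGraph (Fin n)) => y.1) hy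
    obtain ⟨π, ρ, h⟩ := hyc (by show y.1 < n; omega)
    exact ⟨y, hy, π, ρ, h⟩)
  have hc : (Finset.univ.filter (fun G => G ∈ Q n)).card = Nat.card ↥(Q n) := by
    rw [Nat.card_eq_fintype_card, Fintype.card_subtype]
  rw [hc, Real.rpow_mul hx0.le, hxδ, ← Real.rpow_mul (by norm_num)] at key
  have h1 := hN1 n hnN1
  have h2 : (1 + x) ^ (n^2) ≤ (2:ℝ) ^ (ε/4 * (n:ℝ)^2) := by
    rw [Real.rpow_mul (by norm_num)]
    calc (1 + x) ^ (n^2) ≤ ((2:ℝ) ^ (ε/4)) ^ (n^2) := by gcongr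
      _ = _ := by rw [← Real.rpow_natCast]; push_cast; rfl
  have h3 : (Nat.card ↥(Q n) : ℝ) * (2:ℝ) ^ (-(ε/4) * (n:ℝ)^2) <
      (2:ℝ) ^ (ε/2 * (n:ℝ)^2) * (2:ℝ) ^ (ε/4 * (n:ℝ)^2) := by
    refine lt_of_le_of_lt key ?_
    exact mul_lt_mul h1 h2 (by positivity) (by positivity)
  have h4 : (2:ℝ) ^ (ε * (n:ℝ)^2) * (2:ℝ) ^ (-(ε/4) * (n:ℝ)^2) <
      (2:ℝ) ^ (ε/2 * (n:ℝ)^2) * (2:ℝ) ^ (ε/4 * (n:ℝ)^2) :=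
    lt_of_le_of_lt (by gcongr) h3
  rw [← Real.rpow_add (by norm_num), ← Real.rpow_add (by norm_num)] at h4
  refine absurd h4 (not_lt.2 (le_of_eq ?_))
  congr 1
  ring


theorem deltaCut_le {n : ℕ} (hn : 0 < n) (H : SimpleGraph (Fin n)) (W : ℝ → ℝ → ℝ)
    (hW : IsGraphon W) (c : ℝ)
    (h : ∀ S T : Set ℝ, MeasurableSet S → MeasurableSet T →
      |∫ p in S ×ˢ T, adjR H (cell n hn p.1) (cell n hn p.2) ∂PI2 -
        ∫ p in S ×ˢ T, W p.1 p.2 ∂PI2| ≤ c) :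
    deltaCut (graphonOfGraph H) W ≤ c := by
  have hid : IsMPSelf id := ⟨MeasurePreserving.id _, Set.mapsTo_id _⟩
  have h1 : deltaCut (graphonOfGraph H) W ≤
      cutNorm (fun x y => graphonOfGraph H x y - W x y) := by
    refine csInf_le ⟨0, ?_⟩ ⟨id, id, hid, hid, rfl⟩
    rintro r ⟨σ, τ, -, -, rfl⟩
    refine Real.sSup_nonneg ?_
    rintro r ⟨S, T, -, -, -, -, rfl⟩
    exact abs_nonneg _
  refine h1.trans ?_
  have hWi : Integrable (fun p : ℝ × ℝ => W p.1 p.2) PI2 := int_bdd hW.2.1 1 fun p => by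
    rw [abs_of_nonneg (hW.2.2 p.1 p.2).1]; exact (hW.2.2 p.1 p.2).2
  have hHi : Integrable (fun p : ℝ × ℝ => adjR H (cell n hn p.1) (cell n hn p.2)) PI2 :=
    int_bdd (cellfun_meas hn _) 1 fun p => adjR_abs _ _ _
  refine csSup_le ⟨_, ∅, ∅, MeasurableSet.empty, MeasurableSet.empty, Set.empty_subset _,
    Set.empty_subset _, rfl⟩ ?_
  rintro r ⟨S, T, hS, hT, hS1, hT1, rfl⟩
  have e : (volume : Measure (ℝ × ℝ)).restrict (S ×ˢ T) = PI2.restrict (S ×ˢ T) := by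
    rw [PI2_eq, Measure.restrict_restrict (hS.prod hT),
      Set.inter_eq_left.2 (Set.prod_mono hS1 hT1)]
  rw [e]
  have e2 : ∫ p in S ×ˢ T, (graphonOfGraph H p.1 p.2 - W p.1 p.2) ∂PI2 =
      ∫ p in S ×ˢ T, (adjR H (cell n hn p.1) (cell n hn p.2) - W p.1 p.2) ∂PI2 := by
    refine integral_congr_ae (ae_restrict_of_ae ?_)
    filter_upwards [graphonOfGraph_ae hn H] with p hp
    rw [hp]
  rw [e2, integral_sub hHi.restrict hWi.restrict]
  exact h S T hS hT

theorem deltaCut_nonneg (W W' : ℝ → ℝ → ℝ) : 0 ≤ deltaCut W W' := by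
  refine Real.sInf_nonneg ?_
  rintro r ⟨σ, τ, -, -, rfl⟩
  refine Real.sSup_nonneg ?_
  rintro r ⟨S, T, -, -, -, -, rfl⟩
  exact abs_nonneg _

/-- A map to a finite type is constant on a set of the ultrafilter. -/
theorem ultra_const {α : Type*} [Finite α] (U : Ultrafilter ℕ) (c : ℕ → α) :
    ∃ a, {k | c k = a} ∈ U := by
  obtain ⟨a, -, ha⟩ := (Ultrafilter.finite_biUnion_mem_iff (f := U) (is := Set.univ)
    (s := fun a => {k | c k = a}) Set.finite_univ).1 (by
      refine Filter.mem_of_superset Filter.univ_mem fun k _ => ?_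
      simp)
  exact ⟨a, ha⟩

theorem main_aux (Q : GraphClass) (hQ : IsGraphClass Q)
    (hrf : ∀ W ∈ limitSet Q, IsRandomFree W) (δ : ℝ) (hδ : 0 < δ)
    (y : ℕ → (Σ n : ℕ, SimpleGraph (Fin n)))
    (hy : ∀ k, 0 < (y k).1 ∧ (y k).2 ∈ Q (y k).1)
    (hfar : ∀ j k, j < k → (y j).1 < (y k).1 ∧
        ∀ (π : Equiv.Perm (Fin (y j).1)) (ρ : Equiv.Perm (Fin (y k).1)),
          δ < L1d ((y j).2.comap ⇑π) ((y k).2.comap ⇑ρ)) : False := by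
  choose π x s hx hR using fun k => sorted_exists (hy k).1 (y k).2
  have hn : ∀ k, 0 < (y k).1 := fun k => (hy k).1
  let H : ∀ k, SimpleGraph (Fin (y k).1) := fun k => (y k).2.comap ⇑(π k)
  let f : ℕ → ℝ × ℝ → ℝ := fun k p => adjR (H k) (cell _ (hn k) p.1) (cell _ (hn k) p.2)
  have hm : ∀ k, Measurable (f k) := fun k => cellfun_meas (hn k) _
  have h0 : ∀ k p, 0 ≤ f k p := fun k p => by
    show 0 ≤ adjR _ _ _
    unfold adjR; split_ifs <;> simp
  have h1 : ∀ k p, f k p ≤ 1 := fun k p => by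
    show adjR _ _ _ ≤ 1
    unfold adjR; split_ifs <;> simp
  let U : Ultrafilter ℕ := Filter.hyperfilter ℕ
  have hUge : ∀ N : ℕ, {k | N ≤ k} ∈ U := fun N => by
    have : (U : Filter ℕ) ≤ atTop := Nat.hyperfilter_le_atTop
    exact this (eventually_ge_atTop N)
  obtain ⟨W, hW, hlim⟩ := weak_limit_graphon U f hm h0 h1 (by
    intro k p
    show adjR _ _ _ = adjR _ _ _
    simp only [adjR, Prod.fst_swap, Prod.snd_swap]
    have hc := (H k).adj_comm (cell _ (hn k) p.2) (cell _ (hn k) p.1)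
    by_cases h : (H k).Adj (cell _ (hn k) p.2) (cell _ (hn k) p.1)
    · rw [if_pos h, if_pos (hc.1 h)]
    · rw [if_neg h, if_neg (fun h' => h (hc.2 h'))])
  have hA : ∀ l, ∃ A ∈ U, ∀ k ∈ A, ∀ S T : Set ℝ, MeasurableSet S → MeasurableSet T →
      |∫ p in S ×ˢ T, f k p ∂PI2 - ∫ p in S ×ˢ T, W p.1 p.2 ∂PI2| ≤ 3 * eL l := by
    intro l
    obtain ⟨N, hN⟩ := code_close l
    let c : ℕ → (Fin (jL l) → SignType) × (Fin (N+1) → Fin (2 ^ mL l)) := fun k =>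
      (fun i => s k l i, fun j => ⟨keyF l (hn k) (x k) (((j:ℕ):ℝ) / N), key_lt _ _⟩)
    obtain ⟨a, ha⟩ := ultra_const U c
    refine ⟨_, ha, fun k hk S T hS hT => ?_⟩
    have hlim2 : Tendsto (fun k' => |∫ p in S ×ˢ T, f k p ∂PI2 - ∫ p in S ×ˢ T, f k' p ∂PI2|) U
        (nhds |∫ p in S ×ˢ T, f k p ∂PI2 - ∫ p in S ×ˢ T, W p.1 p.2 ∂PI2|) :=
      (tendsto_const_nhds.sub (hlim _ (hS.prod hT))).abs
    refine le_of_tendsto hlim2 ?_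
    filter_upwards [ha] with k' hk'
    have hc : c k = c k' := Eq.trans hk (Eq.symm hk')
    refine hN _ _ (hn k) (hn k') (H k) (H k') (x k) (x k') (s k) (s k') (hx k) (hx k')
      (hR k l) (hR k' l) ?_ ?_ S T
    · intro i hi
      exact congrFun (congrArg Prod.fst hc) ⟨i, hi⟩
    · intro j hj
      exact congrArg Fin.val (congrFun (congrArg Prod.snd hc) ⟨j, by omega⟩)
  choose A hAU hA using hA
  have hsel : ∀ l, ∃ k, l ≤ k ∧ k ∈ A l := fun l =>
    U.nonempty_of_mem (Filter.inter_mem (hUge l) (hAU l))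
  choose K hKl hKA using hsel
  have hWl : W ∈ limitSet Q := by
    refine ⟨hW, fun l => (y (K l)).1, fun l => H (K l), fun l => hQ _ _ _ (hy _).2, ?_, ?_⟩
    · have hsm : StrictMono (fun k => (y k).1) := fun j k hjk => (hfar j k hjk).1
      exact hsm.tendsto_atTop.comp (tendsto_atTop_mono hKl tendsto_id)
    · have hz : Tendsto (fun l => 3 * eL l) atTop (nhds 0) := by
        have := (tendsto_one_div_add_atTop_nhds_zero_nat (𝕜 := ℝ)).const_mul 3
        simpa [eL] using this
      refine squeeze_zero (fun l => deltaCut_nonneg _ _) (fun l => ?_) hz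
      exact deltaCut_le (hn (K l)) (H (K l)) W hW _ (hA l (K l) (hKA l))
  have hWrf := hrf W hWl
  unfold IsRandomFree at hWrf
  rw [← PI2_eq] at hWrf
  have hL := L1_limit U f hm h0 h1 (fun p => W p.1 p.2) hW.2.1 (fun p => hW.2.2 _ _) hlim hWrf
  have hev := hL.eventually (gt_mem_nhds (show (0:ℝ) < δ / 2 by positivity))
  obtain ⟨j, hj⟩ := U.nonempty_of_mem hev
  obtain ⟨k, hkj, hk⟩ := U.nonempty_of_mem (Filter.inter_mem (hUge (j+1)) hev)
  simp only [Set.mem_ofPred_eq] at hj hk hkj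
  have hd := (hfar j k (by omega)).2 (π j) (π k)
  have fi : ∀ k, Integrable (f k) PI2 := fun k => int_bdd (hm k) 1 fun p => by
    rw [abs_of_nonneg (h0 k p)]; exact h1 k p
  have hWi : Integrable (fun p : ℝ × ℝ => W p.1 p.2) PI2 := int_bdd hW.2.1 1 fun p => by
    rw [abs_of_nonneg (hW.2.2 p.1 p.2).1]; exact (hW.2.2 p.1 p.2).2
  have e : L1d (H j) (H k) = ∫ p, |f j p - f k p| ∂PI2 := by
    refine integral_congr_ae ?_
    filter_upwards [graphonOfGraph_ae (hn j) (H j), graphonOfGraph_ae (hn k) (H k)] with p h1 h2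
    rw [h1, h2]
  have hle : ∫ p, |f j p - f k p| ∂PI2 ≤
      ∫ p, (|f j p - W p.1 p.2| + |f k p - W p.1 p.2|) ∂PI2 := by
    refine integral_mono ((fi j).sub (fi k)).abs (((fi j).sub hWi).abs.add ((fi k).sub hWi).abs)
      fun p => ?_
    have := abs_sub_le (f j p) (W p.1 p.2) (f k p)
    rw [abs_sub_comm (W p.1 p.2)] at this
    exact this
  have hadd : ∫ p, (|f j p - W p.1 p.2| + |f k p - W p.1 p.2|) ∂PI2 =
      ∫ p, |f j p - W p.1 p.2| ∂PI2 + ∫ p, |f k p - W p.1 p.2| ∂PI2 :=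
    integral_add ((fi j).sub hWi).abs ((fi k).sub hWi).abs
  have hd' : δ < L1d (H j) (H k) := hd
  linarith

/-- Corollary 1.3: a random-free graph class contains `2^{o(n²)}`
graphs on `n` vertices. -/
theorem stmt10 (Q : GraphClass) (hQ : IsGraphClass Q)
    (hrf : ∀ W ∈ limitSet Q, IsRandomFree W) :
    ∀ ε : ℝ, 0 < ε → ∃ N : ℕ, ∀ n ≥ N,
      (Nat.card ↥(Q n) : ℝ) ≤ (2 : ℝ) ^ (ε * (n : ℝ)^2) := by
  intro ε hε
  by_contra hcon
  push Not at hcon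
  obtain ⟨δ, hδ, y, hy, hfar⟩ := far_seq Q ε hε hcon
  exact main_aux Q hQ hrf δ hδ y hy hfar

end
end
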